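/- There exist W₀ and a constant K such that for every W ≥ W₀ and every finite union Λ of cubes of side W in ℤ³ containing 0, for all E ∈ 𝓘 the averaged density of states satisfies |ρ̄_Λ(E)| ≤ K e^{K|Λ|/W³}, with K independent of W and Λ. -/

import Mathlib

open scoped BigOperators Topology
open Matrix MeasureTheory Filter

noncomputable section

/-- The discrete torus of side lengths `L i`; when each `L i` is a positive multiple of `W`,
this is a union of cubes of side `W` (containing `0`) with periodic boundary conditions. -/
abbrev Torus (L : Fin 3 → ℕ) := (i : Fin 3) → ZMod (L i)

/-- Unit lattice vector in direction `i`. -/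
def unitVec (L : Fin 3 → ℕ) (i : Fin 3) : Torus L := fun j => if j = i then 1 else 0

/-- Discrete Laplacian with periodic boundary conditions. -/
def lap (L : Fin 3 → ℕ) : Matrix (Torus L) (Torus L) ℝ :=
  Matrix.of fun x y =>
    (∑ i : Fin 3, ((if y = x + unitVec L i then (1 : ℝ) else 0) +
        (if y = x - unitVec L i then (1 : ℝ) else 0))) - (if y = x then 6 else 0)

/-- Distance to `0` in `ℤ/n`, via the minimal representative. -/
def zdist {n : ℕ} (x : ZMod n) : ℕ := min x.val (n - x.val)

/-- Euclidean distance on the torus. -/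
def tdist (L : Fin 3 → ℕ) (x y : Torus L) : ℝ :=
  Real.sqrt (∑ i : Fin 3, ((zdist (x i - y i) : ℝ)) ^ 2)

/-- The band covariance profile `J = (-W²Δ + 1)⁻¹`. -/
def Jmat (L : Fin 3 → ℕ) [∀ i, NeZero (L i)] (W : ℕ) : Matrix (Torus L) (Torus L) ℝ :=
  (((W : ℝ) ^ 2) • (-lap L) + 1)⁻¹

def mr2 (E : ℝ) : ℝ := 2 * (1 - E ^ 2 / 4)
def mi2 (E : ℝ) : ℝ := E * Real.sqrt (1 - E ^ 2 / 4)
def mr (E : ℝ) : ℝ := Real.sqrt (mr2 E)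

/-- `ℰ = E/2 - i√(1 - E²/4)`. -/
def calE (E : ℝ) : ℂ := ((E / 2 : ℝ) : ℂ) - (Real.sqrt (1 - E ^ 2 / 4) : ℝ) * Complex.I
/-- `ℰ̄ = E - ℰ = E/2 + i√(1 - E²/4)`, the complex conjugate of `ℰ`. -/
def calEbar (E : ℝ) : ℂ := ((E / 2 : ℝ) : ℂ) + (Real.sqrt (1 - E ^ 2 / 4) : ℝ) * Complex.I

/-- `C = (-W²Δ + m_r²)⁻¹`. -/
def Cmat (L : Fin 3 → ℕ) [∀ i, NeZero (L i)] (W : ℕ) (E : ℝ) : Matrix (Torus L) (Torus L) ℝ :=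
  (((W : ℝ) ^ 2) • (-lap L) + mr2 E • 1)⁻¹

/-- `B = (C⁻¹ + i m_i²·Id)⁻¹`. -/
def Bmat (L : Fin 3 → ℕ) [∀ i, NeZero (L i)] (W : ℕ) (E : ℝ) : Matrix (Torus L) (Torus L) ℂ :=
  (((Cmat L W E)⁻¹).map Complex.ofReal + (mi2 E * Complex.I) • 1)⁻¹

/-- The energy window `𝓘 = {E : η ≤ |E| ≤ 1.8}`. -/
def specI (η : ℝ) : Set ℝ := {E : ℝ | η ≤ |E| ∧ |E| ≤ 1.8}

/-- Wigner semicircle density `(1/π)√(1 - E²/4)`. -/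
def rhoSC (E : ℝ) : ℝ := Real.sqrt (1 - E ^ 2 / 4) / Real.pi

/-- Real quadratic form `aᵀ M a`. -/
def qf (L : Fin 3 → ℕ) [∀ i, NeZero (L i)] (M : Matrix (Torus L) (Torus L) ℝ)
    (a : Torus L → ℝ) : ℝ := a ⬝ᵥ M.mulVec a

/-- Sample space: one standard Gaussian for each ordered pair of sites. -/
abbrev Config (L : Fin 3 → ℕ) := (Torus L × Torus L) → ℝ

/-- Product of standard Gaussians. -/
def gaussMeas (L : Fin 3 → ℕ) [∀ i, NeZero (L i)] : Measure (Config L) :=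
  Measure.pi fun _ => ProbabilityTheory.gaussianReal 0 1

/-- An (arbitrary) linear order on the sites, used to build the Hermitian matrix. -/
def siteIdx (L : Fin 3 → ℕ) [∀ i, NeZero (L i)] (x : Torus L) : ℕ :=
  ((Fintype.equivFin (Torus L)) x).val

/-- The random band matrix: Hermitian, with centered jointly Gaussian entries of covariance
`E[H_ij H_kl] = δ_jk δ_il J_ij` (off-diagonal entries complex, diagonal entries real). -/
def Hmat (L : Fin 3 → ℕ) [∀ i, NeZero (L i)] (W : ℕ) (ω : Config L) :
    Matrix (Torus L) (Torus L) ℂ :=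
  Matrix.of fun i j =>
    if i = j then ((Real.sqrt (Jmat L W i i) * ω (i, i) : ℝ) : ℂ)
    else if siteIdx L i < siteIdx L j then
      ((Real.sqrt (Jmat L W i j / 2) : ℝ) : ℂ) * ((ω (i, j) : ℂ) + Complex.I * (ω (j, i) : ℂ))
    else
      ((Real.sqrt (Jmat L W i j / 2) : ℝ) : ℂ) * ((ω (j, i) : ℂ) - Complex.I * (ω (i, j) : ℂ))

/-- Retarded Green's function `G⁺ = (E + iε - H)⁻¹`. -/
def Green (L : Fin 3 → ℕ) [∀ i, NeZero (L i)] (W : ℕ) (E ε : ℝ) (ω : Config L) :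
    Matrix (Torus L) (Torus L) ℂ :=
  (((E : ℂ) + (ε : ℂ) * Complex.I) • (1 : Matrix (Torus L) (Torus L) ℂ) - Hmat L W ω)⁻¹

/-- Averaged Green's function entry `E[(G⁺)_{xy}]`. -/
def avgGreen (L : Fin 3 → ℕ) [∀ i, NeZero (L i)] (W : ℕ) (E ε : ℝ) (x y : Torus L) : ℂ :=
  ∫ ω, Green L W E ε ω x y ∂(gaussMeas L)

/-- Regularized averaged density of states `-(1/π) Im E[(G⁺)₀₀]`. -/
def dos (L : Fin 3 → ℕ) [∀ i, NeZero (L i)] (W : ℕ) (E ε : ℝ) : ℝ :=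
  -(1 / Real.pi) * (avgGreen L W E ε 0 0).im

open ProbabilityTheory

section Gaussian

variable {V U X : Type*}
  [NormedAddCommGroup V] [InnerProductSpace ℝ V] [FiniteDimensional ℝ V] [MeasurableSpace V]
  [BorelSpace V]
  [NormedAddCommGroup U] [InnerProductSpace ℝ U] [FiniteDimensional ℝ U] [MeasurableSpace U]
  [BorelSpace U]
  [NormedAddCommGroup X] [InnerProductSpace ℝ X] [FiniteDimensional ℝ X] [MeasurableSpace X]
  [BorelSpace X]

/-- A linear map whose adjoint is isometric preserves standard Gaussian measures. -/
lemma stdGaussian_map_of_adjoint (f : V →L[ℝ] U)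
    (hf : ∀ t, ‖ContinuousLinearMap.adjoint f t‖ = ‖t‖) :
    MeasurePreserving f (stdGaussian V) (stdGaussian U) := by
  refine ⟨by fun_prop, ?_⟩
  apply Measure.ext_of_charFun
  ext t
  rw [charFun_stdGaussian, ← hf, ← charFun_stdGaussian, charFun_apply, charFun_apply,
    integral_map (by fun_prop) (by fun_prop)]
  simp [ContinuousLinearMap.adjoint_inner_right]

lemma stdGaussian_prod_map_of_adjoint (f : V →L[ℝ] X) (g : U →L[ℝ] X)
    (hfg : ∀ t, ‖ContinuousLinearMap.adjoint f t‖ ^ 2 +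
      ‖ContinuousLinearMap.adjoint g t‖ ^ 2 = ‖t‖ ^ 2) :
    MeasurePreserving (fun p : V × U => f p.1 + g p.2)
      ((stdGaussian V).prod (stdGaussian U)) (stdGaussian X) := by
  refine ⟨by fun_prop, ?_⟩
  apply Measure.ext_of_charFun
  ext t
  have h1 : charFun (stdGaussian X) t =
      charFun (stdGaussian V) (ContinuousLinearMap.adjoint f t) *
        charFun (stdGaussian U) (ContinuousLinearMap.adjoint g t) := by
    simp only [charFun_stdGaussian]
    rw [← Complex.exp_add]
    congr 1
    have := hfg t
    have h2 : (‖t‖ : ℂ) ^ 2 = ((‖t‖ ^ 2 : ℝ) : ℂ) := by push_cast; rfl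
    rw [h2, ← this]
    push_cast
    ring
  rw [h1, charFun_apply, charFun_apply, charFun_apply,
    integral_map (by fun_prop) (by fun_prop), ← integral_prod_mul]
  congr 1
  ext p
  rw [← Complex.exp_add]
  congr 1
  simp [ContinuousLinearMap.adjoint_inner_right, inner_add_left]
  ring

lemma stdGaussian_real : stdGaussian ℝ = gaussianReal 0 1 := by
  apply Measure.ext_of_charFun
  ext t
  rw [charFun_stdGaussian, charFun_gaussianReal]
  congr 1
  simp only [Real.norm_eq_abs, Complex.ofReal_zero, mul_zero, zero_mul, zero_sub, NNReal.coe_one,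
    Complex.ofReal_one, one_mul]
  rw [← Complex.ofReal_pow, sq_abs]
  push_cast
  ring

lemma stdGaussian_prod_map_toLp :
    MeasurePreserving (MeasurableEquiv.toLp 2 (V × V)) ((stdGaussian V).prod (stdGaussian V))
      (stdGaussian (WithLp 2 (V × V))) := by
  refine ⟨by fun_prop, ?_⟩
  apply Measure.ext_of_charFun
  ext t
  rw [MeasurableEquiv.coe_toLp, charFun_prod, charFun_stdGaussian, charFun_stdGaussian,
    charFun_stdGaussian, ← Complex.exp_add]
  congr 1
  have h2 : (‖t‖ : ℂ) ^ 2 = ((‖t‖ ^ 2 : ℝ) : ℂ) := by push_cast; rfl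
  rw [h2, WithLp.prod_norm_sq_eq_of_L2]
  push_cast
  change -(‖t.fst‖ : ℂ) ^ 2 / 2 + -(‖t.snd‖ : ℂ) ^ 2 / 2 = _
  ring

lemma stdGaussian_prod_map_isometry (f : V × V →ₗ[ℝ] V × V)
    (hf : ∀ p, ‖(f p).1‖ ^ 2 + ‖(f p).2‖ ^ 2 = ‖p.1‖ ^ 2 + ‖p.2‖ ^ 2) :
    MeasurePreserving f ((stdGaussian V).prod (stdGaussian V))
      ((stdGaussian V).prod (stdGaussian V)) := by
  let e := WithLp.linearEquiv 2 ℝ (V × V)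
  let g : WithLp 2 (V × V) →ₗᵢ[ℝ] WithLp 2 (V × V) :=
    { toLinearMap := e.symm.toLinearMap ∘ₗ f ∘ₗ e.toLinearMap
      norm_map' := by
        intro p
        have h := hf (e p)
        rw [← sq_eq_sq₀ (norm_nonneg _) (norm_nonneg _), WithLp.prod_norm_sq_eq_of_L2,
          WithLp.prod_norm_sq_eq_of_L2]
        exact h }
  let g' := g.toLinearIsometryEquiv rfl
  have h1 : MeasurePreserving g' (stdGaussian (WithLp 2 (V × V)))
      (stdGaussian (WithLp 2 (V × V))) := ⟨by fun_prop, stdGaussian_map g'⟩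
  have h2 := stdGaussian_prod_map_toLp (V := V)
  have h3 := (h2.symm _).comp (h1.comp h2)
  exact h3

/-- Rotating the components in a subspace of two independent standard Gaussian vectors. -/
lemma stdGaussian_prod_map_rotation (K : Submodule ℝ V) {c s : ℝ} (hcs : c ^ 2 + s ^ 2 = 1) :
    MeasurePreserving
      (fun p : V × V => (p.1 + (c - 1) • K.starProjection p.1 + s • K.starProjection p.2,
        p.2 + (c - 1) • K.starProjection p.2 - s • K.starProjection p.1))
      ((stdGaussian V).prod (stdGaussian V)) ((stdGaussian V).prod (stdGaussian V)) := by
  let P : V →ₗ[ℝ] V := K.starProjection.toLinearMap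
  let f : V × V →ₗ[ℝ] V × V :=
    LinearMap.prod
      (LinearMap.fst ℝ V V + (c - 1) • P ∘ₗ LinearMap.fst ℝ V V + s • P ∘ₗ LinearMap.snd ℝ V V)
      (LinearMap.snd ℝ V V + (c - 1) • P ∘ₗ LinearMap.snd ℝ V V - s • P ∘ₗ LinearMap.fst ℝ V V)
  refine stdGaussian_prod_map_isometry f ?_
  rintro ⟨x, y⟩
  change ‖x + (c - 1) • K.starProjection x + s • K.starProjection y‖ ^ 2 +
    ‖y + (c - 1) • K.starProjection y - s • K.starProjection x‖ ^ 2 = ‖x‖ ^ 2 + ‖y‖ ^ 2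
  have key : ∀ a b : V, inner ℝ a (K.starProjection b) =
      inner ℝ (K.starProjection a) (K.starProjection b) := by
    intro a b
    have h := K.starProjection_isSymmetric a (K.starProjection b)
    simp only [ContinuousLinearMap.coe_coe] at h
    rw [h]
    congr 1
    exact ((Submodule.starProjection_eq_self_iff).2 (Submodule.starProjection_apply_mem _ _)).symm
  simp only [← real_inner_self_eq_norm_sq]
  simp only [inner_add_left, inner_add_right, inner_sub_left, inner_sub_right,
    real_inner_smul_left, real_inner_smul_right]
  rw [real_inner_comm x (K.starProjection x), real_inner_comm y (K.starProjection x),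
    real_inner_comm x (K.starProjection y), real_inner_comm y (K.starProjection y),
    real_inner_comm (K.starProjection x) (K.starProjection y)]
  rw [key x x, key x y, key y x, key y y,
    real_inner_comm (K.starProjection x) (K.starProjection y)]
  linear_combination (inner ℝ (K.starProjection x) (K.starProjection x) +
    inner ℝ (K.starProjection y) (K.starProjection y)) * hcs

/-- Resampling the component of a standard Gaussian vector along a unit vector. -/
lemma stdGaussian_prod_map_resample {e : V} (he : ‖e‖ = 1) :
    MeasurePreserving (fun p : V × ℝ => p.1 + (p.2 - inner ℝ e p.1) • e)
      ((stdGaussian V).prod (gaussianReal 0 1)) (stdGaussian V) := by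
  rw [← stdGaussian_real]
  let T : V →L[ℝ] V := ContinuousLinearMap.id ℝ V - (innerSL ℝ e).smulRight e
  let S : ℝ →L[ℝ] V := (ContinuousLinearMap.id ℝ ℝ).smulRight e
  have hT : ContinuousLinearMap.adjoint T = T := by
    rw [eq_comm, ContinuousLinearMap.eq_adjoint_iff]
    intro x y
    simp [T, inner_sub_left, inner_sub_right, real_inner_smul_left, real_inner_smul_right]
    rw [real_inner_comm x e]
    ring
  have hS : ContinuousLinearMap.adjoint S = innerSL ℝ e := by
    rw [eq_comm, ContinuousLinearMap.eq_adjoint_iff]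
    intro x y
    simp [S, real_inner_smul_right, real_inner_comm]
  have h := stdGaussian_prod_map_of_adjoint T S (by
    intro t
    rw [hT, hS]
    have h1 : T t = t - inner ℝ e t • e := by simp [T]
    rw [h1, innerSL_apply_apply, norm_sub_sq_real, real_inner_smul_right, norm_smul, he,
      real_inner_comm, Real.norm_eq_abs, mul_one, sq_abs]
    ring)
  convert h using 2 with p
  simp [T, S, sub_smul]
  abel

/-- The first absolute moment of the standard real Gaussian. -/
def gaussAbs : ℝ := ∫ x, |x| ∂(gaussianReal 0 1)

lemma integrable_abs_gaussianReal : Integrable (fun x : ℝ => |x|) (gaussianReal 0 1) := by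
  have : Integrable (id : ℝ → ℝ) (gaussianReal 0 1) := IsGaussian.integrable_id
  exact this.abs

lemma gaussAbs_pos : 0 < gaussAbs := by
  unfold gaussAbs
  rw [integral_pos_iff_support_of_nonneg (fun x => abs_nonneg x) integrable_abs_gaussianReal]
  have h : Function.support (fun x : ℝ => |x|) = {0}ᶜ := by
    ext x; simp
  have := nullSingletonClass_gaussianReal (μ := 0) (v := 1) (by norm_num)
  rw [h, prob_compl_eq_one_sub (measurableSet_singleton 0)]
  simp

lemma lintegral_abs_gaussianReal :
    ∫⁻ x, ENNReal.ofReal |x| ∂(gaussianReal 0 1) = ENNReal.ofReal gaussAbs := by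
  rw [gaussAbs, ofReal_integral_eq_lintegral_ofReal integrable_abs_gaussianReal
    (ae_of_all _ fun x => abs_nonneg x)]

lemma lintegral_abs_inner_stdGaussian (c : V) :
    ∫⁻ w, ENNReal.ofReal |inner ℝ c w| ∂(stdGaussian V) = ENNReal.ofReal (gaussAbs * ‖c‖) := by
  by_cases hc : c = 0
  · simp [hc]
  have hc' : 0 < ‖c‖ := norm_pos_iff.2 hc
  let e : V := ‖c‖⁻¹ • c
  have he : ‖e‖ = 1 := by simp [e, norm_smul, hc'.ne']
  have hS : ContinuousLinearMap.adjoint (innerSL ℝ e) =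
      (ContinuousLinearMap.id ℝ ℝ).smulRight e := by
    rw [eq_comm, ContinuousLinearMap.eq_adjoint_iff]
    intro x y
    simp [real_inner_smul_left]
    ring
  have h := stdGaussian_map_of_adjoint (innerSL ℝ e) (by
    intro t
    rw [hS]
    simp [norm_smul, he])
  rw [stdGaussian_real] at h
  have h2 := h.lintegral_comp (f := fun x : ℝ => ENNReal.ofReal |x|) (by fun_prop)
  rw [lintegral_abs_gaussianReal] at h2
  rw [mul_comm, ENNReal.ofReal_mul hc'.le, ← h2, ← lintegral_const_mul _ (by fun_prop)]
  congr 1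
  ext w
  rw [← ENNReal.ofReal_mul hc'.le]
  congr 1
  simp only [innerSL_apply_apply, e, real_inner_smul_left, abs_mul, abs_inv, abs_norm]
  field_simp

end Gaussian

section PolynomialWinding

lemma lintegral_abs_im_one_div_sub (r : ℂ) :
    ∫⁻ x : ℝ, ENNReal.ofReal |(1 / ((x : ℂ) - r)).im| ≤ ENNReal.ofReal Real.pi := by
  by_cases hb : r.im = 0
  · have : ∀ x : ℝ, (1 / ((x : ℂ) - r)).im = 0 := by
      intro x
      simp [hb]
    simp only [this, abs_zero, ENNReal.ofReal_zero, lintegral_zero, zero_le]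
  have hb' : 0 < |r.im| := abs_pos.2 hb
  let g : ℝ → ℝ := fun y => (1 + y ^ 2)⁻¹
  have h1 : ∀ x : ℝ, |(1 / ((x : ℂ) - r)).im| = |r.im⁻¹| * g (r.im⁻¹ * (x - r.re)) := by
    intro x
    have h2 : (1 / ((x : ℂ) - r)).im = r.im / ((x - r.re) ^ 2 + r.im ^ 2) := by
      rw [one_div, Complex.inv_im, Complex.normSq_apply]
      simp only [Complex.sub_im, Complex.ofReal_im, Complex.sub_re, Complex.ofReal_re]
      ring_nf
    have h3 : (0 : ℝ) < (x - r.re) ^ 2 + r.im ^ 2 := by positivity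
    rw [h2, abs_div, abs_of_pos h3, abs_inv]
    simp only [g]
    have h4 : 1 + (r.im⁻¹ * (x - r.re)) ^ 2 = ((x - r.re) ^ 2 + r.im ^ 2) / |r.im| ^ 2 := by
      rw [sq_abs]; field_simp; ring
    rw [h4]
    field_simp
  have hg : Integrable g := integrable_inv_one_add_sq
  have hi : Integrable fun x : ℝ => |r.im⁻¹| * g (r.im⁻¹ * (x - r.re)) :=
    ((hg.comp_mul_left' (inv_ne_zero hb)).comp_sub_right r.re).const_mul _
  simp only [h1]
  rw [← ofReal_integral_eq_lintegral_ofReal hi (ae_of_all _ fun x => by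
    simp only [g, Pi.zero_apply]; positivity)]
  apply ENNReal.ofReal_le_ofReal
  rw [integral_const_mul, integral_sub_right_eq_self (fun x => g (r.im⁻¹ * x)),
    Measure.integral_comp_mul_left, integral_univ_inv_one_add_sq]
  rw [inv_inv, abs_inv, smul_eq_mul, ← mul_assoc, inv_mul_cancel₀ hb'.ne', one_mul]

lemma lintegral_abs_im_sum_one_div_sub (s : Multiset ℂ) :
    ∫⁻ x : ℝ, ENNReal.ofReal |((s.map fun r => 1 / ((x : ℂ) - r)).sum).im| ≤
      s.card * ENNReal.ofReal Real.pi := by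
  induction s using Multiset.induction_on with
  | empty => simp
  | cons r s ih =>
    calc _ ≤ ∫⁻ x : ℝ, (ENNReal.ofReal |(1 / ((x : ℂ) - r)).im| +
          ENNReal.ofReal |((s.map fun r => 1 / ((x : ℂ) - r)).sum).im|) := by
          apply lintegral_mono
          intro x
          beta_reduce
          rw [← ENNReal.ofReal_add (abs_nonneg _) (abs_nonneg _)]
          apply ENNReal.ofReal_le_ofReal
          rw [Multiset.map_cons, Multiset.sum_cons, Complex.add_im]
          exact abs_add_le _ _
      _ = (∫⁻ x : ℝ, ENNReal.ofReal |(1 / ((x : ℂ) - r)).im|) +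
          ∫⁻ x : ℝ, ENNReal.ofReal |((s.map fun r => 1 / ((x : ℂ) - r)).sum).im| := by
          apply lintegral_add_left
          have : Measurable fun x : ℝ => (1 / ((x : ℂ) - r)).im :=
            Complex.measurable_im.comp (by fun_prop)
          fun_prop
      _ ≤ _ := by
          rw [Multiset.card_cons, Nat.cast_add, Nat.cast_one, add_mul, one_mul, add_comm]
          exact add_le_add ih (lintegral_abs_im_one_div_sub r)

/-- The total variation of the argument of a polynomial along the real line. -/
lemma lintegral_abs_im_logDeriv_polynomial (q : Polynomial ℂ) {n : ℕ} (hn : q.natDegree ≤ n)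
    (hq : ∀ x : ℝ, q.eval (x : ℂ) ≠ 0) :
    ∫⁻ x : ℝ, ENNReal.ofReal |(q.derivative.eval (x : ℂ) / q.eval (x : ℂ)).im| ≤
      n * ENNReal.ofReal Real.pi := by
  have h : ∀ x : ℝ, q.derivative.eval (x : ℂ) / q.eval (x : ℂ) =
      (q.roots.map fun r => 1 / ((x : ℂ) - r)).sum := fun x =>
    (IsAlgClosed.splits q).eval_derivative_div_eval_of_ne_zero (hq x)
  simp only [h]
  refine (lintegral_abs_im_sum_one_div_sub _).trans ?_
  gcongr
  exact_mod_cast (Polynomial.card_roots' q).trans hn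

end PolynomialWinding

section RankTwo

variable {ι : Type*} [Fintype ι] [DecidableEq ι]

lemma det_sub_vecMulVec_sub_vecMulVec {A R : Matrix ι ι ℂ} (hR : A * R = 1) (p q r t : ι → ℂ) :
    (A - vecMulVec p q - vecMulVec r t).det = A.det *
      ((1 - q ⬝ᵥ R *ᵥ p) * (1 - t ⬝ᵥ R *ᵥ r) - (q ⬝ᵥ R *ᵥ r) * (t ⬝ᵥ R *ᵥ p)) := by
  let U : Matrix ι (Fin 2) ℂ := Matrix.of fun i k => if k = 0 then p i else r i
  let V : Matrix (Fin 2) ι ℂ := Matrix.of fun k i => if k = 0 then q i else t i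
  have h1 : A - vecMulVec p q - vecMulVec r t = A * (1 - (R * U) * V) := by
    have : U * V = vecMulVec p q + vecMulVec r t := by
      ext i j
      simp [U, V, Matrix.mul_apply, vecMulVec_apply]
    rw [mul_sub, mul_one, ← Matrix.mul_assoc, ← Matrix.mul_assoc, hR, Matrix.one_mul, this]
    abel
  have h2 : ∀ k l, (V * (R * U)) k l =
      (if k = 0 then q else t) ⬝ᵥ R *ᵥ (if l = 0 then p else r) := by
    intro k l
    fin_cases k <;> fin_cases l <;>
    simp [U, V, Matrix.mul_apply, dotProduct, mulVec]
  rw [h1, det_mul, det_one_sub_mul_comm, det_fin_two]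
  simp only [Matrix.sub_apply, Matrix.one_apply, h2]
  simp

open scoped ComplexOrder in
lemma det_sub_ne_zero_of_isHermitian {M : Matrix ι ι ℂ} (hM : M.IsHermitian) {z : ℂ}
    (hz : z.im ≠ 0) : (z • (1 : Matrix ι ι ℂ) - M).det ≠ 0 := by
  intro h
  obtain ⟨v, hv, hv0⟩ := exists_mulVec_eq_zero_iff.2 h
  rw [sub_mulVec, smul_mulVec, one_mulVec, sub_eq_zero] at hv0
  have h1 : star v ⬝ᵥ M *ᵥ v = z * (star v ⬝ᵥ v) := by
    rw [← hv0, dotProduct_smul, smul_eq_mul]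
  have h2 : star (star v ⬝ᵥ M *ᵥ v) = star v ⬝ᵥ M *ᵥ v := by
    rw [← star_dotProduct_star, star_star, star_mulVec, hM.eq, dotProduct_mulVec,
      dotProduct_comm]
  have h3 : star (star v ⬝ᵥ v) = star v ⬝ᵥ v := by
    rw [← star_dotProduct_star, star_star, dotProduct_comm]
  rw [h1, star_mul', h3] at h2
  have h4 : star v ⬝ᵥ v ≠ 0 := by
    rwa [Ne, dotProduct_star_self_eq_zero]
  have h5 := mul_right_cancel₀ h4 h2
  exact hz (Complex.conj_eq_iff_im.1 h5)

end RankTwo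

lemma isHermitian_vecMulVec_add {ι : Type*} (u b : ι → ℂ) :
    (vecMulVec u (star b) + vecMulVec b (star u)).IsHermitian := by
  ext i j
  simp [vecMulVec_apply]
  ring

section Rotation

/-- The rational parametrization of the unit circle, cosine part. -/
def rotC (t : ℝ) : ℝ := (1 - t ^ 2) / (1 + t ^ 2)

/-- The rational parametrization of the unit circle, sine part. -/
def rotS (t : ℝ) : ℝ := 2 * t / (1 + t ^ 2)

lemma rotC_sq_add_rotS_sq (t : ℝ) : rotC t ^ 2 + rotS t ^ 2 = 1 := by
  unfold rotC rotS
  have : 1 + t ^ 2 ≠ 0 := by positivity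
  field_simp
  ring

lemma hasDerivAt_rotC (t : ℝ) : HasDerivAt rotC (-(2 / (1 + t ^ 2) * rotS t)) t := by
  have h0 : 1 + t ^ 2 ≠ 0 := by positivity
  have h1 : HasDerivAt (fun t : ℝ => 1 - t ^ 2) (-(2 * t)) t := by
    simpa using (hasDerivAt_pow 2 t).const_sub 1
  have h2 : HasDerivAt (fun t : ℝ => 1 + t ^ 2) (2 * t) t := by
    simpa using (hasDerivAt_pow 2 t).const_add 1
  refine (h1.div h2 h0).congr_deriv ?_
  unfold rotS
  field_simp
  ring

lemma hasDerivAt_rotS (t : ℝ) : HasDerivAt rotS (2 / (1 + t ^ 2) * rotC t) t := by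
  have h0 : 1 + t ^ 2 ≠ 0 := by positivity
  have h1 : HasDerivAt (fun t : ℝ => 2 * t) 2 t := by
    simpa using (hasDerivAt_id t).const_mul 2
  have h2 : HasDerivAt (fun t : ℝ => 1 + t ^ 2) (2 * t) t := by
    simpa using (hasDerivAt_pow 2 t).const_add 1
  refine (h1.div h2 h0).congr_deriv ?_
  unfold rotC
  field_simp
  ring

variable {ι : Type*} [Fintype ι]

lemma star_comb_dotProduct_mulVec (M : Matrix ι ι ℂ) (a b v : ι → ℂ) (x y : ℝ) :
    star (x • a + y • b) ⬝ᵥ M *ᵥ v =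
      x * (star a ⬝ᵥ M *ᵥ v) + y * (star b ⬝ᵥ M *ᵥ v) := by
  simp [star_add, star_smul, add_dotProduct, smul_dotProduct]

lemma dotProduct_mulVec_comb (M : Matrix ι ι ℂ) (a b v : ι → ℂ) (x y : ℝ) :
    v ⬝ᵥ M *ᵥ (x • a + y • b) =
      x * (v ⬝ᵥ M *ᵥ a) + y * (v ⬝ᵥ M *ᵥ b) := by
  simp [mulVec_add, mulVec_smul, dotProduct_add, dotProduct_smul]

lemma trace_mul_vecMulVec_add (G : Matrix ι ι ℂ) (u b : ι → ℂ) :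
    (G * (vecMulVec u (star b) + vecMulVec b (star u))).trace =
      star b ⬝ᵥ G *ᵥ u + star u ⬝ᵥ G *ᵥ b := by
  rw [Matrix.mul_add, mul_vecMulVec, mul_vecMulVec, trace_add, trace_vecMulVec, trace_vecMulVec,
    dotProduct_comm, dotProduct_comm (G *ᵥ b)]

lemma exists_rotation_polynomial (R : Matrix ι ι ℂ) (u a b : ι → ℂ) :
    ∃ q : Polynomial ℂ, q.natDegree ≤ 4 ∧ ∀ t : ℝ, q.eval (t : ℂ) = (1 + (t : ℂ) ^ 2) ^ 2 *
      ((1 - star (rotC t • a + rotS t • b) ⬝ᵥ R *ᵥ u) *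
        (1 - star u ⬝ᵥ R *ᵥ (rotC t • a + rotS t • b)) -
        (star (rotC t • a + rotS t • b) ⬝ᵥ R *ᵥ (rotC t • a + rotS t • b)) *
          (star u ⬝ᵥ R *ᵥ u)) := by
  open Polynomial in
  refine ⟨((1 + X ^ 2) - ((1 - X ^ 2) * C (star a ⬝ᵥ R *ᵥ u) + 2 * X * C (star b ⬝ᵥ R *ᵥ u))) *
    ((1 + X ^ 2) - ((1 - X ^ 2) * C (star u ⬝ᵥ R *ᵥ a) + 2 * X * C (star u ⬝ᵥ R *ᵥ b))) -
    ((1 - X ^ 2) * ((1 - X ^ 2) * C (star a ⬝ᵥ R *ᵥ a) + 2 * X * C (star a ⬝ᵥ R *ᵥ b)) +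
      2 * X * ((1 - X ^ 2) * C (star b ⬝ᵥ R *ᵥ a) + 2 * X * C (star b ⬝ᵥ R *ᵥ b))) *
      C (star u ⬝ᵥ R *ᵥ u), ?_, ?_⟩
  · compute_degree
  · intro t
    have h : (1 : ℂ) + (t : ℂ) ^ 2 ≠ 0 := by
      have : (1 : ℝ) + t ^ 2 ≠ 0 := by positivity
      exact_mod_cast this
    simp only [star_comb_dotProduct_mulVec, dotProduct_mulVec_comb, rotC, rotS]
    simp only [eval_add, eval_sub, eval_mul, eval_one, eval_pow, eval_X, eval_C, eval_ofNat]
    push_cast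
    field_simp
    ring

variable [DecidableEq ι]

lemma det_sub_vecMulVec_add {A R : Matrix ι ι ℂ} (hR : A * R = 1) (u b : ι → ℂ) :
    (A - (vecMulVec u (star b) + vecMulVec b (star u))).det = A.det *
      ((1 - star b ⬝ᵥ R *ᵥ u) * (1 - star u ⬝ᵥ R *ᵥ b) -
        (star b ⬝ᵥ R *ᵥ b) * (star u ⬝ᵥ R *ᵥ u)) := by
  rw [← det_sub_vecMulVec_sub_vecMulVec hR, sub_add_eq_sub_sub]

lemma lintegral_rotation_le {Z : Matrix ι ι ℂ} (hZ : Z.IsHermitian) (u a b : ι → ℂ) {z : ℂ}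
    (hz : z.im ≠ 0) :
    ∫⁻ t in Set.Icc (0 : ℝ) 1, ENNReal.ofReal |(((z • (1 : Matrix ι ι ℂ) -
      (Z + (vecMulVec u (star (rotC t • a + rotS t • b)) +
        vecMulVec (rotC t • a + rotS t • b) (star u))))⁻¹ *
      (vecMulVec u (star (rotC t • b - rotS t • a)) +
        vecMulVec (rotC t • b - rotS t • a) (star u))).trace).im| ≤
      4 * ENNReal.ofReal Real.pi := by
  set A : Matrix ι ι ℂ := z • 1 - Z with hA
  have hAu : IsUnit A.det := (det_sub_ne_zero_of_isHermitian hZ hz).isUnit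
  obtain ⟨q, hq4, hq⟩ := exists_rotation_polynomial A⁻¹ u a b
  set w : ℝ → ι → ℂ := fun t => rotC t • a + rotS t • b with hw
  set At : ℝ → Matrix ι ι ℂ := fun t =>
    z • 1 - (Z + (vecMulVec u (star (w t)) + vecMulVec (w t) (star u))) with hAt
  have hAA : ∀ t, At t = A - (vecMulVec u (star (w t)) + vecMulVec (w t) (star u)) := by
    intro t
    simp only [hAt, hA, sub_add_eq_sub_sub]
  have hAtu : ∀ t, (At t).det ≠ 0 := fun t =>
    det_sub_ne_zero_of_isHermitian (hZ.add (isHermitian_vecMulVec_add u (w t))) hz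
  have hqdet : ∀ t : ℝ, q.eval (t : ℂ) = (1 + (t : ℂ) ^ 2) ^ 2 * ((At t).det / A.det) := by
    intro t
    rw [hq, hAA, det_sub_vecMulVec_add (mul_nonsing_inv A hAu), mul_div_cancel_left₀ _ hAu.ne_zero]
  have hone : ∀ t : ℝ, (1 : ℂ) + (t : ℂ) ^ 2 ≠ 0 := by
    intro t
    have : (1 : ℝ) + t ^ 2 ≠ 0 := by positivity
    exact_mod_cast this
  have hq0 : ∀ t : ℝ, q.eval (t : ℂ) ≠ 0 := fun t => by
    rw [hqdet]
    exact mul_ne_zero (pow_ne_zero _ (hone t)) (div_ne_zero (hAtu t) hAu.ne_zero)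
  have hkey : ∀ t : ℝ, |(((At t)⁻¹ * (vecMulVec u (star (rotC t • b - rotS t • a)) +
        vecMulVec (rotC t • b - rotS t • a) (star u))).trace).im| =
      (1 + t ^ 2) / 2 * |(q.derivative.eval (t : ℂ) / q.eval (t : ℂ)).im| := by
    intro t
    set G := (At t)⁻¹ with hG
    have hdet : ∀ t' : ℝ, (At t').det = (At t).det *
        ((1 - (((rotC t' - rotC t : ℝ) : ℂ) * (star a ⬝ᵥ G *ᵥ u) +
            ((rotS t' - rotS t : ℝ) : ℂ) * (star b ⬝ᵥ G *ᵥ u))) *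
          (1 - (((rotC t' - rotC t : ℝ) : ℂ) * (star u ⬝ᵥ G *ᵥ a) +
            ((rotS t' - rotS t : ℝ) : ℂ) * (star u ⬝ᵥ G *ᵥ b))) -
          (((rotC t' - rotC t : ℝ) : ℂ) * (((rotC t' - rotC t : ℝ) : ℂ) * (star a ⬝ᵥ G *ᵥ a) +
            ((rotS t' - rotS t : ℝ) : ℂ) * (star a ⬝ᵥ G *ᵥ b)) +
          ((rotS t' - rotS t : ℝ) : ℂ) * (((rotC t' - rotC t : ℝ) : ℂ) * (star b ⬝ᵥ G *ᵥ a) +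
            ((rotS t' - rotS t : ℝ) : ℂ) * (star b ⬝ᵥ G *ᵥ b))) * (star u ⬝ᵥ G *ᵥ u)) := by
      intro t'
      have h1 : At t' = At t - (vecMulVec u (star ((rotC t' - rotC t) • a +
          (rotS t' - rotS t) • b)) + vecMulVec ((rotC t' - rotC t) • a +
          (rotS t' - rotS t) • b) (star u)) := by
        ext i j
        simp [hAt, hw, vecMulVec_apply, sub_smul]
        ring
      rw [h1, det_sub_vecMulVec_add (mul_nonsing_inv _ (hAtu t).isUnit)]
      simp only [star_comb_dotProduct_mulVec, dotProduct_mulVec_comb, hG]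
      ring
    have hc : HasDerivAt (fun t' : ℝ => ((rotC t' - rotC t : ℝ) : ℂ))
        ((-(2 / (1 + t ^ 2) * rotS t) : ℝ) : ℂ) t :=
      ((hasDerivAt_rotC t).sub_const _).ofReal_comp
    have hs : HasDerivAt (fun t' : ℝ => ((rotS t' - rotS t : ℝ) : ℂ))
        ((2 / (1 + t ^ 2) * rotC t : ℝ) : ℂ) t :=
      ((hasDerivAt_rotS t).sub_const _).ofReal_comp
    have hd := (((((hc.mul_const (star a ⬝ᵥ G *ᵥ u)).add
      (hs.mul_const (star b ⬝ᵥ G *ᵥ u))).const_sub 1).mul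
      (((hc.mul_const (star u ⬝ᵥ G *ᵥ a)).add
      (hs.mul_const (star u ⬝ᵥ G *ᵥ b))).const_sub 1)).sub
      (((hc.mul ((hc.mul_const (star a ⬝ᵥ G *ᵥ a)).add (hs.mul_const (star a ⬝ᵥ G *ᵥ b)))).add
      (hs.mul ((hc.mul_const (star b ⬝ᵥ G *ᵥ a)).add
        (hs.mul_const (star b ⬝ᵥ G *ᵥ b))))).mul_const (star u ⬝ᵥ G *ᵥ u))).const_mul (At t).det
    have h1 : HasDerivAt (fun t' : ℝ => (1 + (t' : ℂ) ^ 2) ^ 2) (4 * (t : ℂ) * (1 + (t : ℂ) ^ 2)) t := by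
      have h0 : HasDerivAt (fun t' : ℂ => (1 + t' ^ 2) ^ 2) (4 * (t : ℂ) * (1 + (t : ℂ) ^ 2))
          (t : ℂ) := by
        refine (((hasDerivAt_pow 2 (t : ℂ)).const_add 1).pow 2).congr_deriv ?_
        simp
        ring
      exact h0.comp_ofReal
    have hfin := h1.mul (hd.div_const A.det)
    have hq' := (q.hasDerivAt (t : ℂ)).comp_ofReal
    have hfin' : HasDerivAt (fun t' : ℝ => q.eval (t' : ℂ)) _ t :=
      hfin.congr_of_eventuallyEq (Eventually.of_forall fun t' =>
        (hqdet t').trans (congrArg (fun D => (1 + (t' : ℂ) ^ 2) ^ 2 * (D / A.det)) (hdet t')))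
    have huniq := hq'.unique hfin'
    have hval : q.derivative.eval (t : ℂ) / q.eval (t : ℂ) =
        ((4 * t / (1 + t ^ 2) : ℝ) : ℂ) - ((2 / (1 + t ^ 2) : ℝ) : ℂ) *
          (star (rotC t • b - rotS t • a) ⬝ᵥ G *ᵥ u +
            star u ⬝ᵥ G *ᵥ (rotC t • b - rotS t • a)) := by
      have e1 : rotC t • b - rotS t • a = (-rotS t) • a + rotC t • b := by
        rw [neg_smul]; abel
      rw [e1, star_comb_dotProduct_mulVec, dotProduct_mulVec_comb, huniq, hqdet]
      have := hone t
      have h2 := hAtu t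
      have h3 := hAu.ne_zero
      simp only [Pi.add_apply, Pi.mul_apply, Pi.sub_apply, sub_self, Complex.ofReal_zero, zero_mul, add_zero, mul_zero, sub_zero, mul_one,
        one_mul]
      push_cast
      field_simp
      ring
    rw [trace_mul_vecMulVec_add, hval, Complex.sub_im, Complex.ofReal_im, Complex.im_ofReal_mul,
      zero_sub, abs_neg, abs_mul, abs_of_pos (by positivity : (0 : ℝ) < 2 / (1 + t ^ 2)),
      ← mul_assoc]
    have : (1 + t ^ 2) / 2 * (2 / (1 + t ^ 2)) = 1 := by
      have : (1 : ℝ) + t ^ 2 ≠ 0 := by positivity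
      field_simp
    rw [this, one_mul]
  calc _ ≤ ∫⁻ t in Set.Icc (0 : ℝ) 1,
        ENNReal.ofReal |(q.derivative.eval (t : ℂ) / q.eval (t : ℂ)).im| := by
        apply setLIntegral_mono' measurableSet_Icc
        intro t ht
        rw [hkey t]
        apply ENNReal.ofReal_le_ofReal
        apply mul_le_of_le_one_left (abs_nonneg _)
        have : t ^ 2 ≤ 1 := pow_le_one₀ ht.1 ht.2
        linarith
    _ ≤ ∫⁻ t : ℝ, ENNReal.ofReal |(q.derivative.eval (t : ℂ) / q.eval (t : ℂ)).im| :=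
        setLIntegral_le_lintegral _ _
    _ ≤ _ := by simpa using lintegral_abs_im_logDeriv_polynomial q hq4 hq0

end Rotation

section Wegner

variable {ι : Type*}

/-- The real linear map `b ↦ u b* + b u*`. -/
def symRankTwo (u : ι → ℂ) : (ι → ℂ) →ₗ[ℝ] Matrix ι ι ℂ where
  toFun b := vecMulVec u (star b) + vecMulVec b (star u)
  map_add' a b := by
    ext i j
    simp [vecMulVec_apply]
    ring
  map_smul' r b := by
    ext i j
    simp [vecMulVec_apply]

lemma symRankTwo_apply (u b : ι → ℂ) :
    symRankTwo u b = vecMulVec u (star b) + vecMulVec b (star u) := rfl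

variable [Fintype ι] [DecidableEq ι]

lemma continuous_resolvent {α : Type*} [TopologicalSpace α] {M : α → Matrix ι ι ℂ} {z : α → ℂ}
    (hM : Continuous M) (hherm : ∀ a, (M a).IsHermitian) (hzc : Continuous z)
    (hz : ∀ a, (z a).im ≠ 0) :
    Continuous fun a => (z a • (1 : Matrix ι ι ℂ) - M a)⁻¹ := by
  have h : Continuous fun a => z a • (1 : Matrix ι ι ℂ) - M a :=
    (hzc.smul continuous_const).sub hM
  have hdet : ∀ a, (z a • (1 : Matrix ι ι ℂ) - M a).det ≠ 0 := fun a =>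
    det_sub_ne_zero_of_isHermitian (hherm a) (hz a)
  simp only [Matrix.inv_def, Ring.inverse_eq_inv']
  exact (h.matrix_det.inv₀ hdet).smul h.matrix_adjugate

variable {V : Type*}
  [NormedAddCommGroup V] [InnerProductSpace ℝ V] [FiniteDimensional ℝ V] [MeasurableSpace V]
  [BorelSpace V]

/-- The coordinates whose image is of the form `u b* + b u*`. -/
def symRankTwoComap (L : V →ₗ[ℝ] Matrix ι ι ℂ) (u : ι → ℂ) : Submodule ℝ V :=
  (LinearMap.range (symRankTwo u)).comap L

lemma lintegral_trace_resolvent_le {L : V →ₗ[ℝ] Matrix ι ι ℂ} (hL : ∀ w, (L w).IsHermitian)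
    (u : ι → ℂ) {z : ℂ} (hz : z.im ≠ 0) :
    ∫⁻ p : V × V, ENNReal.ofReal |(((z • (1 : Matrix ι ι ℂ) - L p.1)⁻¹ *
      L ((symRankTwoComap L u).starProjection p.2)).trace).im|
      ∂((stdGaussian V).prod (stdGaussian V)) ≤ 4 * ENNReal.ofReal Real.pi := by
  set P := (symRankTwoComap L u).starProjection with hP
  have hLc : Continuous L := L.continuous_of_finiteDimensional
  have hcont : Continuous fun p : V × V => |(((z • (1 : Matrix ι ι ℂ) - L p.1)⁻¹ *
      L (P p.2)).trace).im| := by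
    have h1 : Continuous fun p : V × V => (z • (1 : Matrix ι ι ℂ) - L p.1)⁻¹ :=
      continuous_resolvent (hLc.comp continuous_fst) (fun p => hL _) continuous_const
        (fun _ => hz)
    have h2 : Continuous fun p : V × V => L (P p.2) :=
      hLc.comp (P.continuous.comp continuous_snd)
    exact (Complex.continuous_im.comp (h1.matrix_mul h2).matrix_trace).abs
  set Φ : V × V → ENNReal := fun p => ENNReal.ofReal |(((z • (1 : Matrix ι ι ℂ) - L p.1)⁻¹ *
      L (P p.2)).trace).im| with hΦ
  have hΦc : Continuous Φ := ENNReal.continuous_ofReal.comp hcont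
  let rot : ℝ → V × V → V × V := fun t p =>
    (p.1 + (rotC t - 1) • P p.1 + rotS t • P p.2,
      p.2 + (rotC t - 1) • P p.2 - rotS t • P p.1)
  have hrotC : Continuous rotC := by
    rw [continuous_iff_continuousAt]
    exact fun t => (hasDerivAt_rotC t).continuousAt
  have hrotS : Continuous rotS := by
    rw [continuous_iff_continuousAt]
    exact fun t => (hasDerivAt_rotS t).continuousAt
  have hrot : Continuous fun q : ℝ × (V × V) => rot q.1 q.2 := by
    have h1 : Continuous fun q : ℝ × (V × V) => rotC q.1 := hrotC.comp continuous_fst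
    have h2 : Continuous fun q : ℝ × (V × V) => rotS q.1 := hrotS.comp continuous_fst
    simp only [rot]
    fun_prop
  have hinv : ∀ t, ∫⁻ p, Φ p ∂((stdGaussian V).prod (stdGaussian V)) =
      ∫⁻ p, Φ (rot t p) ∂((stdGaussian V).prod (stdGaussian V)) := fun t =>
    ((stdGaussian_prod_map_rotation (symRankTwoComap L u)
      (rotC_sq_add_rotS_sq t)).lintegral_comp hΦc.measurable).symm
  have hpt : ∀ p : V × V, ∫⁻ t in Set.Icc (0 : ℝ) 1, Φ (rot t p) ≤
      4 * ENNReal.ofReal Real.pi := by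
    rintro ⟨w, w'⟩
    have hmem : ∀ v, ∃ b, symRankTwo u b = L (P v) := by
      intro v
      have : P v ∈ symRankTwoComap L u := Submodule.starProjection_apply_mem _ _
      simpa [symRankTwoComap] using this
    obtain ⟨a, ha⟩ := hmem w
    obtain ⟨b, hb⟩ := hmem w'
    have hPP : ∀ v, P (P v) = P v := fun v =>
      Submodule.starProjection_eq_self_iff.2 (Submodule.starProjection_apply_mem _ _)
    refine le_of_eq_of_le ?_ (lintegral_rotation_le (hL (w - P w)) u a b hz)
    congr 1
    ext t
    simp only [hΦ, rot]
    have e1 : L (w + (rotC t - 1) • P w + rotS t • P w') = L (w - P w) +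
        (vecMulVec u (star (rotC t • a + rotS t • b)) +
        vecMulVec (rotC t • a + rotS t • b) (star u)) := by
      rw [← symRankTwo_apply]
      simp only [map_add, map_sub, map_smul, ha, hb, sub_smul, one_smul]
      abel
    have e2 : L (P (w' + (rotC t - 1) • P w' - rotS t • P w)) =
        vecMulVec u (star (rotC t • b - rotS t • a)) +
        vecMulVec (rotC t • b - rotS t • a) (star u) := by
      rw [← symRankTwo_apply]
      simp only [map_add, map_sub, map_smul, ha, hb, sub_smul, one_smul, hPP]
      abel
    rw [e1, e2]
  calc ∫⁻ p, Φ p ∂((stdGaussian V).prod (stdGaussian V))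
      = ∫⁻ _ in Set.Icc (0 : ℝ) 1, ∫⁻ p, Φ p ∂((stdGaussian V).prod (stdGaussian V)) := by
        simp
    _ = ∫⁻ t in Set.Icc (0 : ℝ) 1, ∫⁻ p, Φ (rot t p) ∂((stdGaussian V).prod (stdGaussian V)) :=
        lintegral_congr fun t => hinv t
    _ = ∫⁻ p, (∫⁻ t in Set.Icc (0 : ℝ) 1, Φ (rot t p)) ∂((stdGaussian V).prod (stdGaussian V)) := by
        apply lintegral_lintegral_swap
        exact (hΦc.comp hrot).measurable.aemeasurable
    _ ≤ ∫⁻ _, 4 * ENNReal.ofReal Real.pi ∂((stdGaussian V).prod (stdGaussian V)) :=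
        lintegral_mono hpt
    _ = _ := by simp

end Wegner

section WegnerLower

variable {ι : Type*} [Fintype ι]

lemma sum_norm_sq_symRankTwo_le (u b : ι → ℂ) :
    ∑ i, ∑ j, ‖symRankTwo u b i j‖ ^ 2 ≤ 4 * (∑ i, ‖u i‖ ^ 2) * ∑ i, ‖b i‖ ^ 2 := by
  have h : ∀ i j, ‖symRankTwo u b i j‖ ^ 2 ≤
      2 * (‖u i‖ ^ 2 * ‖b j‖ ^ 2) + 2 * (‖b i‖ ^ 2 * ‖u j‖ ^ 2) := by
    intro i j
    have h1 : ‖symRankTwo u b i j‖ ≤ ‖u i‖ * ‖b j‖ + ‖b i‖ * ‖u j‖ := by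
      rw [symRankTwo_apply, Matrix.add_apply, vecMulVec_apply, vecMulVec_apply]
      refine (norm_add_le _ _).trans ?_
      simp
    calc ‖symRankTwo u b i j‖ ^ 2 ≤ (‖u i‖ * ‖b j‖ + ‖b i‖ * ‖u j‖) ^ 2 := by gcongr
      _ ≤ _ := by nlinarith [sq_nonneg (‖u i‖ * ‖b j‖ - ‖b i‖ * ‖u j‖)]
  calc ∑ i, ∑ j, ‖symRankTwo u b i j‖ ^ 2
      ≤ ∑ i, ∑ j, (2 * (‖u i‖ ^ 2 * ‖b j‖ ^ 2) + 2 * (‖b i‖ ^ 2 * ‖u j‖ ^ 2)) := by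
        gcongr with i _ j _
        exact h i j
    _ = _ := by
        simp only [Finset.sum_add_distrib, ← Finset.mul_sum, ← Finset.sum_mul]
        ring

variable [DecidableEq ι]

/-- The negative imaginary part `-(G - G*) / (2 i)` of the resolvent `G = (z - M)⁻¹`. -/
def negImResolvent (z : ℂ) (M : Matrix ι ι ℂ) : Matrix ι ι ℂ :=
  (Complex.I / 2) • ((z • (1 : Matrix ι ι ℂ) - M)⁻¹ - ((z • (1 : Matrix ι ι ℂ) - M)⁻¹)ᴴ)

lemma im_trace_resolvent_symRankTwo (z : ℂ) (M : Matrix ι ι ℂ) (u b : ι → ℂ) :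
    (((z • (1 : Matrix ι ι ℂ) - M)⁻¹ * symRankTwo u b).trace).im =
      -2 * (star b ⬝ᵥ negImResolvent z M *ᵥ u).re := by
  set G := (z • (1 : Matrix ι ι ℂ) - M)⁻¹ with hG
  have h1 : star u ⬝ᵥ G *ᵥ b = star (star b ⬝ᵥ Gᴴ *ᵥ u) := by
    rw [← star_dotProduct_star, star_star, star_mulVec, conjTranspose_conjTranspose,
      dotProduct_mulVec, dotProduct_comm]
  have h2 : star b ⬝ᵥ negImResolvent z M *ᵥ u =
      (Complex.I / 2) * (star b ⬝ᵥ G *ᵥ u - star b ⬝ᵥ Gᴴ *ᵥ u) := by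
    rw [negImResolvent, ← hG, smul_mulVec, dotProduct_smul, sub_mulVec, dotProduct_sub,
      smul_eq_mul]
  rw [symRankTwo_apply, trace_mul_vecMulVec_add, h1, h2]
  simp
  ring

variable {V : Type*} [NormedAddCommGroup V] [InnerProductSpace ℝ V] [FiniteDimensional ℝ V]

lemma sqrt_mul_sqrt_sum_le_of_inner_eq {L : V →ₗ[ℝ] Matrix ι ι ℂ}
    (hsurj : ∀ M : Matrix ι ι ℂ, M.IsHermitian → ∃ w, L w = M) {B : Finset ι} {s : ℝ}
    (hs : ∀ w, (∀ i j, L w i j ≠ 0 → i ∈ B ∧ j ∈ B) → s * ‖w‖ ^ 2 ≤ ∑ i, ∑ j, ‖L w i j‖ ^ 2)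
    (hs0 : 0 < s) {u : ι → ℂ} (hu : ∀ i ∉ B, u i = 0) (z : ℂ) (M : Matrix ι ι ℂ) {c : V}
    (hc : ∀ w, inner ℝ c w = (((z • (1 : Matrix ι ι ℂ) - M)⁻¹ *
      L ((symRankTwoComap L u).starProjection w)).trace).im) :
    √s * √(∑ i ∈ B, ‖(negImResolvent z M *ᵥ u) i‖ ^ 2) ≤ ‖c‖ * √(∑ i, ‖u i‖ ^ 2) := by
  set S := ∑ i ∈ B, ‖(negImResolvent z M *ᵥ u) i‖ ^ 2 with hS
  set U := ∑ i, ‖u i‖ ^ 2 with hU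
  have hS0 : 0 ≤ S := by positivity
  have hU0 : 0 ≤ U := by positivity
  let b : ι → ℂ := fun i => if i ∈ B then (negImResolvent z M *ᵥ u) i else 0
  have hb : ∑ i, ‖b i‖ ^ 2 = S := by
    have h : ∀ i, ‖b i‖ ^ 2 = if i ∈ B then ‖(negImResolvent z M *ᵥ u) i‖ ^ 2 else 0 := by
      intro i
      by_cases hi : i ∈ B <;> simp [b, hi]
    simp only [h, Finset.sum_ite_mem, Finset.univ_inter, hS]
  obtain ⟨d, hd⟩ := hsurj (symRankTwo u b) (isHermitian_vecMulVec_add u b)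
  have hdP : (symRankTwoComap L u).starProjection d = d := by
    rw [Submodule.starProjection_eq_self_iff]
    exact ⟨b, hd.symm⟩
  have h1 : inner ℝ c d = -2 * S := by
    rw [hc, hdP, hd, im_trace_resolvent_symRankTwo, ← hb]
    congr 1
    rw [dotProduct, Complex.re_sum]
    refine Finset.sum_congr rfl fun i _ => ?_
    by_cases hi : i ∈ B
    · simp only [Pi.star_apply, b, if_pos hi, ← Complex.normSq_eq_norm_sq]
      rw [RCLike.star_def, ← Complex.normSq_eq_conj_mul_self, Complex.ofReal_re]
    · simp [b, hi]
  have h2 : s * ‖d‖ ^ 2 ≤ 4 * U * S := by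
    refine (hs d ?_).trans ?_
    · intro i j hij
      rw [hd, symRankTwo_apply, Matrix.add_apply, vecMulVec_apply, vecMulVec_apply] at hij
      constructor
      · by_contra hi
        exact hij (by simp [hu i hi, b, hi])
      · by_contra hj
        exact hij (by simp [hu j hj, b, hj])
    · rw [hd, ← hb]
      exact sum_norm_sq_symRankTwo_le u b
  have h3 : 2 * S ≤ ‖c‖ * ‖d‖ := by
    have := abs_real_inner_le_norm c d
    rw [h1, abs_mul, abs_of_nonneg hS0] at this
    simpa using this
  have h4 : √s * ‖d‖ ≤ 2 * √U * √S := by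
    rw [← Real.sqrt_sq (norm_nonneg d), ← Real.sqrt_mul hs0.le]
    refine (Real.sqrt_le_sqrt h2).trans ?_
    rw [Real.sqrt_mul (by positivity), Real.sqrt_mul (by norm_num)]
    have : √(4 : ℝ) = 2 := by
      rw [show (4 : ℝ) = 2 ^ 2 by norm_num]; exact Real.sqrt_sq (by norm_num)
    rw [this]
  rcases hS0.eq_or_lt with h0 | h0
  · rw [← h0]; simp; positivity
  · have h5 : 0 < √S := Real.sqrt_pos.2 h0
    have h6 : √S * √S = S := Real.mul_self_sqrt hS0
    have h7 : √s * (2 * S) ≤ ‖c‖ * (2 * √U * √S) :=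
      calc √s * (2 * S) ≤ √s * (‖c‖ * ‖d‖) := by gcongr
        _ = ‖c‖ * (√s * ‖d‖) := by ring
        _ ≤ _ := by gcongr
    have h8 : (√s * √S) * (2 * √S) ≤ (‖c‖ * √U) * (2 * √S) := by
      rw [show (√s * √S) * (2 * √S) = √s * (2 * (√S * √S)) by ring, h6]
      exact h7.trans_eq (by ring)
    exact le_of_mul_le_mul_right h8 (by positivity)

variable [MeasurableSpace V] [BorelSpace V]

lemma lintegral_sqrt_sum_negImResolvent_mulVec_le {L : V →ₗ[ℝ] Matrix ι ι ℂ}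
    (hL : ∀ w, (L w).IsHermitian)
    (hsurj : ∀ M : Matrix ι ι ℂ, M.IsHermitian → ∃ w, L w = M) {B : Finset ι} {s : ℝ}
    (hs : ∀ w, (∀ i j, L w i j ≠ 0 → i ∈ B ∧ j ∈ B) → s * ‖w‖ ^ 2 ≤ ∑ i, ∑ j, ‖L w i j‖ ^ 2)
    (hs0 : 0 < s) {u : ι → ℂ} (hu : ∀ i ∉ B, u i = 0) {z : ℂ} (hz : z.im ≠ 0) :
    ENNReal.ofReal (gaussAbs * √s) * ∫⁻ w, ENNReal.ofReal
        √(∑ i ∈ B, ‖(negImResolvent z (L w) *ᵥ u) i‖ ^ 2) ∂(stdGaussian V) ≤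
      ENNReal.ofReal (4 * Real.pi * √(∑ i, ‖u i‖ ^ 2)) := by
  have hLc : Continuous L := L.continuous_of_finiteDimensional
  set P := (symRankTwoComap L u).starProjection with hP
  have hcont : Continuous fun p : V × V => |(((z • (1 : Matrix ι ι ℂ) - L p.1)⁻¹ *
      L (P p.2)).trace).im| := by
    have h1 : Continuous fun p : V × V => (z • (1 : Matrix ι ι ℂ) - L p.1)⁻¹ :=
      continuous_resolvent (hLc.comp continuous_fst) (fun p => hL _) continuous_const
        (fun _ => hz)
    have h2 : Continuous fun p : V × V => L (P p.2) :=
      hLc.comp (P.continuous.comp continuous_snd)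
    exact (Complex.continuous_im.comp (h1.matrix_mul h2).matrix_trace).abs
  have hmain := lintegral_trace_resolvent_le hL u hz
  rw [lintegral_prod (fun p : V × V => ENNReal.ofReal |(((z • (1 : Matrix ι ι ℂ) - L p.1)⁻¹ *
    L (P p.2)).trace).im|) (ENNReal.continuous_ofReal.comp hcont).measurable.aemeasurable] at hmain
  have hpt : ∀ w, ENNReal.ofReal (gaussAbs * √s) * ENNReal.ofReal
        √(∑ i ∈ B, ‖(negImResolvent z (L w) *ᵥ u) i‖ ^ 2) ≤
      ENNReal.ofReal √(∑ i, ‖u i‖ ^ 2) * ∫⁻ w', ENNReal.ofReal |(((z • (1 : Matrix ι ι ℂ) -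
        L w)⁻¹ * L (P w')).trace).im| ∂(stdGaussian V) := by
    intro w
    let l : V →ₗ[ℝ] ℝ :=
      { toFun := fun w' => (((z • (1 : Matrix ι ι ℂ) - L w)⁻¹ * L (P w')).trace).im
        map_add' := by
          intro a b
          simp [Matrix.mul_add]
        map_smul' := by
          intro r a
          simp }
    let c : V := (InnerProductSpace.toDual ℝ V).symm (LinearMap.toContinuousLinearMap l)
    have hc : ∀ w', inner ℝ c w' = (((z • (1 : Matrix ι ι ℂ) - L w)⁻¹ *
        L (P w')).trace).im := by
      intro w'
      rw [InnerProductSpace.toDual_symm_apply]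
      rfl
    simp only [← hc]
    rw [lintegral_abs_inner_stdGaussian, ← ENNReal.ofReal_mul (Real.sqrt_nonneg _),
      ← ENNReal.ofReal_mul (mul_nonneg gaussAbs_pos.le (Real.sqrt_nonneg _))]
    apply ENNReal.ofReal_le_ofReal
    have := sqrt_mul_sqrt_sum_le_of_inner_eq hsurj hs hs0 hu z (L w) hc
    have h0 := gaussAbs_pos
    calc _ = gaussAbs * (√s * √(∑ i ∈ B, ‖(negImResolvent z (L w) *ᵥ u) i‖ ^ 2)) := by ring
      _ ≤ gaussAbs * (‖c‖ * √(∑ i, ‖u i‖ ^ 2)) := by gcongr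
      _ = _ := by ring
  rw [← lintegral_const_mul' _ _ ENNReal.ofReal_ne_top]
  refine (lintegral_mono hpt).trans ?_
  rw [lintegral_const_mul' _ _ ENNReal.ofReal_ne_top]
  refine (mul_le_mul_right hmain _).trans ?_
  rw [ENNReal.ofReal_mul (by positivity), ENNReal.ofReal_mul (by positivity), mul_comm]
  simp

end WegnerLower

section HilbertSchmidt

lemma stdGaussian_map_inner {V : Type*} [NormedAddCommGroup V] [InnerProductSpace ℝ V]
    [FiniteDimensional ℝ V] [MeasurableSpace V] [BorelSpace V] {e : V} (he : ‖e‖ = 1) :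
    MeasurePreserving (fun w => inner ℝ e w) (stdGaussian V) (gaussianReal 0 1) := by
  have hS : ContinuousLinearMap.adjoint (innerSL ℝ e) =
      (ContinuousLinearMap.id ℝ ℝ).smulRight e := by
    rw [eq_comm, ContinuousLinearMap.eq_adjoint_iff]
    intro x y
    simp [real_inner_smul_left]
    ring
  have h := stdGaussian_map_of_adjoint (innerSL ℝ e) (by
    intro t
    rw [hS]
    simp [norm_smul, he])
  rwa [stdGaussian_real] at h

lemma lintegral_sq_gaussianReal :
    ∫⁻ x, ENNReal.ofReal (x ^ 2) ∂(gaussianReal 0 1) = 1 := by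
  have hm : MemLp (id : ℝ → ℝ) 2 (gaussianReal 0 1) := memLp_id_gaussianReal 2
  have hi : Integrable (fun x : ℝ => x ^ 2) (gaussianReal 0 1) := hm.integrable_sq
  rw [← ofReal_integral_eq_lintegral_ofReal hi
    (ae_of_all _ fun x => sq_nonneg _)]
  have h : Var[id; gaussianReal 0 1] = ∫ x, (id x) ^ 2 ∂(gaussianReal 0 1) :=
    variance_of_integral_eq_zero (by fun_prop) (by simp)
  rw [variance_id_gaussianReal] at h
  simp only [id] at h ⊢
  rw [← h]
  simp

variable {ι : Type*} [DecidableEq ι]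

/-- The complex vector supported in `B` whose entries there are those of `g`. -/
def restrictVec (B : Finset ι) (g : EuclideanSpace ℝ ι) : ι → ℂ :=
  fun i => if i ∈ B then (g i : ℂ) else 0

lemma continuous_restrictVec (B : Finset ι) : Continuous (restrictVec B) := by
  apply continuous_pi
  intro i
  unfold restrictVec
  split_ifs <;> fun_prop

variable [Fintype ι]

lemma lintegral_sqrt_restrictVec_le (B : Finset ι) :
    ∫⁻ g, ENNReal.ofReal √(∑ i, ‖restrictVec B g i‖ ^ 2) ∂(stdGaussian (EuclideanSpace ℝ ι)) ≤
      ENNReal.ofReal √B.card := by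
  have hsum : ∀ g : EuclideanSpace ℝ ι, ∑ i, ‖restrictVec B g i‖ ^ 2 = ∑ i ∈ B, (g i) ^ 2 := by
    intro g
    have h : ∀ i, ‖restrictVec B g i‖ ^ 2 = if i ∈ B then (g i) ^ 2 else 0 := by
      intro i
      by_cases hi : i ∈ B <;> simp [restrictVec, hi]
    simp only [h, Finset.sum_ite_mem, Finset.univ_inter]
  simp only [hsum]
  rcases B.eq_empty_or_nonempty with rfl | hB
  · simp
  set r := √(B.card : ℝ) with hr
  have hr0 : 0 < r := Real.sqrt_pos.2 (by exact_mod_cast hB.card_pos)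
  have hrr : r ^ 2 = B.card := Real.sq_sqrt (by positivity)
  have hone : ∀ i, ∫⁻ g : EuclideanSpace ℝ ι, ENNReal.ofReal ((g i) ^ 2)
      ∂(stdGaussian (EuclideanSpace ℝ ι)) = 1 := by
    intro i
    have h := (stdGaussian_map_inner (e := EuclideanSpace.single i (1 : ℝ))
      (by simp)).lintegral_comp (f := fun x : ℝ => ENNReal.ofReal (x ^ 2)) (by fun_prop)
    rw [lintegral_sq_gaussianReal] at h
    simpa [EuclideanSpace.inner_single_left] using h
  calc ∫⁻ g : EuclideanSpace ℝ ι, ENNReal.ofReal √(∑ i ∈ B, (g i) ^ 2)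
        ∂(stdGaussian (EuclideanSpace ℝ ι))
      ≤ ∫⁻ g : EuclideanSpace ℝ ι, (ENNReal.ofReal (1 / (2 * r)) *
          ∑ i ∈ B, ENNReal.ofReal ((g i) ^ 2) + ENNReal.ofReal (r / 2))
        ∂(stdGaussian (EuclideanSpace ℝ ι)) := by
        apply lintegral_mono
        intro g
        have h0 : 0 ≤ ∑ i ∈ B, (g i) ^ 2 := by positivity
        beta_reduce
        rw [← ENNReal.ofReal_sum_of_nonneg (fun i _ => sq_nonneg _),
          ← ENNReal.ofReal_mul (by positivity), ← ENNReal.ofReal_add (by positivity) (by positivity)]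
        apply ENNReal.ofReal_le_ofReal
        have h1 := Real.sq_sqrt h0
        set y := √(∑ i ∈ B, (g i) ^ 2)
        rw [← h1]
        have : 1 / (2 * r) * y ^ 2 + r / 2 - y = (y - r) ^ 2 / (2 * r) := by
          field_simp
          ring
        have h2 : 0 ≤ (y - r) ^ 2 / (2 * r) := by positivity
        linarith
    _ = ENNReal.ofReal (1 / (2 * r)) * B.card + ENNReal.ofReal (r / 2) := by
        rw [lintegral_add_right _ (by fun_prop), lintegral_const_mul' _ _ ENNReal.ofReal_ne_top,
          lintegral_finsetSum _ (fun i _ => by fun_prop)]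
        simp [hone]
    _ = _ := by
        rw [← ENNReal.ofReal_natCast, ← ENNReal.ofReal_mul (by positivity),
          ← ENNReal.ofReal_add (by positivity) (by positivity), ← hrr]
        congr 1
        field_simp
        ring

lemma ofReal_sqrt_sum_le_lintegral_norm_dotProduct (B : Finset ι) (t : ι → ℂ) :
    ENNReal.ofReal (gaussAbs / 2 * √(∑ j ∈ B, ‖t j‖ ^ 2)) ≤
      ∫⁻ g, ENNReal.ofReal ‖t ⬝ᵥ restrictVec B g‖ ∂(stdGaussian (EuclideanSpace ℝ ι)) := by
  have h0 := gaussAbs_pos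
  let a : EuclideanSpace ℝ ι := WithLp.toLp 2 fun j => if j ∈ B then (t j).re else 0
  let b : EuclideanSpace ℝ ι := WithLp.toLp 2 fun j => if j ∈ B then (t j).im else 0
  have hre : ∀ g, (t ⬝ᵥ restrictVec B g).re = inner ℝ a g := by
    intro g
    simp only [dotProduct, Complex.re_sum, PiLp.inner_apply, a, restrictVec]
    refine Finset.sum_congr rfl fun j _ => ?_
    by_cases hj : j ∈ B <;> simp [hj, mul_comm]
  have him : ∀ g, (t ⬝ᵥ restrictVec B g).im = inner ℝ b g := by
    intro g
    simp only [dotProduct, Complex.im_sum, PiLp.inner_apply, b, restrictVec]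
    refine Finset.sum_congr rfl fun j _ => ?_
    by_cases hj : j ∈ B <;> simp [hj, mul_comm]
  have hnorm : √(∑ j ∈ B, ‖t j‖ ^ 2) ≤ ‖a‖ + ‖b‖ := by
    apply Real.sqrt_le_iff.2 ⟨by positivity, ?_⟩
    have ha : ‖a‖ ^ 2 = ∑ j ∈ B, (t j).re ^ 2 := by
      rw [EuclideanSpace.norm_sq_eq]
      have h : ∀ j, ‖a j‖ ^ 2 = if j ∈ B then (t j).re ^ 2 else 0 := by
        intro j
        by_cases hj : j ∈ B <;> simp [a, hj]
      simp only [h, Finset.sum_ite_mem, Finset.univ_inter]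
    have hb : ‖b‖ ^ 2 = ∑ j ∈ B, (t j).im ^ 2 := by
      rw [EuclideanSpace.norm_sq_eq]
      have h : ∀ j, ‖b j‖ ^ 2 = if j ∈ B then (t j).im ^ 2 else 0 := by
        intro j
        by_cases hj : j ∈ B <;> simp [b, hj]
      simp only [h, Finset.sum_ite_mem, Finset.univ_inter]
    have hs : ∑ j ∈ B, ‖t j‖ ^ 2 = ‖a‖ ^ 2 + ‖b‖ ^ 2 := by
      rw [ha, hb, ← Finset.sum_add_distrib]
      refine Finset.sum_congr rfl fun j _ => ?_
      rw [← Complex.normSq_eq_norm_sq, Complex.normSq_apply]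
      ring
    rw [hs]
    nlinarith [norm_nonneg a, norm_nonneg b, mul_nonneg (norm_nonneg a) (norm_nonneg b)]
  calc ENNReal.ofReal (gaussAbs / 2 * √(∑ j ∈ B, ‖t j‖ ^ 2))
      ≤ ENNReal.ofReal (1 / 2) * (ENNReal.ofReal (gaussAbs * ‖a‖) +
          ENNReal.ofReal (gaussAbs * ‖b‖)) := by
        rw [← ENNReal.ofReal_add (by positivity) (by positivity), ← ENNReal.ofReal_mul (by norm_num)]
        apply ENNReal.ofReal_le_ofReal
        nlinarith
    _ = ∫⁻ g, ENNReal.ofReal (1 / 2) * (ENNReal.ofReal |inner ℝ a g| +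
          ENNReal.ofReal |inner ℝ b g|) ∂(stdGaussian (EuclideanSpace ℝ ι)) := by
        rw [lintegral_const_mul' _ _ ENNReal.ofReal_ne_top, lintegral_add_left (by fun_prop),
          lintegral_abs_inner_stdGaussian, lintegral_abs_inner_stdGaussian]
    _ ≤ _ := by
        apply lintegral_mono
        intro g
        beta_reduce
        rw [← ENNReal.ofReal_add (by positivity) (by positivity), ← ENNReal.ofReal_mul (by norm_num)]
        apply ENNReal.ofReal_le_ofReal
        rw [← hre, ← him]
        have h1 := Complex.abs_re_le_norm (t ⬝ᵥ restrictVec B g)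
        have h2 := Complex.abs_im_le_norm (t ⬝ᵥ restrictVec B g)
        linarith

lemma ofReal_hilbertSchmidt_le_lintegral (B : Finset ι) (T : Matrix ι ι ℂ) :
    ENNReal.ofReal (gaussAbs / 2 * √(∑ i ∈ B, ∑ j ∈ B, ‖T i j‖ ^ 2)) ≤
      ∫⁻ g, ENNReal.ofReal √(∑ i ∈ B, ‖(T *ᵥ restrictVec B g) i‖ ^ 2)
        ∂(stdGaussian (EuclideanSpace ℝ ι)) := by
  have h0 := gaussAbs_pos
  set S := ∑ i ∈ B, ∑ j ∈ B, ‖T i j‖ ^ 2 with hS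
  have hS0 : 0 ≤ S := by positivity
  rcases hS0.eq_or_lt with h | h
  · rw [← h]; simp
  have hs : 0 < √S := Real.sqrt_pos.2 h
  let t : ι → ℝ := fun i => √(∑ j ∈ B, ‖T i j‖ ^ 2)
  have ht : ∀ i, t i ^ 2 = ∑ j ∈ B, ‖T i j‖ ^ 2 := fun i => Real.sq_sqrt (by positivity)
  have ht0 : ∀ i, 0 ≤ t i := fun i => Real.sqrt_nonneg _
  have hcont : ∀ i, Continuous fun g => ENNReal.ofReal ‖T i ⬝ᵥ restrictVec B g‖ := fun i =>
    ENNReal.continuous_ofReal.comp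
      (continuous_const.dotProduct (continuous_restrictVec B)).norm
  have key : ENNReal.ofReal √S * ENNReal.ofReal (gaussAbs / 2 * √S) ≤ ENNReal.ofReal √S *
      ∫⁻ g, ENNReal.ofReal √(∑ i ∈ B, ‖(T *ᵥ restrictVec B g) i‖ ^ 2)
        ∂(stdGaussian (EuclideanSpace ℝ ι)) := by
    calc ENNReal.ofReal √S * ENNReal.ofReal (gaussAbs / 2 * √S)
        = ∑ i ∈ B, ENNReal.ofReal (t i) * ENNReal.ofReal (gaussAbs / 2 * t i) := by
          simp only [← ENNReal.ofReal_mul (ht0 _), ← ENNReal.ofReal_mul hs.le]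
          rw [← ENNReal.ofReal_sum_of_nonneg (fun i _ => by have := ht0 i; positivity)]
          congr 1
          have h1 : ∀ i, t i * (gaussAbs / 2 * t i) = gaussAbs / 2 * t i ^ 2 := fun i => by ring
          simp only [h1, ht, ← Finset.mul_sum, ← hS]
          rw [mul_left_comm, Real.mul_self_sqrt hS0]
      _ ≤ ∑ i ∈ B, ENNReal.ofReal (t i) * ∫⁻ g, ENNReal.ofReal ‖T i ⬝ᵥ restrictVec B g‖
            ∂(stdGaussian (EuclideanSpace ℝ ι)) := by
          gcongr with i _
          exact ofReal_sqrt_sum_le_lintegral_norm_dotProduct B (T i)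
      _ = ∫⁻ g, ∑ i ∈ B, ENNReal.ofReal (t i) * ENNReal.ofReal ‖T i ⬝ᵥ restrictVec B g‖
            ∂(stdGaussian (EuclideanSpace ℝ ι)) := by
          rw [lintegral_finsetSum _ fun i _ => ((hcont i).measurable.const_mul _)]
          refine Finset.sum_congr rfl fun i _ => ?_
          rw [lintegral_const_mul' _ _ ENNReal.ofReal_ne_top]
      _ ≤ ∫⁻ g, ENNReal.ofReal √S *
            ENNReal.ofReal √(∑ i ∈ B, ‖(T *ᵥ restrictVec B g) i‖ ^ 2)
            ∂(stdGaussian (EuclideanSpace ℝ ι)) := by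
          apply lintegral_mono
          intro g
          beta_reduce
          simp only [← ENNReal.ofReal_mul (ht0 _), ← ENNReal.ofReal_mul hs.le]
          rw [← ENNReal.ofReal_sum_of_nonneg
            (fun i _ => mul_nonneg (ht0 i) (norm_nonneg _))]
          apply ENNReal.ofReal_le_ofReal
          have h2 := Real.sum_mul_le_sqrt_mul_sqrt B t
            (fun i => ‖T i ⬝ᵥ restrictVec B g‖)
          simp only [ht, ← hS] at h2
          exact h2
      _ = _ := lintegral_const_mul' _ _ ENNReal.ofReal_ne_top
  exact (ENNReal.mul_le_mul_iff_right (by simpa using hs) ENNReal.ofReal_ne_top).1 key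

variable {V : Type*} [NormedAddCommGroup V] [InnerProductSpace ℝ V] [FiniteDimensional ℝ V]
  [MeasurableSpace V] [BorelSpace V]

lemma continuous_negImResolvent {α : Type*} [TopologicalSpace α] {M : α → Matrix ι ι ℂ}
    {z : α → ℂ} (hM : Continuous M) (hherm : ∀ a, (M a).IsHermitian) (hzc : Continuous z)
    (hz : ∀ a, (z a).im ≠ 0) : Continuous fun a => negImResolvent (z a) (M a) := by
  have h := continuous_resolvent hM hherm hzc hz
  have h2 := h.sub h.matrix_conjTranspose
  unfold negImResolvent
  exact h2.const_smul (Complex.I / 2)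

/-- A Wegner-type estimate for the restriction of the imaginary part of the resolvent. -/
lemma lintegral_hilbertSchmidt_negImResolvent_le {L : V →ₗ[ℝ] Matrix ι ι ℂ}
    (hL : ∀ w, (L w).IsHermitian)
    (hsurj : ∀ M : Matrix ι ι ℂ, M.IsHermitian → ∃ w, L w = M) {B : Finset ι} {s : ℝ}
    (hs : ∀ w, (∀ i j, L w i j ≠ 0 → i ∈ B ∧ j ∈ B) → s * ‖w‖ ^ 2 ≤ ∑ i, ∑ j, ‖L w i j‖ ^ 2)
    (hs0 : 0 < s) {z : ℂ} (hz : z.im ≠ 0) :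
    ∫⁻ w, ENNReal.ofReal √(∑ i ∈ B, ∑ j ∈ B, ‖negImResolvent z (L w) i j‖ ^ 2)
      ∂(stdGaussian V) ≤
      ENNReal.ofReal (8 * Real.pi / gaussAbs ^ 2 * √B.card / √s) := by
  have h0 := gaussAbs_pos
  have hss : 0 < √s := Real.sqrt_pos.2 hs0
  have hLc : Continuous L := L.continuous_of_finiteDimensional
  let F : V → EuclideanSpace ℝ ι → ENNReal := fun w g =>
    ENNReal.ofReal √(∑ i ∈ B, ‖(negImResolvent z (L w) *ᵥ restrictVec B g) i‖ ^ 2)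
  have hF : Continuous (Function.uncurry F) := by
    have h1 : Continuous fun p : V × EuclideanSpace ℝ ι => negImResolvent z (L p.1) :=
      continuous_negImResolvent (hLc.comp continuous_fst) (fun p => hL _) continuous_const
        (fun _ => hz)
    have h2 : Continuous fun p : V × EuclideanSpace ℝ ι => restrictVec B p.2 :=
      (continuous_restrictVec B).comp continuous_snd
    have h3 := h1.matrix_mulVec h2
    refine ENNReal.continuous_ofReal.comp (Continuous.sqrt ?_)
    exact continuous_finsetSum _ fun i _ => ((continuous_apply i).comp h3).norm.pow 2
  have key : ENNReal.ofReal (gaussAbs * √s * (gaussAbs / 2)) *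
      ∫⁻ w, ENNReal.ofReal √(∑ i ∈ B, ∑ j ∈ B, ‖negImResolvent z (L w) i j‖ ^ 2)
      ∂(stdGaussian V) ≤ ENNReal.ofReal (4 * Real.pi * √B.card) := by
    calc _ = ENNReal.ofReal (gaussAbs * √s) * ∫⁻ w, ENNReal.ofReal (gaussAbs / 2 *
            √(∑ i ∈ B, ∑ j ∈ B, ‖negImResolvent z (L w) i j‖ ^ 2)) ∂(stdGaussian V) := by
          rw [ENNReal.ofReal_mul (by positivity), mul_assoc,
            ← lintegral_const_mul' _ _ ENNReal.ofReal_ne_top]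
          congr 2
          ext w
          rw [ENNReal.ofReal_mul (by positivity)]
      _ ≤ ENNReal.ofReal (gaussAbs * √s) * ∫⁻ w, ∫⁻ g, F w g
            ∂(stdGaussian (EuclideanSpace ℝ ι)) ∂(stdGaussian V) := by
          gcongr with w
          exact ofReal_hilbertSchmidt_le_lintegral B _
      _ = ∫⁻ g, ENNReal.ofReal (gaussAbs * √s) * ∫⁻ w, F w g ∂(stdGaussian V)
            ∂(stdGaussian (EuclideanSpace ℝ ι)) := by
          rw [lintegral_lintegral_swap hF.measurable.aemeasurable,
            lintegral_const_mul' _ _ ENNReal.ofReal_ne_top]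
      _ ≤ ∫⁻ g, ENNReal.ofReal (4 * Real.pi) * ENNReal.ofReal √(∑ i, ‖restrictVec B g i‖ ^ 2)
            ∂(stdGaussian (EuclideanSpace ℝ ι)) := by
          apply lintegral_mono
          intro g
          beta_reduce
          rw [← ENNReal.ofReal_mul (by positivity)]
          exact lintegral_sqrt_sum_negImResolvent_mulVec_le hL hsurj hs hs0
            (fun i hi => by simp [restrictVec, hi]) hz
      _ ≤ _ := by
          rw [lintegral_const_mul' _ _ ENNReal.ofReal_ne_top, ENNReal.ofReal_mul (q := √B.card) (by positivity)]
          exact mul_le_mul_right (lintegral_sqrt_restrictVec_le B) _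
  have hk : 0 < gaussAbs * √s * (gaussAbs / 2) := by positivity
  refine (ENNReal.mul_le_mul_iff_right (by simpa using hk) ENNReal.ofReal_ne_top).1
    (key.trans (le_of_eq ?_))
  rw [← ENNReal.ofReal_mul hk.le]
  congr 1
  field_simp
  ring

end HilbertSchmidt

section SimpleSpectrum

variable {ι R S : Type*} [Fintype ι] [DecidableEq ι] [CommRing R] [CommRing S]

/-- The determinant of the Hankel matrix of the power traces of `M`. -/
def momentDisc (M : Matrix ι ι R) : R :=
  (Matrix.of fun i j : Fin (Fintype.card ι) => (M ^ ((i : ℕ) + j)).trace).det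

lemma momentDisc_map (f : R →+* S) (M : Matrix ι ι R) :
    momentDisc (M.map f) = f (momentDisc M) := by
  unfold momentDisc
  rw [RingHom.map_det]
  congr 1
  ext i j
  simp only [RingHom.mapMatrix_apply, Matrix.map_apply, Matrix.of_apply]
  have h : (M.map f) ^ ((i : ℕ) + j) = (M ^ ((i : ℕ) + j)).map f := by
    have := map_pow (RingHom.mapMatrix (m := ι) f) M ((i : ℕ) + j)
    simpa using this.symm
  rw [h]
  simp [Matrix.trace, map_sum]

lemma momentDisc_smul (c : R) (M : Matrix ι ι R) :
    momentDisc (c • M) = (∏ i : Fin (Fintype.card ι), c ^ (i : ℕ)) *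
      ((∏ i : Fin (Fintype.card ι), c ^ (i : ℕ)) * momentDisc M) := by
  unfold momentDisc
  rw [← Matrix.det_mul_column (fun j : Fin (Fintype.card ι) => c ^ (j : ℕ)),
    ← Matrix.det_mul_row (fun j : Fin (Fintype.card ι) => c ^ (j : ℕ))]
  congr 1
  ext i j
  simp only [Matrix.of_apply, smul_pow, Matrix.trace_smul, smul_eq_mul]
  ring

lemma momentDisc_eq_sq {M : Matrix ι ι R} {v : ι → R} (h : ∀ m : ℕ, (M ^ m).trace = ∑ k, v k ^ m) :
    momentDisc M = (vandermonde (v ∘ (Fintype.equivFin ι).symm)).det ^ 2 := by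
  rw [sq]
  nth_rewrite 1 [← Matrix.det_transpose]
  rw [← Matrix.det_mul, momentDisc]
  congr 1
  ext i j
  rw [vandermonde_transpose_mul_vandermonde, Matrix.of_apply, h]
  exact (Equiv.sum_comp (Fintype.equivFin ι).symm fun k => v k ^ ((i : ℕ) + j)).symm

lemma momentDisc_ne_zero_iff [IsDomain R] {M : Matrix ι ι R} {v : ι → R}
    (h : ∀ m : ℕ, (M ^ m).trace = ∑ k, v k ^ m) : momentDisc M ≠ 0 ↔ Function.Injective v := by
  rw [momentDisc_eq_sq h, pow_ne_zero_iff two_ne_zero, det_vandermonde_ne_zero_iff]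
  exact (Fintype.equivFin ι).symm.injective_comp v

lemma finite_momentDisc_add_smul_eq_zero (A : Matrix ι ι ℂ) {D : Matrix ι ι ℂ}
    (hD : momentDisc D ≠ 0) : {y : ℂ | momentDisc (A + y • D) = 0}.Finite := by
  let Q : Polynomial ℂ :=
    momentDisc ((Polynomial.X : Polynomial ℂ) • A.map Polynomial.C + D.map Polynomial.C)
  have hQ : ∀ t, Q.eval t = momentDisc (t • A + D) := by
    intro t
    have h := momentDisc_map (Polynomial.evalRingHom t)
      ((Polynomial.X : Polynomial ℂ) • A.map Polynomial.C + D.map Polynomial.C)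
    rw [Polynomial.coe_evalRingHom] at h
    rw [← h]
    congr 1
    ext i j
    simp [mul_comm t]
  have hQ0 : Q ≠ 0 := by
    intro h
    have h2 := hQ 0
    rw [h] at h2
    simp only [Polynomial.eval_zero, zero_smul, zero_add] at h2
    exact hD h2.symm
  have hfin : ({0} ∪ (fun t => t⁻¹) '' {t | Q.IsRoot t}).Finite :=
    (Set.finite_singleton _).union ((Polynomial.finite_setOfPred_isRoot hQ0).image _)
  refine hfin.subset fun y hy => ?_
  by_cases hy0 : y = 0
  · exact Or.inl hy0
  · refine Or.inr ⟨y⁻¹, ?_, inv_inv y⟩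
    have h1 : A + y • D = y • (y⁻¹ • A + D) := by
      rw [smul_add, smul_smul, mul_inv_cancel₀ hy0, one_smul]
    rw [Set.mem_ofPred_eq, h1, momentDisc_smul] at hy
    have h2 : ∏ i : Fin (Fintype.card ι), y ^ (i : ℕ) ≠ 0 :=
      Finset.prod_ne_zero_iff.2 fun i _ => pow_ne_zero _ hy0
    simpa [Polynomial.IsRoot, hQ, h2] using hy

lemma Matrix.IsHermitian.eq_mul_diagonal_mul {M : Matrix ι ι ℂ} (hM : M.IsHermitian) :
    M = (hM.eigenvectorUnitary : Matrix ι ι ℂ) *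
      diagonal (fun k => (hM.eigenvalues k : ℂ)) * (hM.eigenvectorUnitary : Matrix ι ι ℂ)ᴴ := by
  conv_lhs => rw [hM.spectral_theorem, Unitary.conjStarAlgAut_apply]
  rfl

lemma Matrix.IsHermitian.conjTranspose_mul_eigenvectorUnitary {M : Matrix ι ι ℂ}
    (hM : M.IsHermitian) :
    (hM.eigenvectorUnitary : Matrix ι ι ℂ)ᴴ * (hM.eigenvectorUnitary : Matrix ι ι ℂ) = 1 :=
  Unitary.coe_star_mul_self _

lemma Matrix.IsHermitian.eigenvectorUnitary_mul_conjTranspose {M : Matrix ι ι ℂ}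
    (hM : M.IsHermitian) :
    (hM.eigenvectorUnitary : Matrix ι ι ℂ) * (hM.eigenvectorUnitary : Matrix ι ι ℂ)ᴴ = 1 :=
  Unitary.coe_mul_star_self _

lemma Matrix.IsHermitian.trace_pow_eq_sum {M : Matrix ι ι ℂ} (hM : M.IsHermitian) (m : ℕ) :
    (M ^ m).trace = ∑ k, (hM.eigenvalues k : ℂ) ^ m := by
  have h := hM.eq_mul_diagonal_mul
  have h1 := hM.conjTranspose_mul_eigenvectorUnitary
  have h2 := hM.eigenvectorUnitary_mul_conjTranspose
  generalize (hM.eigenvectorUnitary : Matrix ι ι ℂ) = U at h h1 h2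
  generalize hM.eigenvalues = v at h
  have hp : M ^ m = U * diagonal (fun k => (v k : ℂ) ^ m) * Uᴴ := by
    induction m with
    | zero => simp [h2]
    | succ m ih =>
      rw [pow_succ, ih, h]
      calc _ = U * diagonal (fun k => (v k : ℂ) ^ m) * (Uᴴ * U) *
            diagonal (fun k => (v k : ℂ)) * Uᴴ := by simp only [Matrix.mul_assoc]
        _ = _ := by
            rw [h1, Matrix.mul_one, Matrix.mul_assoc U, Matrix.diagonal_mul_diagonal]
            simp only [pow_succ]
  rw [hp, Matrix.trace_mul_comm, ← Matrix.mul_assoc, h1, Matrix.one_mul, Matrix.trace_diagonal]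

variable {V : Type*} [NormedAddCommGroup V] [InnerProductSpace ℝ V] [FiniteDimensional ℝ V]
  [MeasurableSpace V] [BorelSpace V]

lemma ae_injective_eigenvalues {L : V →ₗ[ℝ] Matrix ι ι ℂ} (hL : ∀ w, (L w).IsHermitian)
    (hsurj : ∀ M : Matrix ι ι ℂ, M.IsHermitian → ∃ w, L w = M) :
    ∀ᵐ w ∂(stdGaussian V), Function.Injective (hL w).eigenvalues := by
  let d : ι → ℝ := fun i => ((Fintype.equivFin ι i : ℕ) : ℝ) + 1
  have hd : Function.Injective d := by
    intro i j h
    have h2 : ((Fintype.equivFin ι i : ℕ) : ℝ) = (Fintype.equivFin ι j : ℕ) := by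
      simpa [d] using h
    exact (Fintype.equivFin ι).injective (Fin.ext (by exact_mod_cast h2))
  let D : Matrix ι ι ℂ := diagonal fun i => (d i : ℂ)
  have hD : momentDisc D ≠ 0 := by
    rw [momentDisc_ne_zero_iff (v := fun i => (d i : ℂ))]
    · exact Complex.ofReal_injective.comp hd
    · intro m
      simp [D, Matrix.diagonal_pow, Matrix.trace_diagonal]
  obtain ⟨u, hu⟩ := hsurj D (by
    rw [Matrix.IsHermitian, Matrix.diagonal_conjTranspose]
    congr 1
    ext i
    simp)
  have hdisc : ∀ w, momentDisc (L w) ≠ 0 ↔ Function.Injective (hL w).eigenvalues := by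
    intro w
    rw [momentDisc_ne_zero_iff (hL w).trace_pow_eq_sum]
    exact ⟨fun h a b hab => h (by simp [hab]), fun h => Complex.ofReal_injective.comp h⟩
  simp only [← hdisc]
  rcases isEmpty_or_nonempty ι with hι | hι
  · refine ae_of_all _ fun w => ?_
    rw [hdisc]
    exact Function.injective_of_subsingleton _
  have hu0 : u ≠ 0 := by
    rintro rfl
    rw [map_zero] at hu
    have h := congrFun (congrFun hu (Classical.arbitrary ι)) (Classical.arbitrary ι)
    have h2 : (d (Classical.arbitrary ι) : ℂ) = 0 := by simpa [D] using h.symm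
    have h3 : d (Classical.arbitrary ι) = 0 := by exact_mod_cast h2
    have h4 : 0 < d (Classical.arbitrary ι) := by positivity
    exact h4.ne' h3
  have hun : ‖u‖ ≠ 0 := norm_ne_zero_iff.2 hu0
  set e : V := ‖u‖⁻¹ • u with he_def
  have he : ‖e‖ = 1 := by rw [he_def, norm_smul, norm_inv, norm_norm, inv_mul_cancel₀ hun]
  have hLe : L e = ((‖u‖⁻¹ : ℝ) : ℂ) • D := by
    rw [he_def, map_smul, hu]
    ext i j
    simp
  have hD' : momentDisc (L e) ≠ 0 := by
    rw [hLe, momentDisc_smul]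
    have h2 : ∏ i : Fin (Fintype.card ι), ((‖u‖⁻¹ : ℝ) : ℂ) ^ (i : ℕ) ≠ 0 :=
      Finset.prod_ne_zero_iff.2 fun i _ => pow_ne_zero _ (by simpa using hu0)
    exact mul_ne_zero h2 (mul_ne_zero h2 hD)
  clear_value e
  have hLc : Continuous L := L.continuous_of_finiteDimensional
  have hcont : Continuous fun w => momentDisc (L w) := by
    unfold momentDisc
    apply Continuous.matrix_det
    refine continuous_matrix fun i j => ?_
    exact (hLc.pow _).matrix_trace
  have hmeas : MeasurableSet {w | momentDisc (L w) ≠ 0} :=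
    (isOpen_ne_fun hcont continuous_const).measurableSet
  have hp := stdGaussian_prod_map_resample he
  have : NullSingletonClass (gaussianReal 0 1) := nullSingletonClass_gaussianReal (by norm_num)
  rw [← hp.map_eq, ae_map_iff hp.measurable.aemeasurable hmeas,
    Measure.ae_prod_iff_ae_ae
      (p := fun x => momentDisc (L (x.1 + (x.2 - inner ℝ e x.1) • e)) ≠ 0) (hp.measurable hmeas)]
  refine ae_of_all _ fun w => ?_
  have hf := finite_momentDisc_add_smul_eq_zero (L w - inner ℝ e w • L e) hD'
  have hf2 : {x : ℝ | momentDisc (L (w + (x - inner ℝ e w) • e)) = 0}.Finite := by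
    refine (hf.preimage (f := ((↑) : ℝ → ℂ)) Complex.ofReal_injective.injOn).subset fun x hx => ?_
    rw [Set.mem_ofPred_eq] at hx
    rw [Set.mem_preimage, Set.mem_ofPred_eq, ← hx]
    congr 1
    have h3 : ((x : ℂ)) • L e = x • L e := by
      ext i j
      simp
    rw [h3, map_add, map_smul, sub_smul]
    abel
  have h4 := hf2.measure_zero (gaussianReal 0 1)
  rw [ae_iff]
  simpa using h4

end SimpleSpectrum

section SpectralResolvent

/-- The unnormalised Cauchy kernel. -/
def lorentzian (ε x : ℝ) : ℝ := ε / (x ^ 2 + ε ^ 2)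

lemma lorentzian_nonneg {ε : ℝ} (hε : 0 ≤ ε) (x : ℝ) : 0 ≤ lorentzian ε x := by
  unfold lorentzian
  positivity

lemma lorentzian_eq {ε : ℝ} (hε : ε ≠ 0) (x : ℝ) :
    (lorentzian ε x : ℂ) = Complex.I / 2 * (((x : ℂ) + ε * Complex.I)⁻¹ -
      ((x : ℂ) - ε * Complex.I)⁻¹) := by
  have h1 : (x : ℂ) + ε * Complex.I ≠ 0 := by
    intro h
    have := congrArg Complex.im h
    simp at this
    exact hε this
  have h2 : (x : ℂ) - ε * Complex.I ≠ 0 := by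
    intro h
    have := congrArg Complex.im h
    simp at this
    exact hε this
  have h3 : (x : ℂ) ^ 2 + ε ^ 2 = (x + ε * Complex.I) * (x - ε * Complex.I) := by
    linear_combination ((ε : ℂ) ^ 2) * Complex.I_sq
  unfold lorentzian
  push_cast
  rw [h3]
  field_simp
  linear_combination (2 * (ε : ℂ)) * Complex.I_sq

variable {ι : Type*} [Fintype ι] [DecidableEq ι]

lemma Matrix.IsHermitian.resolvent_eq {M : Matrix ι ι ℂ} (hM : M.IsHermitian) {z : ℂ}
    (hz : z.im ≠ 0) :
    (z • 1 - M)⁻¹ = (hM.eigenvectorUnitary : Matrix ι ι ℂ) *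
      diagonal (fun k => (z - hM.eigenvalues k)⁻¹) *
        (hM.eigenvectorUnitary : Matrix ι ι ℂ)ᴴ := by
  have h := hM.eq_mul_diagonal_mul
  have h1 := hM.conjTranspose_mul_eigenvectorUnitary
  have h2 := hM.eigenvectorUnitary_mul_conjTranspose
  generalize (hM.eigenvectorUnitary : Matrix ι ι ℂ) = U at h h1 h2 ⊢
  generalize hM.eigenvalues = v at h ⊢
  have hv : ∀ k, z - v k ≠ 0 := by
    intro k hk
    have := congrArg Complex.im hk
    simp at this
    exact hz this
  apply Matrix.inv_eq_right_inv
  have h3 : z • (1 : Matrix ι ι ℂ) - M = U * diagonal (fun k => z - (v k : ℂ)) * Uᴴ := by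
    have h4 : diagonal (fun k => z - (v k : ℂ)) =
        z • (1 : Matrix ι ι ℂ) - diagonal (fun k => (v k : ℂ)) := by
      rw [Matrix.smul_one_eq_diagonal, Matrix.diagonal_sub]
    rw [h4, Matrix.mul_sub, Matrix.sub_mul, ← h, Matrix.mul_smul, Matrix.smul_mul, Matrix.mul_one,
      h2]
  rw [h3]
  calc _ = U * diagonal (fun k => z - (v k : ℂ)) * (Uᴴ * U) *
        diagonal (fun k => (z - (v k : ℂ))⁻¹) * Uᴴ := by simp only [Matrix.mul_assoc]
    _ = 1 := by
        rw [h1, Matrix.mul_one, Matrix.mul_assoc U, Matrix.diagonal_mul_diagonal]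
        simp only [mul_inv_cancel₀ (hv _), Matrix.diagonal_one, Matrix.mul_one, h2]

lemma Matrix.IsHermitian.negImResolvent_apply {M : Matrix ι ι ℂ} (hM : M.IsHermitian) (E : ℝ)
    {ε : ℝ} (hε : ε ≠ 0) (i j : ι) :
    negImResolvent ((E : ℂ) + ε * Complex.I) M i j =
      ∑ k, (lorentzian ε (E - hM.eigenvalues k) : ℂ) *
        ((hM.eigenvectorUnitary : Matrix ι ι ℂ) i k *
          star ((hM.eigenvectorUnitary : Matrix ι ι ℂ) j k)) := by
  have hz : ((E : ℂ) + ε * Complex.I).im ≠ 0 := by simpa using hε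
  have h : ∀ i j, ((((E : ℂ) + ε * Complex.I) • 1 - M)⁻¹) i j =
      ∑ k, (((E : ℂ) + ε * Complex.I) - hM.eigenvalues k)⁻¹ *
        ((hM.eigenvectorUnitary : Matrix ι ι ℂ) i k *
          star ((hM.eigenvectorUnitary : Matrix ι ι ℂ) j k)) := by
    intro i j
    rw [hM.resolvent_eq hz, Matrix.mul_apply]
    refine Finset.sum_congr rfl fun k _ => ?_
    rw [Matrix.mul_diagonal, Matrix.conjTranspose_apply]
    ring
  unfold negImResolvent
  rw [Matrix.smul_apply, Matrix.sub_apply, Matrix.conjTranspose_apply, h, h, star_sum,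
    ← Finset.sum_sub_distrib, smul_eq_mul, Finset.mul_sum]
  refine Finset.sum_congr rfl fun k _ => ?_
  rw [lorentzian_eq hε]
  have h3 : star (((E : ℂ) + ε * Complex.I - hM.eigenvalues k)⁻¹) =
      (((E - hM.eigenvalues k : ℝ) : ℂ) - ε * Complex.I)⁻¹ := by
    simp
    ring
  have h4 : ((E : ℂ) + ε * Complex.I - hM.eigenvalues k) =
      ((E - hM.eigenvalues k : ℝ) : ℂ) + ε * Complex.I := by
    push_cast
    ring
  rw [star_mul', h3, h4, star_mul', star_star]
  ring

lemma Matrix.IsHermitian.negImResolvent_diag {M : Matrix ι ι ℂ} (hM : M.IsHermitian) (E : ℝ)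
    {ε : ℝ} (hε : ε ≠ 0) (i : ι) :
    negImResolvent ((E : ℂ) + ε * Complex.I) M i i =
      ((∑ k, lorentzian ε (E - hM.eigenvalues k) *
        ‖(hM.eigenvectorUnitary : Matrix ι ι ℂ) i k‖ ^ 2 : ℝ) : ℂ) := by
  rw [hM.negImResolvent_apply E hε]
  push_cast
  refine Finset.sum_congr rfl fun k _ => ?_
  rw [← Complex.mul_conj']
  rfl

lemma Matrix.IsHermitian.sum_norm_sq_eigenvectorUnitary_row {M : Matrix ι ι ℂ}
    (hM : M.IsHermitian) (i : ι) :
    ∑ k, ‖(hM.eigenvectorUnitary : Matrix ι ι ℂ) i k‖ ^ 2 = 1 := by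
  have h := congrFun (congrFun hM.eigenvectorUnitary_mul_conjTranspose i) i
  rw [Matrix.mul_apply, Matrix.one_apply_eq] at h
  have h2 : ((∑ k, ‖(hM.eigenvectorUnitary : Matrix ι ι ℂ) i k‖ ^ 2 : ℝ) : ℂ) = 1 := by
    rw [← h]
    push_cast
    refine Finset.sum_congr rfl fun k _ => ?_
    rw [← Complex.mul_conj']
    rfl
  exact_mod_cast h2

lemma Matrix.IsHermitian.sum_norm_sq_eigenvectorUnitary_col {M : Matrix ι ι ℂ}
    (hM : M.IsHermitian) (k : ι) :
    ∑ i, ‖(hM.eigenvectorUnitary : Matrix ι ι ℂ) i k‖ ^ 2 = 1 := by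
  have h := congrFun (congrFun hM.conjTranspose_mul_eigenvectorUnitary k) k
  rw [Matrix.mul_apply, Matrix.one_apply_eq] at h
  have h2 : ((∑ i, ‖(hM.eigenvectorUnitary : Matrix ι ι ℂ) i k‖ ^ 2 : ℝ) : ℂ) = 1 := by
    rw [← h]
    push_cast
    refine Finset.sum_congr rfl fun i _ => ?_
    rw [← Complex.mul_conj', mul_comm]
    rfl
  exact_mod_cast h2

lemma Matrix.IsHermitian.lorentzian_mul_le_hilbertSchmidt {M : Matrix ι ι ℂ} (hM : M.IsHermitian)
    (B : Finset ι) (E : ℝ) {ε : ℝ} (hε : 0 < ε) (k : ι) :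
    lorentzian ε (E - hM.eigenvalues k) *
        ∑ i ∈ B, ‖(hM.eigenvectorUnitary : Matrix ι ι ℂ) i k‖ ^ 2 ≤
      √(∑ i ∈ B, ∑ j ∈ B, ‖negImResolvent ((E : ℂ) + ε * Complex.I) M i j‖ ^ 2) := by
  have hT := fun i j => hM.negImResolvent_apply E hε.ne' i j
  generalize (hM.eigenvectorUnitary : Matrix ι ι ℂ) = U at hT ⊢
  set φ : ι → ℝ := fun k => lorentzian ε (E - hM.eigenvalues k) with hφ
  have hφ0 : ∀ k, 0 ≤ φ k := fun k => lorentzian_nonneg hε.le _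
  let G : ι → ι → ℂ := fun k l => ∑ i ∈ B, U i k * star (U i l)
  have key : ∑ i ∈ B, ∑ j ∈ B, ‖negImResolvent ((E : ℂ) + ε * Complex.I) M i j‖ ^ 2 =
      ∑ k, ∑ l, φ k * φ l * ‖G k l‖ ^ 2 := by
    let f : ι → ι → ι → ι → ℂ := fun i j k l =>
      (φ k * (U i k * star (U j k))) * (φ l * (star (U i l) * U j l))
    have hA : ((∑ i ∈ B, ∑ j ∈ B, ‖negImResolvent ((E : ℂ) + ε * Complex.I) M i j‖ ^ 2 : ℝ) : ℂ) =
        ∑ i ∈ B, ∑ j ∈ B, ∑ k, ∑ l, f i j k l := by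
      push_cast
      refine Finset.sum_congr rfl fun i _ => Finset.sum_congr rfl fun j _ => ?_
      rw [← Complex.mul_conj', hT, map_sum, Finset.sum_mul_sum]
      simp [f, φ]
    have hC : ((∑ k, ∑ l, φ k * φ l * ‖G k l‖ ^ 2 : ℝ) : ℂ) =
        ∑ k, ∑ l, ∑ i ∈ B, ∑ j ∈ B, f i j k l := by
      push_cast
      refine Finset.sum_congr rfl fun k _ => Finset.sum_congr rfl fun l _ => ?_
      rw [← Complex.mul_conj', map_sum, Finset.sum_mul_sum, Finset.mul_sum]
      refine Finset.sum_congr rfl fun i _ => ?_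
      rw [Finset.mul_sum]
      refine Finset.sum_congr rfl fun j _ => ?_
      simp only [f, map_mul, Complex.star_def, Complex.conj_conj]
      ring
    have h : ((∑ i ∈ B, ∑ j ∈ B, ‖negImResolvent ((E : ℂ) + ε * Complex.I) M i j‖ ^ 2 : ℝ) : ℂ) =
        ((∑ k, ∑ l, φ k * φ l * ‖G k l‖ ^ 2 : ℝ) : ℂ) := by
      rw [hA, hC]
      calc ∑ i ∈ B, ∑ j ∈ B, ∑ k, ∑ l, f i j k l = ∑ i ∈ B, ∑ k, ∑ l, ∑ j ∈ B, f i j k l := by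
              refine Finset.sum_congr rfl fun i _ => ?_
              rw [Finset.sum_comm]
              refine Finset.sum_congr rfl fun k _ => ?_
              rw [Finset.sum_comm]
        _ = ∑ k, ∑ l, ∑ i ∈ B, ∑ j ∈ B, f i j k l := by
              rw [Finset.sum_comm]
              refine Finset.sum_congr rfl fun k _ => ?_
              rw [Finset.sum_comm]
    exact_mod_cast h
  have hG : ‖G k k‖ = ∑ i ∈ B, ‖U i k‖ ^ 2 := by
    have h : G k k = ((∑ i ∈ B, ‖U i k‖ ^ 2 : ℝ) : ℂ) := by
      push_cast
      refine Finset.sum_congr rfl fun i _ => ?_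
      rw [← Complex.mul_conj']
      rfl
    rw [h, Complex.norm_real, Real.norm_of_nonneg (by positivity)]
  apply Real.le_sqrt_of_sq_le
  rw [key, ← hG]
  have hnn : ∀ k l, 0 ≤ φ k * φ l * ‖G k l‖ ^ 2 := fun k l =>
    mul_nonneg (mul_nonneg (hφ0 k) (hφ0 l)) (sq_nonneg _)
  calc (φ k * ‖G k k‖) ^ 2 = φ k * φ k * ‖G k k‖ ^ 2 := by ring
    _ ≤ ∑ l, φ k * φ l * ‖G k l‖ ^ 2 :=
        Finset.single_le_sum (f := fun l => φ k * φ l * ‖G k l‖ ^ 2)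
          (fun l _ => hnn k l) (Finset.mem_univ k)
    _ ≤ _ := Finset.single_le_sum (f := fun k => ∑ l, φ k * φ l * ‖G k l‖ ^ 2)
          (fun k _ => Finset.sum_nonneg fun l _ => hnn k l) (Finset.mem_univ k)

/-- For a matrix with simple spectrum, the imaginary part of the resolvent is asymptotically of
rank one, so its trace is controlled by its Hilbert-Schmidt norm. -/
lemma Matrix.IsHermitian.trace_sub_hilbertSchmidt_le {M : Matrix ι ι ℂ} (hM : M.IsHermitian)
    (hinj : Function.Injective hM.eigenvalues) (B : Finset ι) (E : ℝ) {ε : ℝ} (hε : 0 < ε) :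
    ∑ i ∈ B, (negImResolvent ((E : ℂ) + ε * Complex.I) M i i).re -
        √(∑ i ∈ B, ∑ j ∈ B, ‖negImResolvent ((E : ℂ) + ε * Complex.I) M i j‖ ^ 2) ≤
      (∑ k, ∑ l, 4 / (hM.eigenvalues k - hM.eigenvalues l) ^ 2) * ε := by
  rcases isEmpty_or_nonempty ι with hι | hι
  · have hB : B = ∅ := Finset.eq_empty_of_isEmpty B
    subst hB
    simp
  obtain ⟨k₀, -, hk₀⟩ := Finset.exists_min_image Finset.univ
    (fun k => |E - hM.eigenvalues k|) Finset.univ_nonempty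
  have h1 := hM.lorentzian_mul_le_hilbertSchmidt B E hε k₀
  have htr : ∑ i ∈ B, (negImResolvent ((E : ℂ) + ε * Complex.I) M i i).re =
      ∑ k, lorentzian ε (E - hM.eigenvalues k) *
        ∑ i ∈ B, ‖(hM.eigenvectorUnitary : Matrix ι ι ℂ) i k‖ ^ 2 := by
    simp only [hM.negImResolvent_diag E hε.ne', Complex.ofReal_re, Finset.mul_sum]
    rw [Finset.sum_comm]
  rw [htr, ← Finset.add_sum_erase _ _ (Finset.mem_univ k₀)]
  have h2 : ∑ k ∈ Finset.univ.erase k₀, lorentzian ε (E - hM.eigenvalues k) *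
        ∑ i ∈ B, ‖(hM.eigenvectorUnitary : Matrix ι ι ℂ) i k‖ ^ 2 ≤
      (∑ k, ∑ l, 4 / (hM.eigenvalues k - hM.eigenvalues l) ^ 2) * ε := by
    rw [Finset.sum_mul]
    calc _ ≤ ∑ k ∈ Finset.univ.erase k₀,
          (∑ l, 4 / (hM.eigenvalues k - hM.eigenvalues l) ^ 2) * ε := by
          refine Finset.sum_le_sum fun k hk => ?_
          have hne : hM.eigenvalues k - hM.eigenvalues k₀ ≠ 0 :=
            sub_ne_zero.2 fun h => Finset.ne_of_mem_erase hk (hinj h)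
          have hle : ∑ i ∈ B, ‖(hM.eigenvectorUnitary : Matrix ι ι ℂ) i k‖ ^ 2 ≤ 1 := by
            rw [← hM.sum_norm_sq_eigenvectorUnitary_col k]
            exact Finset.sum_le_sum_of_subset_of_nonneg (Finset.subset_univ B)
              fun _ _ _ => by positivity
          calc _ ≤ lorentzian ε (E - hM.eigenvalues k) * 1 :=
                mul_le_mul_of_nonneg_left hle (lorentzian_nonneg hε.le _)
            _ ≤ 4 / (hM.eigenvalues k - hM.eigenvalues k₀) ^ 2 * ε := by
                have h3 : (hM.eigenvalues k - hM.eigenvalues k₀) ^ 2 ≤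
                    4 * ((E - hM.eigenvalues k) ^ 2 + ε ^ 2) := by
                  have h4 : |hM.eigenvalues k - hM.eigenvalues k₀| ≤
                      2 * |E - hM.eigenvalues k| := by
                    have h5 := hk₀ k (Finset.mem_univ k)
                    have h6 := abs_sub_le (hM.eigenvalues k) E (hM.eigenvalues k₀)
                    rw [abs_sub_comm (hM.eigenvalues k) E] at h6
                    linarith
                  have h7 := pow_le_pow_left₀ (abs_nonneg _) h4 2
                  rw [mul_pow, sq_abs, sq_abs] at h7
                  nlinarith [sq_nonneg ε]
                have h8 : 0 < (hM.eigenvalues k - hM.eigenvalues k₀) ^ 2 := by positivity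
                rw [mul_one, lorentzian, div_mul_eq_mul_div, div_le_div_iff₀ (by positivity) h8]
                nlinarith
            _ ≤ _ := by
                gcongr
                exact Finset.single_le_sum
                  (f := fun l => 4 / (hM.eigenvalues k - hM.eigenvalues l) ^ 2)
                  (fun l _ => by positivity) (Finset.mem_univ k₀)
      _ ≤ _ := Finset.sum_le_sum_of_subset_of_nonneg (Finset.erase_subset _ _)
          fun k _ _ => mul_nonneg (Finset.sum_nonneg fun l _ => by positivity) hε.le
  linarith

end SpectralResolvent

section GaussianLorentzian

lemma lorentzian_le_inv {ε : ℝ} (hε : 0 < ε) (x : ℝ) : lorentzian ε x ≤ ε⁻¹ := by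
  unfold lorentzian
  rw [inv_eq_one_div, div_le_div_iff₀ (by positivity) hε]
  nlinarith [sq_nonneg x]

lemma continuous_lorentzian {ε : ℝ} (hε : 0 < ε) : Continuous (lorentzian ε) := by
  unfold lorentzian
  exact continuous_const.div (by fun_prop) fun x => by positivity

lemma gaussianPDFReal_le_one (x : ℝ) : gaussianPDFReal 0 1 x ≤ 1 := by
  unfold gaussianPDFReal
  have h1 : (√(2 * Real.pi * ((1 : NNReal) : ℝ)))⁻¹ ≤ 1 := by
    apply inv_le_one_of_one_le₀
    rw [Real.one_le_sqrt]
    have := Real.pi_gt_three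
    push_cast
    linarith
  have h2 : Real.exp (-(x - 0) ^ 2 / (2 * ((1 : NNReal) : ℝ))) ≤ 1 := by
    apply Real.exp_le_one_iff.2
    push_cast
    have := sq_nonneg (x - 0)
    linarith
  exact mul_le_one₀ h1 (Real.exp_pos _).le h2

lemma continuous_gaussianPDFReal : Continuous (gaussianPDFReal 0 1) := by
  unfold gaussianPDFReal
  fun_prop

lemma integrable_lorentzian {α : Type*} [MeasurableSpace α] (μ : Measure α)
    [IsFiniteMeasure μ] {ε : ℝ} (hε : 0 < ε) {f : α → ℝ} (hf : Measurable f) :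
    Integrable (fun x => lorentzian ε (f x)) μ := by
  refine Integrable.of_bound (C := ε⁻¹)
    ((continuous_lorentzian hε).measurable.comp hf).aestronglyMeasurable (ae_of_all _ fun x => ?_)
  rw [Real.norm_of_nonneg (lorentzian_nonneg hε.le _)]
  exact lorentzian_le_inv hε _

lemma integral_lorentzian_gaussianReal {ε κ : ℝ} (hε : 0 < ε) (hκ : 0 < κ) (y : ℝ) :
    ∫ x, lorentzian ε (y - κ * x) ∂(gaussianReal 0 1) =
      κ⁻¹ * ∫ t, gaussianPDFReal 0 1 (y / κ - ε / κ * t) * (1 + t ^ 2)⁻¹ := by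
  rw [integral_gaussianReal_eq_integral_smul one_ne_zero]
  have h1 := Measure.integral_comp_mul_left
    (fun t => gaussianPDFReal 0 1 (y / κ - t) • lorentzian ε (y - κ * (y / κ - t))) (ε / κ)
  rw [integral_sub_left_eq_self
    (fun x => gaussianPDFReal 0 1 x • lorentzian ε (y - κ * x)) volume (y / κ)] at h1
  have h2 : |(ε / κ)⁻¹| = κ / ε := by
    rw [inv_div, abs_of_pos (by positivity)]
  rw [h2, smul_eq_mul] at h1
  have h3 : ∀ t, gaussianPDFReal 0 1 (y / κ - ε / κ * t) •
      lorentzian ε (y - κ * (y / κ - ε / κ * t)) =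
      ε⁻¹ * (gaussianPDFReal 0 1 (y / κ - ε / κ * t) * (1 + t ^ 2)⁻¹) := by
    intro t
    have h4 : y - κ * (y / κ - ε / κ * t) = ε * t := by
      field_simp
      ring
    rw [h4, smul_eq_mul, lorentzian]
    have h5 : (ε * t) ^ 2 + ε ^ 2 = ε ^ 2 * (1 + t ^ 2) := by ring
    have h6 : 1 + t ^ 2 ≠ 0 := by positivity
    rw [h5]
    field_simp
  simp only [h3] at h1
  rw [integral_const_mul] at h1
  have h7 : ∫ x, gaussianPDFReal 0 1 x • lorentzian ε (y - κ * x) =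
      ε / κ * (κ / ε * ∫ x, gaussianPDFReal 0 1 x • lorentzian ε (y - κ * x)) := by
    field_simp
  rw [h7, ← h1]
  field_simp

lemma integrable_gaussianPDFReal_mul_inv (c a : ℝ) :
    Integrable fun t : ℝ => gaussianPDFReal 0 1 (c - a * t) * (1 + t ^ 2)⁻¹ := by
  refine integrable_inv_one_add_sq.mono'
    ((continuous_gaussianPDFReal.measurable.comp (by fun_prop)).mul
      (by fun_prop)).aestronglyMeasurable (ae_of_all _ fun t => ?_)
  rw [Real.norm_of_nonneg (mul_nonneg (gaussianPDFReal_nonneg _ _ _) (by positivity))]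
  exact mul_le_of_le_one_left (by positivity) (gaussianPDFReal_le_one _)

lemma integral_lorentzian_gaussianReal_le {ε κ : ℝ} (hε : 0 < ε) (hκ : 0 < κ) (y : ℝ) :
    ∫ x, lorentzian ε (y - κ * x) ∂(gaussianReal 0 1) ≤ Real.pi / κ := by
  rw [integral_lorentzian_gaussianReal hε hκ, div_eq_inv_mul Real.pi]
  refine mul_le_mul_of_nonneg_left ?_ (inv_nonneg.2 hκ.le)
  rw [← integral_univ_inv_one_add_sq]
  refine integral_mono (integrable_gaussianPDFReal_mul_inv _ _) integrable_inv_one_add_sq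
    fun t => ?_
  exact mul_le_of_le_one_left (by positivity) (gaussianPDFReal_le_one _)

lemma tendsto_integral_lorentzian_gaussianReal {κ : ℝ} (hκ : 0 < κ) (y : ℝ) :
    ∃ ℓ : ℝ, Tendsto (fun ε : ℝ => ∫ x, lorentzian ε (y - κ * x) ∂(gaussianReal 0 1)) (𝓝[>] 0)
      (𝓝 ℓ) := by
  have h : Tendsto (fun ε : ℝ => ∫ t, gaussianPDFReal 0 1 (y / κ - ε / κ * t) * (1 + t ^ 2)⁻¹)
      (𝓝[>] 0) (𝓝 (∫ t, gaussianPDFReal 0 1 (y / κ - 0 / κ * t) * (1 + t ^ 2)⁻¹)) := by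
    refine tendsto_integral_filter_of_dominated_convergence (fun t => (1 + t ^ 2)⁻¹)
      (Eventually.of_forall fun ε => (integrable_gaussianPDFReal_mul_inv _ _).aestronglyMeasurable)
      (Eventually.of_forall fun ε => ae_of_all _ fun t => ?_) integrable_inv_one_add_sq
      (ae_of_all _ fun t => ?_)
    · rw [Real.norm_of_nonneg (mul_nonneg (gaussianPDFReal_nonneg _ _ _) (by positivity))]
      exact mul_le_of_le_one_left (by positivity) (gaussianPDFReal_le_one _)
    · have hc : Continuous fun ε : ℝ =>
          gaussianPDFReal 0 1 (y / κ - ε / κ * t) * (1 + t ^ 2)⁻¹ :=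
        (continuous_gaussianPDFReal.comp (by fun_prop)).mul continuous_const
      exact (hc.tendsto 0).mono_left nhdsWithin_le_nhds
  refine ⟨_, (h.const_mul κ⁻¹).congr' ?_⟩
  filter_upwards [self_mem_nhdsWithin] with ε hε
  rw [integral_lorentzian_gaussianReal hε hκ]

end GaussianLorentzian

section DensityOfStates

variable {ι : Type*} [DecidableEq ι] {V : Type*} [NormedAddCommGroup V] [InnerProductSpace ℝ V]

lemma map_resample_eq_add_smul_one {L : V →ₗ[ℝ] Matrix ι ι ℂ} {e : V} {κ : ℝ}
    (hLe : L e = (κ : ℂ) • 1) (w : V) (x : ℝ) :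
    L (w + (x - inner ℝ e w) • e) = L w + ((κ * (x - inner ℝ e w) : ℝ) : ℂ) • 1 := by
  rw [map_add, map_smul, hLe]
  congr 1
  ext i j
  simp
  ring

lemma exists_unit_map_eq_smul_one [Nonempty ι] {L : V →ₗ[ℝ] Matrix ι ι ℂ}
    (hsurj : ∀ M : Matrix ι ι ℂ, M.IsHermitian → ∃ w, L w = M) :
    ∃ (e : V) (κ : ℝ), ‖e‖ = 1 ∧ 0 < κ ∧ L e = (κ : ℂ) • 1 := by
  obtain ⟨u, hu⟩ := hsurj 1 Matrix.isHermitian_one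
  have hu0 : u ≠ 0 := by
    rintro rfl
    rw [map_zero] at hu
    simpa using congrFun (congrFun hu (Classical.arbitrary ι)) (Classical.arbitrary ι)
  have hun : 0 < ‖u‖ := norm_pos_iff.2 hu0
  refine ⟨‖u‖⁻¹ • u, ‖u‖⁻¹, ?_, by positivity, ?_⟩
  · rw [norm_smul, norm_inv, norm_norm, inv_mul_cancel₀ hun.ne']
  · rw [map_smul, hu]
    ext i j
    simp

variable [Fintype ι] {L : V →ₗ[ℝ] Matrix ι ι ℂ}

lemma negImResolvent_add_smul_one (E c ε : ℝ) (M : Matrix ι ι ℂ) :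
    negImResolvent ((E : ℂ) + ε * Complex.I) (M + (c : ℂ) • 1) =
      negImResolvent (((E - c : ℝ) : ℂ) + ε * Complex.I) M := by
  have h : ((E : ℂ) + ε * Complex.I) • (1 : Matrix ι ι ℂ) - (M + (c : ℂ) • 1) =
      (((E - c : ℝ) : ℂ) + ε * Complex.I) • 1 - M := by
    push_cast
    module
  unfold negImResolvent
  rw [h]

lemma negImResolvent_resample {e : V} {κ : ℝ}
    (hLe : L e = (κ : ℂ) • 1) (E ε : ℝ) (w : V) (x : ℝ) :
    negImResolvent ((E : ℂ) + ε * Complex.I) (L (w + (x - inner ℝ e w) • e)) =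
      negImResolvent (((E + κ * inner ℝ e w - κ * x : ℝ) : ℂ) + ε * Complex.I) (L w) := by
  rw [map_resample_eq_add_smul_one hLe, negImResolvent_add_smul_one]
  have h : E - κ * (x - inner ℝ e w) = E + κ * inner ℝ e w - κ * x := by ring
  rw [h]

lemma Matrix.IsHermitian.negImResolvent_diag_re_nonneg {M : Matrix ι ι ℂ} (hM : M.IsHermitian)
    (E : ℝ) {ε : ℝ} (hε : 0 < ε) (i : ι) :
    0 ≤ (negImResolvent ((E : ℂ) + ε * Complex.I) M i i).re := by
  rw [hM.negImResolvent_diag E hε.ne', Complex.ofReal_re]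
  exact Finset.sum_nonneg fun k _ => mul_nonneg (lorentzian_nonneg hε.le _) (sq_nonneg _)

lemma Matrix.IsHermitian.negImResolvent_diag_re_le {M : Matrix ι ι ℂ} (hM : M.IsHermitian)
    (E : ℝ) {ε : ℝ} (hε : 0 < ε) (i : ι) :
    (negImResolvent ((E : ℂ) + ε * Complex.I) M i i).re ≤ ε⁻¹ := by
  rw [hM.negImResolvent_diag E hε.ne', Complex.ofReal_re]
  calc _ ≤ ∑ k, ε⁻¹ * ‖(hM.eigenvectorUnitary : Matrix ι ι ℂ) i k‖ ^ 2 :=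
        Finset.sum_le_sum fun k _ =>
          mul_le_mul_of_nonneg_right (lorentzian_le_inv hε _) (sq_nonneg _)
    _ = ε⁻¹ := by rw [← Finset.mul_sum, hM.sum_norm_sq_eigenvectorUnitary_row, mul_one]

lemma Matrix.IsHermitian.integral_negImResolvent_diag {M : Matrix ι ι ℂ} (hM : M.IsHermitian)
    (y κ : ℝ) {ε : ℝ} (hε : 0 < ε) (i : ι) :
    ∫ x, (negImResolvent (((y - κ * x : ℝ) : ℂ) + ε * Complex.I) M i i).re ∂(gaussianReal 0 1) =
      ∑ k, (∫ x, lorentzian ε (y - hM.eigenvalues k - κ * x) ∂(gaussianReal 0 1)) *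
        ‖(hM.eigenvectorUnitary : Matrix ι ι ℂ) i k‖ ^ 2 := by
  simp only [hM.negImResolvent_diag _ hε.ne', Complex.ofReal_re]
  have h : ∀ x k, y - κ * x - hM.eigenvalues k = y - hM.eigenvalues k - κ * x := fun x k => by ring
  simp only [h]
  rw [integral_finsetSum _ fun k _ =>
    (integrable_lorentzian _ hε (by fun_prop)).mul_const _]
  simp only [integral_mul_const]

lemma Matrix.IsHermitian.integral_negImResolvent_diag_le {M : Matrix ι ι ℂ} (hM : M.IsHermitian)
    (y : ℝ) {κ : ℝ} (hκ : 0 < κ) {ε : ℝ} (hε : 0 < ε) (i : ι) :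
    ∫ x, (negImResolvent (((y - κ * x : ℝ) : ℂ) + ε * Complex.I) M i i).re ∂(gaussianReal 0 1) ≤
      Real.pi / κ := by
  rw [hM.integral_negImResolvent_diag y κ hε]
  calc _ ≤ ∑ k, Real.pi / κ * ‖(hM.eigenvectorUnitary : Matrix ι ι ℂ) i k‖ ^ 2 :=
        Finset.sum_le_sum fun k _ =>
          mul_le_mul_of_nonneg_right (integral_lorentzian_gaussianReal_le hε hκ _) (sq_nonneg _)
    _ = _ := by rw [← Finset.mul_sum, hM.sum_norm_sq_eigenvectorUnitary_row, mul_one]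

lemma Matrix.IsHermitian.tendsto_integral_negImResolvent_diag {M : Matrix ι ι ℂ}
    (hM : M.IsHermitian) (y : ℝ) {κ : ℝ} (hκ : 0 < κ) (i : ι) :
    ∃ ℓ : ℝ, Tendsto (fun ε : ℝ =>
      ∫ x, (negImResolvent (((y - κ * x : ℝ) : ℂ) + ε * Complex.I) M i i).re ∂(gaussianReal 0 1))
        (𝓝[>] 0) (𝓝 ℓ) := by
  choose ℓ hℓ using fun k =>
    tendsto_integral_lorentzian_gaussianReal hκ (y - hM.eigenvalues k)
  refine ⟨_, (tendsto_finsetSum Finset.univ fun k _ =>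
    (hℓ k).mul_const (‖(hM.eigenvectorUnitary : Matrix ι ι ℂ) i k‖ ^ 2)).congr' ?_⟩
  filter_upwards [self_mem_nhdsWithin] with ε hε
  rw [hM.integral_negImResolvent_diag y κ hε]

lemma norm_negImResolvent_diag_re_le (hL : ∀ w, (L w).IsHermitian) (E : ℝ) {ε : ℝ}
    (hε : 0 < ε) (i : ι) (w : V) :
    ‖(negImResolvent ((E : ℂ) + ε * Complex.I) (L w) i i).re‖ ≤ ε⁻¹ := by
  rw [Real.norm_of_nonneg ((hL w).negImResolvent_diag_re_nonneg E hε i)]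
  exact (hL w).negImResolvent_diag_re_le E hε i

/-- The part of the local trace of the imaginary part of the resolvent which is not controlled by
its Hilbert-Schmidt norm. -/
def traceExcess (B : Finset ι) (z : ℂ) (M : Matrix ι ι ℂ) : ℝ :=
  max (∑ i ∈ B, (negImResolvent z M i i).re - √(∑ i ∈ B, ∑ j ∈ B, ‖negImResolvent z M i j‖ ^ 2)) 0

lemma traceExcess_nonneg (B : Finset ι) (z : ℂ) (M : Matrix ι ι ℂ) :
    0 ≤ traceExcess B z M :=
  le_max_right _ _

lemma Matrix.IsHermitian.traceExcess_le {M : Matrix ι ι ℂ} (hM : M.IsHermitian) (B : Finset ι)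
    (E : ℝ) {ε : ℝ} (hε : 0 < ε) : traceExcess B ((E : ℂ) + ε * Complex.I) M ≤
      ∑ i ∈ B, (negImResolvent ((E : ℂ) + ε * Complex.I) M i i).re := by
  refine max_le (sub_le_self _ (Real.sqrt_nonneg _)) ?_
  exact Finset.sum_nonneg fun i _ => hM.negImResolvent_diag_re_nonneg E hε i

lemma norm_traceExcess_le (hL : ∀ w, (L w).IsHermitian) (B : Finset ι) (E : ℝ) {ε : ℝ}
    (hε : 0 < ε) (w : V) : ‖traceExcess B ((E : ℂ) + ε * Complex.I) (L w)‖ ≤ B.card * ε⁻¹ := by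
  rw [Real.norm_of_nonneg (traceExcess_nonneg _ _ _), ← nsmul_eq_mul]
  exact ((hL w).traceExcess_le B E hε).trans
    (Finset.sum_le_card_nsmul _ _ _ fun i _ => (hL w).negImResolvent_diag_re_le E hε i)

variable [FiniteDimensional ℝ V]

lemma continuous_negImResolvent_map (hL : ∀ w, (L w).IsHermitian) (E : ℝ) {ε : ℝ} (hε : 0 < ε) :
    Continuous fun w => negImResolvent ((E : ℂ) + ε * Complex.I) (L w) :=
  continuous_negImResolvent L.continuous_of_finiteDimensional hL continuous_const
    fun _ => by simpa using hε.ne'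

lemma continuous_hilbertSchmidt_negImResolvent (hL : ∀ w, (L w).IsHermitian) (B : Finset ι) (E : ℝ)
    {ε : ℝ} (hε : 0 < ε) : Continuous fun w => √(∑ i ∈ B, ∑ j ∈ B,
      ‖negImResolvent ((E : ℂ) + ε * Complex.I) (L w) i j‖ ^ 2) :=
  (continuous_finsetSum _ fun i _ => continuous_finsetSum _ fun j _ =>
    (((continuous_negImResolvent_map hL E hε).matrix_elem i j).norm.pow 2)).sqrt

lemma continuous_negImResolvent_diag_re (hL : ∀ w, (L w).IsHermitian) (E : ℝ) {ε : ℝ}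
    (hε : 0 < ε) (i : ι) :
    Continuous fun w => (negImResolvent ((E : ℂ) + ε * Complex.I) (L w) i i).re :=
  Complex.continuous_re.comp ((continuous_negImResolvent_map hL E hε).matrix_elem i i)

lemma continuous_traceExcess (hL : ∀ w, (L w).IsHermitian) (B : Finset ι) (E : ℝ) {ε : ℝ}
    (hε : 0 < ε) : Continuous fun w => traceExcess B ((E : ℂ) + ε * Complex.I) (L w) :=
  ((continuous_finsetSum _ fun i _ => continuous_negImResolvent_diag_re hL E hε i).sub
    (continuous_hilbertSchmidt_negImResolvent hL B E hε)).max continuous_const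

variable [MeasurableSpace V] [BorelSpace V]

lemma integral_stdGaussian_eq_integral_resample {e : V} (he : ‖e‖ = 1) {f : V → ℝ}
    (hf : Continuous f) {C : ℝ} (hC : ∀ w, ‖f w‖ ≤ C) :
    ∫ w, f w ∂(stdGaussian V) =
      ∫ w, ∫ x, f (w + (x - inner ℝ e w) • e) ∂(gaussianReal 0 1) ∂(stdGaussian V) := by
  have hp := stdGaussian_prod_map_resample he
  conv_lhs => rw [← hp.map_eq]
  rw [integral_map hp.measurable.aemeasurable hf.aestronglyMeasurable]
  refine integral_prod _ ?_
  exact Integrable.of_bound (C := C) (hf.measurable.comp hp.measurable).aestronglyMeasurable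
    (ae_of_all _ fun p => hC _)

lemma aestronglyMeasurable_integral_resample {e : V} (he : ‖e‖ = 1) {f : V → ℝ}
    (hf : Continuous f) :
    AEStronglyMeasurable (fun w => ∫ x, f (w + (x - inner ℝ e w) • e) ∂(gaussianReal 0 1))
      (stdGaussian V) := by
  have hp := stdGaussian_prod_map_resample he
  exact (AEStronglyMeasurable.integral_prod_right'
    (f := fun p : V × ℝ => f (p.1 + (p.2 - inner ℝ e p.1) • e))
    (hf.measurable.comp hp.measurable).aestronglyMeasurable)

/-- The averaged density of states exists. -/
lemma exists_tendsto_integral_negImResolvent (hL : ∀ w, (L w).IsHermitian)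
    (hsurj : ∀ M : Matrix ι ι ℂ, M.IsHermitian → ∃ w, L w = M) (E : ℝ) (i : ι) :
    ∃ ρ : ℝ, Tendsto (fun ε : ℝ =>
      ∫ w, (negImResolvent ((E : ℂ) + ε * Complex.I) (L w) i i).re ∂(stdGaussian V))
        (𝓝[>] 0) (𝓝 ρ) := by
  have : Nonempty ι := ⟨i⟩
  obtain ⟨e, κ, he, hκ, hLe⟩ := exists_unit_map_eq_smul_one hsurj
  choose ℓ hℓ using fun w =>
    (hL w).tendsto_integral_negImResolvent_diag (E + κ * inner ℝ e w) hκ i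
  refine ⟨∫ w, ℓ w ∂(stdGaussian V), ?_⟩
  have h : Tendsto (fun ε : ℝ => ∫ w, ∫ x, (negImResolvent ((E : ℂ) + ε * Complex.I)
      (L (w + (x - inner ℝ e w) • e)) i i).re ∂(gaussianReal 0 1) ∂(stdGaussian V))
        (𝓝[>] 0) (𝓝 (∫ w, ℓ w ∂(stdGaussian V))) := by
    refine tendsto_integral_filter_of_dominated_convergence (fun _ => Real.pi / κ) ?_ ?_
      (integrable_const _) ?_
    · filter_upwards [self_mem_nhdsWithin] with ε hε
      exact aestronglyMeasurable_integral_resample he (continuous_negImResolvent_diag_re hL E hε i)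
    · filter_upwards [self_mem_nhdsWithin] with ε hε
      refine ae_of_all _ fun w => ?_
      simp only [negImResolvent_resample hLe]
      rw [Real.norm_of_nonneg
        (integral_nonneg fun x => (hL w).negImResolvent_diag_re_nonneg _ hε i)]
      exact (hL w).integral_negImResolvent_diag_le _ hκ hε i
    · refine ae_of_all _ fun w => ?_
      simp only [negImResolvent_resample hLe]
      exact hℓ w
  refine h.congr' ?_
  filter_upwards [self_mem_nhdsWithin] with ε hε
  exact (integral_stdGaussian_eq_integral_resample he (continuous_negImResolvent_diag_re hL E hε i)
    (norm_negImResolvent_diag_re_le hL E hε i)).symm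

lemma integrable_negImResolvent_diag_re (hL : ∀ w, (L w).IsHermitian) (E : ℝ) {ε : ℝ}
    (hε : 0 < ε) (i : ι) :
    Integrable (fun w => (negImResolvent ((E : ℂ) + ε * Complex.I) (L w) i i).re)
      (stdGaussian V) :=
  Integrable.of_bound (C := ε⁻¹)
    (continuous_negImResolvent_diag_re hL E hε i).aestronglyMeasurable
    (ae_of_all _ fun w => norm_negImResolvent_diag_re_le hL E hε i w)

lemma tendsto_integral_traceExcess [Nonempty ι] (hL : ∀ w, (L w).IsHermitian)
    (hsurj : ∀ M : Matrix ι ι ℂ, M.IsHermitian → ∃ w, L w = M) (B : Finset ι) (E : ℝ) :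
    Tendsto (fun ε : ℝ => ∫ w, traceExcess B ((E : ℂ) + ε * Complex.I) (L w) ∂(stdGaussian V))
      (𝓝[>] 0) (𝓝 0) := by
  obtain ⟨e, κ, he, hκ, hLe⟩ := exists_unit_map_eq_smul_one hsurj
  have h : Tendsto (fun ε : ℝ => ∫ w, ∫ x, traceExcess B ((E : ℂ) + ε * Complex.I)
      (L (w + (x - inner ℝ e w) • e)) ∂(gaussianReal 0 1) ∂(stdGaussian V))
        (𝓝[>] 0) (𝓝 (∫ _w : V, (0 : ℝ) ∂(stdGaussian V))) := by
    have hres : ∀ (ε : ℝ) w (x : ℝ), traceExcess B ((E : ℂ) + ε * Complex.I)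
        (L (w + (x - inner ℝ e w) • e)) =
        traceExcess B (((E + κ * inner ℝ e w - κ * x : ℝ) : ℂ) + ε * Complex.I) (L w) := by
      intro ε w x
      simp only [traceExcess, negImResolvent_resample hLe]
    have h_int : ∀ {ε : ℝ} (_ : 0 < ε) (w : V) (i : ι), Integrable (fun x : ℝ =>
        (negImResolvent (((E + κ * inner ℝ e w - κ * x : ℝ) : ℂ) + ε * Complex.I) (L w) i i).re)
        (gaussianReal 0 1) := by
      intro ε hε w i
      simp only [(hL w).negImResolvent_diag _ hε.ne', Complex.ofReal_re]
      exact integrable_finsetSum _ fun k _ =>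
        (integrable_lorentzian _ hε (by fun_prop)).mul_const _
    refine tendsto_integral_filter_of_dominated_convergence (fun _ => B.card * (Real.pi / κ)) ?_ ?_
      (integrable_const _) ?_
    · filter_upwards [self_mem_nhdsWithin] with ε hε
      exact aestronglyMeasurable_integral_resample he (continuous_traceExcess hL B E hε)
    · filter_upwards [self_mem_nhdsWithin] with ε hε
      refine ae_of_all _ fun w => ?_
      simp only [hres]
      rw [Real.norm_of_nonneg (integral_nonneg fun x => traceExcess_nonneg _ _ _)]
      calc _ ≤ ∫ x, ∑ i ∈ B, (negImResolvent
              (((E + κ * inner ℝ e w - κ * x : ℝ) : ℂ) + ε * Complex.I) (L w) i i).re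
              ∂(gaussianReal 0 1) :=
            integral_mono_of_nonneg (ae_of_all _ fun x => traceExcess_nonneg _ _ _)
              (integrable_finsetSum _ fun i _ => h_int hε w i)
              (ae_of_all _ fun x => (hL w).traceExcess_le B _ hε)
        _ ≤ _ := by
            rw [integral_finsetSum _ fun i _ => h_int hε w i, ← nsmul_eq_mul]
            exact Finset.sum_le_card_nsmul _ _ _ fun i _ =>
              (hL w).integral_negImResolvent_diag_le _ hκ hε i
    · filter_upwards [ae_injective_eigenvalues hL hsurj] with w hw
      simp only [hres]
      set C := ∑ k, ∑ l, 4 / ((hL w).eigenvalues k - (hL w).eigenvalues l) ^ 2 with hC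
      have hC0 : 0 ≤ C := by positivity
      have hlim : Tendsto (fun ε : ℝ => C * ε) (𝓝[>] 0) (𝓝 0) := by
        have hc : Continuous fun ε : ℝ => C * ε := by fun_prop
        have := hc.tendsto 0
        rw [mul_zero] at this
        exact this.mono_left nhdsWithin_le_nhds
      refine squeeze_zero' (Eventually.of_forall fun ε =>
        integral_nonneg fun x => traceExcess_nonneg _ _ _) ?_ hlim
      filter_upwards [self_mem_nhdsWithin] with ε hε
      have hε0 : (0 : ℝ) < ε := hε
      calc _ ≤ ∫ _x : ℝ, C * ε ∂(gaussianReal 0 1) :=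
            integral_mono_of_nonneg (ae_of_all _ fun x => traceExcess_nonneg _ _ _)
              (integrable_const _) (ae_of_all _ fun x =>
                max_le ((hL w).trace_sub_hilbertSchmidt_le hw B _ hε) (by positivity))
        _ = C * ε := by simp
  rw [integral_zero] at h
  refine h.congr' ?_
  filter_upwards [self_mem_nhdsWithin] with ε hε
  exact (integral_stdGaussian_eq_integral_resample he (continuous_traceExcess hL B E hε)
    (norm_traceExcess_le hL B E hε)).symm

/-- The density of states is bounded in terms of the variances of the entries of the random matrix
inside a box. -/
lemma sum_densityOfStates_le (hL : ∀ w, (L w).IsHermitian)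
    (hsurj : ∀ M : Matrix ι ι ℂ, M.IsHermitian → ∃ w, L w = M) {B : Finset ι} {s : ℝ}
    (hs : ∀ w, (∀ i j, L w i j ≠ 0 → i ∈ B ∧ j ∈ B) → s * ‖w‖ ^ 2 ≤ ∑ i, ∑ j, ‖L w i j‖ ^ 2)
    (hs0 : 0 < s) (E : ℝ) {ρ : ι → ℝ} (hρ : ∀ i, Tendsto (fun ε : ℝ =>
      ∫ w, (negImResolvent ((E : ℂ) + ε * Complex.I) (L w) i i).re ∂(stdGaussian V))
        (𝓝[>] 0) (𝓝 (ρ i))) :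
    ∑ i ∈ B, ρ i ≤ 8 * Real.pi / gaussAbs ^ 2 * √B.card / √s := by
  have h0 := gaussAbs_pos
  set K := 8 * Real.pi / gaussAbs ^ 2 * √B.card / √s with hK
  have hK0 : 0 ≤ K := by positivity
  rcases isEmpty_or_nonempty ι with hι | hι
  · rw [Finset.eq_empty_of_isEmpty B, Finset.sum_empty]
    exact hK0
  have h1 := tendsto_finsetSum B fun i _ => hρ i
  have h2 := (tendsto_integral_traceExcess (V := V) hL hsurj B E).const_add K
  rw [add_zero] at h2
  refine le_of_tendsto_of_tendsto h1 h2 ?_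
  filter_upwards [self_mem_nhdsWithin] with ε hε
  have hε0 : (0 : ℝ) < ε := hε
  have hHS := lintegral_hilbertSchmidt_negImResolvent_le (B := B) hL hsurj hs hs0
    (z := (E : ℂ) + ε * Complex.I) (by simpa using hε0.ne')
  have hcont := continuous_hilbertSchmidt_negImResolvent hL B E hε0
  have h_int : Integrable (fun w => √(∑ i ∈ B, ∑ j ∈ B,
      ‖negImResolvent ((E : ℂ) + ε * Complex.I) (L w) i j‖ ^ 2)) (stdGaussian V) := by
    refine ⟨hcont.aestronglyMeasurable, ?_⟩
    rw [hasFiniteIntegral_iff_ofReal (ae_of_all _ fun w => Real.sqrt_nonneg _)]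
    exact hHS.trans_lt ENNReal.ofReal_lt_top
  have h_int2 : Integrable (fun w => traceExcess B ((E : ℂ) + ε * Complex.I) (L w))
      (stdGaussian V) :=
    Integrable.of_bound (C := B.card * ε⁻¹) (continuous_traceExcess hL B E hε0).aestronglyMeasurable
      (ae_of_all _ (norm_traceExcess_le hL B E hε0))
  have hHS2 : ∫ w, √(∑ i ∈ B, ∑ j ∈ B,
      ‖negImResolvent ((E : ℂ) + ε * Complex.I) (L w) i j‖ ^ 2) ∂(stdGaussian V) ≤ K := by
    rw [integral_eq_lintegral_of_nonneg_ae (ae_of_all _ fun w => Real.sqrt_nonneg _)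
      hcont.aestronglyMeasurable]
    exact ENNReal.toReal_le_of_le_ofReal hK0 hHS
  rw [← integral_finsetSum _ fun i _ => integrable_negImResolvent_diag_re hL E hε0 i]
  calc _ ≤ ∫ w, (√(∑ i ∈ B, ∑ j ∈ B,
          ‖negImResolvent ((E : ℂ) + ε * Complex.I) (L w) i j‖ ^ 2) +
          traceExcess B ((E : ℂ) + ε * Complex.I) (L w)) ∂(stdGaussian V) := by
        refine integral_mono
          (integrable_finsetSum _ fun i _ => integrable_negImResolvent_diag_re hL E hε0 i)
          (h_int.add h_int2) fun w => ?_
        have := le_max_left (∑ i ∈ B, (negImResolvent ((E : ℂ) + ε * Complex.I) (L w) i i).re -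
          √(∑ i ∈ B, ∑ j ∈ B, ‖negImResolvent ((E : ℂ) + ε * Complex.I) (L w) i j‖ ^ 2)) 0
        simp only [traceExcess]
        linarith
    _ ≤ _ := by
        rw [integral_add h_int h_int2]
        linarith

end DensityOfStates

section TranslationInvariance

variable {ι : Type*} [Fintype ι] {V : Type*} [NormedAddCommGroup V] [InnerProductSpace ℝ V]
  {L : V →ₗ[ℝ] Matrix ι ι ℂ}

lemma injective_of_norm_sq_eq {J : ι → ι → ℝ}
    (hnorm : ∀ w, ‖w‖ ^ 2 = ∑ i, ∑ j, ‖L w i j‖ ^ 2 / J i j) : Function.Injective L := by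
  rw [injective_iff_map_eq_zero]
  intro w hw
  have h := hnorm w
  rw [hw] at h
  simpa using h

lemma exists_linearIsometry_submatrix (hL : ∀ w, (L w).IsHermitian)
    (hsurj : ∀ M : Matrix ι ι ℂ, M.IsHermitian → ∃ w, L w = M) {J : ι → ι → ℝ}
    (hnorm : ∀ w, ‖w‖ ^ 2 = ∑ i, ∑ j, ‖L w i j‖ ^ 2 / J i j) (σ : ι ≃ ι)
    (hσ : ∀ i j, J (σ i) (σ j) = J i j) :
    ∃ S : V →ₗᵢ[ℝ] V, ∀ w, L (S w) = (L w).submatrix σ σ := by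
  have hinj := injective_of_norm_sq_eq hnorm
  choose S hS using fun w => hsurj ((L w).submatrix σ σ) ((hL w).submatrix σ)
  refine ⟨⟨⟨⟨S, fun v w => hinj ?_⟩, fun c w => hinj ?_⟩, fun w => ?_⟩, hS⟩
  · simp only [hS, map_add, Matrix.submatrix_add, Pi.add_apply]
  · simp only [hS, map_smul, Matrix.submatrix_smul, Pi.smul_apply, RingHom.id_apply]
  · have h : ‖S w‖ ^ 2 = ‖w‖ ^ 2 := by
      rw [hnorm, hnorm w]
      simp only [hS, Matrix.submatrix_apply]
      rw [← Equiv.sum_comp σ (fun i => ∑ j, ‖L w i j‖ ^ 2 / J i j)]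
      refine Finset.sum_congr rfl fun i _ => ?_
      rw [← Equiv.sum_comp σ (fun j => ‖L w (σ i) j‖ ^ 2 / J (σ i) j)]
      simp only [hσ]
    exact (pow_left_inj₀ (norm_nonneg _) (norm_nonneg _) two_ne_zero).1 h

variable [DecidableEq ι]

lemma negImResolvent_submatrix (z : ℂ) (M : Matrix ι ι ℂ) (σ : ι ≃ ι) :
    negImResolvent z (M.submatrix σ σ) = (negImResolvent z M).submatrix σ σ := by
  have h : z • (1 : Matrix ι ι ℂ) - M.submatrix σ σ = (z • 1 - M).submatrix σ σ := by
    ext i j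
    simp [Matrix.one_apply]
  unfold negImResolvent
  rw [h, Matrix.inv_submatrix_equiv]
  rfl

variable [FiniteDimensional ℝ V] [MeasurableSpace V] [BorelSpace V]

lemma integral_negImResolvent_equiv (hL : ∀ w, (L w).IsHermitian)
    (hsurj : ∀ M : Matrix ι ι ℂ, M.IsHermitian → ∃ w, L w = M) {J : ι → ι → ℝ}
    (hnorm : ∀ w, ‖w‖ ^ 2 = ∑ i, ∑ j, ‖L w i j‖ ^ 2 / J i j) (σ : ι ≃ ι)
    (hσ : ∀ i j, J (σ i) (σ j) = J i j) (E : ℝ) {ε : ℝ} (hε : 0 < ε) (i : ι) :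
    ∫ w, (negImResolvent ((E : ℂ) + ε * Complex.I) (L w) (σ i) (σ i)).re ∂(stdGaussian V) =
      ∫ w, (negImResolvent ((E : ℂ) + ε * Complex.I) (L w) i i).re ∂(stdGaussian V) := by
  obtain ⟨S, hS⟩ := exists_linearIsometry_submatrix hL hsurj hnorm σ hσ
  have hmap := stdGaussian_map (S.toLinearIsometryEquiv rfl)
  conv_rhs => rw [← hmap]
  rw [integral_map (by fun_prop) (continuous_negImResolvent_diag_re hL E hε i).aestronglyMeasurable]
  simp [hS, negImResolvent_submatrix]

/-- Density of states bound for a translation invariant Gaussian Hermitian random matrix whose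
variances are bounded below by `s` on a set `B` of sites. -/
lemma exists_densityOfStates_le [AddGroup ι] (hL : ∀ w, (L w).IsHermitian)
    (hsurj : ∀ M : Matrix ι ι ℂ, M.IsHermitian → ∃ w, L w = M) {J : ι → ι → ℝ}
    (hJ : ∀ i j, 0 < J i j) (hJt : ∀ a i j, J (i + a) (j + a) = J i j)
    (hnorm : ∀ w, ‖w‖ ^ 2 = ∑ i, ∑ j, ‖L w i j‖ ^ 2 / J i j) {B : Finset ι} (hB : B.Nonempty)
    {s : ℝ} (hs0 : 0 < s) (hs : ∀ i ∈ B, ∀ j ∈ B, s ≤ J i j) (E : ℝ) :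
    ∃ ρ : ℝ, 0 ≤ ρ ∧ ρ ≤ 8 * Real.pi / gaussAbs ^ 2 / √(B.card * s) ∧
      Tendsto (fun ε : ℝ =>
        ∫ w, (negImResolvent ((E : ℂ) + ε * Complex.I) (L w) 0 0).re ∂(stdGaussian V))
        (𝓝[>] 0) (𝓝 ρ) := by
  obtain ⟨ρ, hρ⟩ := exists_tendsto_integral_negImResolvent (V := V) hL hsurj E 0
  have hρi : ∀ i : ι, Tendsto (fun ε : ℝ =>
      ∫ w, (negImResolvent ((E : ℂ) + ε * Complex.I) (L w) i i).re ∂(stdGaussian V))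
        (𝓝[>] 0) (𝓝 ρ) := by
    intro i
    refine hρ.congr' ?_
    filter_upwards [self_mem_nhdsWithin] with ε hε
    have h := integral_negImResolvent_equiv hL hsurj hnorm (Equiv.addRight i)
      (fun j k => hJt i j k) E hε 0
    simpa using h.symm
  have hsB : ∀ w, (∀ i j, L w i j ≠ 0 → i ∈ B ∧ j ∈ B) →
      s * ‖w‖ ^ 2 ≤ ∑ i, ∑ j, ‖L w i j‖ ^ 2 := by
    intro w hw
    rw [hnorm, Finset.mul_sum]
    refine Finset.sum_le_sum fun i _ => ?_
    rw [Finset.mul_sum]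
    refine Finset.sum_le_sum fun j _ => ?_
    by_cases h : L w i j = 0
    · simp [h]
    · obtain ⟨hi, hj⟩ := hw i j h
      rw [mul_div_assoc', div_le_iff₀ (hJ i j), mul_comm]
      exact mul_le_mul_of_nonneg_left (hs i hi j hj) (sq_nonneg _)
  have hsum := sum_densityOfStates_le (V := V) hL hsurj hsB hs0 E hρi
  refine ⟨ρ, ?_, ?_, hρ⟩
  · refine ge_of_tendsto hρ ?_
    filter_upwards [self_mem_nhdsWithin] with ε hε
    exact integral_nonneg fun w => (hL w).negImResolvent_diag_re_nonneg E hε 0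
  · have hc : (0 : ℝ) < B.card := by exact_mod_cast hB.card_pos
    have hc2 : 0 < √(B.card : ℝ) := Real.sqrt_pos.2 hc
    have hss : 0 < √s := Real.sqrt_pos.2 hs0
    have hg := gaussAbs_pos
    rw [Finset.sum_const, nsmul_eq_mul] at hsum
    rw [Real.sqrt_mul hc.le, ← div_div, le_div_iff₀ hss, le_div_iff₀ hc2]
    rw [le_div_iff₀ hss] at hsum
    nth_rewrite 1 [← Real.mul_self_sqrt hc.le] at hsum
    refine le_of_mul_le_mul_right ?_ hc2
    calc _ = √(B.card : ℝ) * √(B.card : ℝ) * ρ * √s := by ring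
      _ ≤ _ := hsum

end TranslationInvariance

section MaximumPrinciple

variable {L : Fin 3 → ℕ}

/-- The operator `κ - W²Δ` on functions on the torus. -/
def massiveLaplacian (W : ℕ) (κ : ℝ) (f : Torus L → ℝ) (x : Torus L) : ℝ :=
  κ * f x + (W : ℝ) ^ 2 *
    (6 * f x - ∑ i : Fin 3, (f (x + unitVec L i) + f (x - unitVec L i)))

variable [∀ i, NeZero (L i)]

lemma lap_mulVec (f : Torus L → ℝ) (x : Torus L) :
    ∑ z, lap L x z * f z =
      ∑ i : Fin 3, (f (x + unitVec L i) + f (x - unitVec L i)) - 6 * f x := by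
  simp only [lap, Matrix.of_apply, sub_mul, Finset.sum_sub_distrib, Finset.sum_mul, add_mul]
  rw [Finset.sum_comm]
  simp [Finset.sum_add_distrib]

lemma massiveLaplacian_eq_mul (W : ℕ) (κ : ℝ) (M : Matrix (Torus L) (Torus L) ℝ)
    (x y : Torus L) :
    (((((W : ℝ) ^ 2) • (-lap L) + κ • 1) * M : Matrix (Torus L) (Torus L) ℝ)) x y =
      massiveLaplacian W κ (fun z => M z y) x := by
  rw [add_mul, smul_mul_assoc, smul_mul_assoc, one_mul, neg_mul]
  simp only [Matrix.add_apply, Matrix.smul_apply, Matrix.neg_apply, Matrix.mul_apply, smul_eq_mul,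
    lap_mulVec (fun z => M z y), massiveLaplacian]
  ring

lemma nonneg_of_massiveLaplacian_nonneg {W : ℕ} {κ : ℝ} (hκ : 0 < κ) {f : Torus L → ℝ}
    (hf : ∀ x, 0 ≤ massiveLaplacian W κ f x) (x : Torus L) : 0 ≤ f x := by
  obtain ⟨x₀, hx₀⟩ := Finite.exists_min f
  have h := hf x₀
  have h2 : 6 * f x₀ - ∑ i : Fin 3, (f (x₀ + unitVec L i) + f (x₀ - unitVec L i)) ≤ 0 := by
    rw [sub_nonpos]
    have : ∑ _i : Fin 3, (f x₀ + f x₀) ≤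
        ∑ i : Fin 3, (f (x₀ + unitVec L i) + f (x₀ - unitVec L i)) :=
      Finset.sum_le_sum fun i _ => add_le_add (hx₀ _) (hx₀ _)
    simp only [Finset.sum_const, Finset.card_univ, Fintype.card_fin, nsmul_eq_mul] at this
    push_cast at this
    linarith
  have h3 : 0 ≤ κ * f x₀ := by
    have := mul_nonpos_of_nonneg_of_nonpos (sq_nonneg (W : ℝ)) h2
    unfold massiveLaplacian at h
    linarith
  exact (nonneg_of_mul_nonneg_right h3 hκ).trans (hx₀ x)

lemma eq_zero_of_massiveLaplacian_nonneg {W : ℕ} (hW : 1 ≤ W) {κ : ℝ} (hκ : 0 < κ)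
    {f : Torus L → ℝ} (hf : ∀ x, 0 ≤ massiveLaplacian W κ f x) {x : Torus L} (hx : f x = 0)
    (y : Torus L) : f y = 0 := by
  have hpos := nonneg_of_massiveLaplacian_nonneg hκ hf
  have hstep : ∀ z, f z = 0 → ∀ i, f (z + unitVec L i) = 0 := by
    intro z hz i
    have h := hf z
    have hW2 : (0 : ℝ) < (W : ℝ) ^ 2 := by positivity
    simp only [massiveLaplacian, hz, mul_zero, zero_sub, zero_add, mul_neg] at h
    have h2 : ∑ i : Fin 3, (f (z + unitVec L i) + f (z - unitVec L i)) ≤ 0 := by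
      by_contra! hc
      have := mul_pos hW2 hc
      linarith
    have h3 : f (z + unitVec L i) + f (z - unitVec L i) ≤ 0 :=
      (Finset.single_le_sum (f := fun i => f (z + unitVec L i) + f (z - unitVec L i))
        (fun j _ => add_nonneg (hpos _) (hpos _)) (Finset.mem_univ i)).trans h2
    linarith [hpos (z + unitVec L i), hpos (z - unitVec L i)]
  have hsteps : ∀ (i : Fin 3) (n : ℕ) z, f z = 0 → f (z + n • unitVec L i) = 0 := by
    intro i n
    induction n with
    | zero => intro z hz; simpa using hz
    | succ n ih =>
      intro z hz
      rw [succ_nsmul, ← add_assoc]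
      exact hstep _ (ih z hz) i
  have h := hsteps 2 ((y - x) 2).val _ (hsteps 1 ((y - x) 1).val _
    (hsteps 0 ((y - x) 0).val _ hx))
  convert h using 2
  ext j
  have hval := ZMod.natCast_zmod_val ((y - x) j)
  fin_cases j <;> simp [unitVec, -ZMod.natCast_val] at hval ⊢ <;> simp [hval]

end MaximumPrinciple

section Fourier

variable {L : Fin 3 → ℕ} [∀ i, NeZero (L i)]

/-- The character of the torus with frequency `k`. -/
def torusChar (k x : Torus L) : ℂ := ∏ i, ZMod.stdAddChar (k i * x i)

/-- The eigenvalue of `-Δ` on the character of frequency `k`. -/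
def torusEigenvalue (k : Torus L) : ℝ := ∑ i, (2 - 2 * (ZMod.stdAddChar (k i)).re)

lemma torusChar_add (k x y : Torus L) : torusChar k (x + y) = torusChar k x * torusChar k y := by
  simp [torusChar, mul_add, AddChar.map_add_eq_mul, Finset.prod_mul_distrib]

@[simp] lemma torusChar_zero_right (k : Torus L) : torusChar k 0 = 1 := by simp [torusChar]

@[simp] lemma torusChar_zero_left (x : Torus L) : torusChar 0 x = 1 := by simp [torusChar]

lemma torusChar_neg (k x : Torus L) :
    torusChar k (-x) = (starRingEnd ℂ) (torusChar k x) := by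
  simp [torusChar, AddChar.map_neg_eq_conj]

lemma torusChar_unitVec (k : Torus L) (i : Fin 3) :
    torusChar k (unitVec L i) = ZMod.stdAddChar (k i) := by
  rw [torusChar, Finset.prod_eq_single i]
  · simp [unitVec]
  · intro j _ hj
    simp [unitVec, hj]
  · simp

lemma re_torusChar_add_add_sub (k x : Torus L) (i : Fin 3) :
    (torusChar k (x + unitVec L i)).re + (torusChar k (x - unitVec L i)).re =
      2 * (ZMod.stdAddChar (k i)).re * (torusChar k x).re := by
  rw [sub_eq_add_neg, torusChar_add, torusChar_add, torusChar_neg, torusChar_unitVec]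
  simp only [Complex.mul_re, Complex.conj_re, Complex.conj_im]
  ring

lemma stdAddChar_re_le_one {n : ℕ} [NeZero n] (j : ZMod n) : (ZMod.stdAddChar j).re ≤ 1 :=
  (Complex.re_le_norm _).trans (AddChar.norm_apply _ _).le

lemma torusEigenvalue_nonneg (k : Torus L) : 0 ≤ torusEigenvalue k :=
  Finset.sum_nonneg fun i _ => by linarith [stdAddChar_re_le_one (k i)]

@[simp] lemma torusEigenvalue_zero : torusEigenvalue (0 : Torus L) = 0 := by
  simp [torusEigenvalue]

lemma sum_torusChar (x : Torus L) :
    ∑ k, torusChar k x = if x = 0 then (Fintype.card (Torus L) : ℂ) else 0 := by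
  have h := Finset.prod_univ_sum (fun i => (Finset.univ : Finset (ZMod (L i))))
    (fun i (k : ZMod (L i)) => ZMod.stdAddChar (k * x i))
  rw [Fintype.piFinset_univ] at h
  unfold torusChar
  rw [← h]
  simp only [AddChar.sum_mulShift _ (ZMod.isPrimitive_stdAddChar _)]
  split_ifs with hx
  · subst hx
    simp [Fintype.card_pi]
  · obtain ⟨i, hi⟩ := Function.ne_iff.1 hx
    exact Finset.prod_eq_zero (Finset.mem_univ i) (by rw [if_neg (by simpa using hi), Nat.cast_zero])

/-- The convolution kernel of `(κ - W²Δ)⁻ᵐ`. -/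
def resolventKernel (W : ℕ) (κ : ℝ) (m : ℕ) (x : Torus L) : ℝ :=
  (∑ k, (torusChar k x).re / (κ + (W : ℝ) ^ 2 * torusEigenvalue k) ^ m) / Fintype.card (Torus L)

lemma resolventKernel_zero (W : ℕ) (κ : ℝ) (x : Torus L) :
    resolventKernel W κ 0 x = if x = 0 then 1 else 0 := by
  have h := congrArg Complex.re (sum_torusChar x)
  rw [Complex.re_sum] at h
  have hc : (Fintype.card (Torus L) : ℝ) ≠ 0 := Nat.cast_ne_zero.2 Fintype.card_ne_zero
  simp only [resolventKernel, pow_zero, div_one, h]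
  split_ifs
  · rw [Complex.natCast_re, div_self hc]
  · simp

lemma resolventKernel_neg (W : ℕ) (κ : ℝ) (m : ℕ) (x : Torus L) :
    resolventKernel W κ m (-x) = resolventKernel W κ m x := by
  simp [resolventKernel, torusChar_neg]

lemma massiveLaplacian_resolventKernel {W : ℕ} {κ : ℝ} (hκ : 0 < κ) (m : ℕ) (x : Torus L) :
    massiveLaplacian W κ (resolventKernel W κ (m + 1)) x = resolventKernel W κ m x := by
  have hden : ∀ k : Torus L, κ + (W : ℝ) ^ 2 * torusEigenvalue k ≠ 0 := fun k => by
    have := torusEigenvalue_nonneg k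
    positivity
  simp only [massiveLaplacian, resolventKernel, ← add_div, ← Finset.sum_add_distrib,
    re_torusChar_add_add_sub]
  rw [← Finset.sum_div, Finset.sum_comm, mul_div_assoc', mul_div_assoc', ← sub_div,
    mul_div_assoc', ← add_div, Finset.mul_sum, Finset.mul_sum, ← Finset.sum_sub_distrib,
    Finset.mul_sum, ← Finset.sum_add_distrib]
  congr 1
  refine Finset.sum_congr rfl fun k _ => ?_
  rw [← Finset.sum_div, ← Finset.sum_mul, ← Finset.mul_sum]
  have h : torusEigenvalue k = 6 - 2 * ∑ i, (ZMod.stdAddChar (k i)).re := by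
    rw [torusEigenvalue, Finset.sum_sub_distrib, ← Finset.mul_sum]
    norm_num
  have hd := hden k
  rw [show 2 * ∑ i, (ZMod.stdAddChar (k i)).re = 6 - torusEigenvalue k by rw [h]; ring]
  field_simp
  ring

end Fourier

section BandProfile

variable {L : Fin 3 → ℕ}

lemma massiveLaplacian_sub_right (W : ℕ) (κ : ℝ) (f : Torus L → ℝ) (x y : Torus L) :
    massiveLaplacian W κ (fun z => f (z - y)) x = massiveLaplacian W κ f (x - y) := by
  simp only [massiveLaplacian, add_sub_right_comm, sub_right_comm _ _ y]

lemma massiveLaplacian_add (W : ℕ) (κ : ℝ) (f g : Torus L → ℝ) (x : Torus L) :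
    massiveLaplacian W κ (f + g) x = massiveLaplacian W κ f x + massiveLaplacian W κ g x := by
  simp only [massiveLaplacian, Pi.add_apply, Finset.sum_add_distrib]
  ring

lemma massiveLaplacian_sub (W : ℕ) (κ : ℝ) (f g : Torus L → ℝ) (x : Torus L) :
    massiveLaplacian W κ (f - g) x = massiveLaplacian W κ f x - massiveLaplacian W κ g x := by
  simp only [massiveLaplacian, Pi.sub_apply, Finset.sum_add_distrib, Finset.sum_sub_distrib]
  ring

variable [∀ i, NeZero (L i)]

lemma resolventKernel_nonneg (W : ℕ) {κ : ℝ} (hκ : 0 < κ) (m : ℕ) (x : Torus L) :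
    0 ≤ resolventKernel W κ m x := by
  induction m generalizing x with
  | zero =>
    rw [resolventKernel_zero]
    split_ifs <;> norm_num
  | succ m ih =>
    refine nonneg_of_massiveLaplacian_nonneg (W := W) hκ (fun z => ?_) x
    rw [massiveLaplacian_resolventKernel hκ]
    exact ih z

lemma resolventKernel_one_pos {W : ℕ} (hW : 1 ≤ W) {κ : ℝ} (hκ : 0 < κ) (x : Torus L) :
    0 < resolventKernel W κ 1 x := by
  have hΔ : ∀ z : Torus L, massiveLaplacian W κ (resolventKernel W κ 1) z =
      resolventKernel W κ 0 z := massiveLaplacian_resolventKernel hκ 0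
  refine (resolventKernel_nonneg W hκ 1 x).lt_of_ne fun hx => ?_
  have h0 := eq_zero_of_massiveLaplacian_nonneg hW hκ
    (fun z => (hΔ z).symm ▸ resolventKernel_nonneg W hκ 0 z) hx.symm
  have h := hΔ 0
  rw [resolventKernel_zero, if_pos rfl] at h
  simp [massiveLaplacian, h0] at h

lemma Jmat_apply (W : ℕ) (x y : Torus L) : Jmat L W x y = resolventKernel W 1 1 (x - y) := by
  have h : (((W : ℝ) ^ 2) • (-lap L) + 1) *
      (Matrix.of fun x y : Torus L => resolventKernel W 1 1 (x - y)) = 1 := by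
    ext x y
    have := massiveLaplacian_eq_mul W 1
      (Matrix.of fun x y : Torus L => resolventKernel W 1 1 (x - y)) x y
    rw [one_smul] at this
    rw [this]
    simp only [Matrix.of_apply]
    rw [massiveLaplacian_sub_right, massiveLaplacian_resolventKernel one_pos,
      resolventKernel_zero, Matrix.one_apply]
    simp only [sub_eq_zero]
  rw [Jmat, Matrix.inv_eq_right_inv h, Matrix.of_apply]

lemma Jmat_pos {W : ℕ} (hW : 1 ≤ W) (x y : Torus L) : 0 < Jmat L W x y := by
  rw [Jmat_apply]
  exact resolventKernel_one_pos hW one_pos _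

lemma Jmat_comm (W : ℕ) (x y : Torus L) : Jmat L W x y = Jmat L W y x := by
  rw [Jmat_apply, Jmat_apply, ← resolventKernel_neg, neg_sub]

lemma Jmat_add_right (W : ℕ) (a x y : Torus L) : Jmat L W (x + a) (y + a) = Jmat L W x y := by
  rw [Jmat_apply, Jmat_apply, add_sub_add_right_eq_sub]

lemma massiveLaplacian_one_resolventKernel_two (W m : ℕ) (x : Torus L) :
    massiveLaplacian W 1 (resolventKernel W 2 (m + 1)) x =
      resolventKernel W 2 m x - resolventKernel W 2 (m + 1) x := by
  rw [← massiveLaplacian_resolventKernel two_pos m]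
  simp only [massiveLaplacian]
  ring

lemma resolventKernel_two_le_one (W : ℕ) (x : Torus L) :
    resolventKernel W 2 4 x ≤ resolventKernel W 1 1 x := by
  have h := nonneg_of_massiveLaplacian_nonneg (W := W) one_pos
    (f := resolventKernel W 1 1 - (resolventKernel W 2 1 + resolventKernel W 2 2 +
      resolventKernel W 2 3 + resolventKernel W 2 4 : Torus L → ℝ)) (fun z => by
        rw [massiveLaplacian_sub, massiveLaplacian_add, massiveLaplacian_add,
          massiveLaplacian_add, massiveLaplacian_resolventKernel one_pos,
          massiveLaplacian_one_resolventKernel_two, massiveLaplacian_one_resolventKernel_two,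
          massiveLaplacian_one_resolventKernel_two, massiveLaplacian_one_resolventKernel_two,
          resolventKernel_zero, resolventKernel_zero]
        linarith [resolventKernel_nonneg W two_pos 4 z]) x
  simp only [Pi.sub_apply, Pi.add_apply] at h
  linarith [resolventKernel_nonneg W two_pos 1 x, resolventKernel_nonneg W two_pos 2 x,
    resolventKernel_nonneg W two_pos 3 x]

lemma norm_one_sub_stdAddChar_sq {n : ℕ} [NeZero n] (j : ZMod n) :
    ‖1 - ZMod.stdAddChar j‖ ^ 2 = 2 - 2 * (ZMod.stdAddChar j).re := by
  have h := AddChar.norm_apply (ZMod.stdAddChar (N := n)) j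
  have h2 : (ZMod.stdAddChar j).re ^ 2 + (ZMod.stdAddChar j).im ^ 2 = 1 := by
    have := Complex.sq_norm (ZMod.stdAddChar j)
    rw [h, Complex.normSq_apply] at this
    linarith
  rw [Complex.sq_norm, Complex.normSq_apply]
  simp only [Complex.sub_re, Complex.sub_im, Complex.one_re, Complex.one_im]
  linarith

lemma norm_one_sub_mul_le {a b : ℂ} (ha : ‖a‖ = 1) : ‖1 - a * b‖ ≤ ‖1 - a‖ + ‖1 - b‖ := by
  calc ‖1 - a * b‖ = ‖(1 - a) + a * (1 - b)‖ := by ring_nf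
    _ ≤ ‖1 - a‖ + ‖a * (1 - b)‖ := norm_add_le _ _
    _ = _ := by rw [norm_mul, ha, one_mul]

lemma norm_one_sub_pow_le {a : ℂ} (ha : ‖a‖ = 1) (n : ℕ) : ‖1 - a ^ n‖ ≤ n * ‖1 - a‖ := by
  induction n with
  | zero => simp
  | succ n ih =>
    rw [pow_succ']
    refine (norm_one_sub_mul_le ha).trans ?_
    push_cast
    linarith

lemma norm_one_sub_stdAddChar_mul_le {n : ℕ} [NeZero n] (j : ZMod n) (d : ℤ) :
    ‖1 - ZMod.stdAddChar (j * (d : ZMod n))‖ ≤ |(d : ℝ)| * ‖1 - ZMod.stdAddChar j‖ := by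
  have h1 := AddChar.norm_apply (ZMod.stdAddChar (N := n)) j
  have hnat : ∀ m : ℕ, ‖1 - ZMod.stdAddChar (j * (m : ZMod n))‖ ≤ m * ‖1 - ZMod.stdAddChar j‖ := fun m => by
    rw [mul_comm, ← nsmul_eq_mul, AddChar.map_nsmul_eq_pow]
    exact norm_one_sub_pow_le h1 m
  obtain ⟨m, rfl | rfl⟩ := d.eq_nat_or_neg
  · simpa using hnat m
  · have hconj : ZMod.stdAddChar (j * ((-(m : ℤ) : ℤ) : ZMod n)) =
        (starRingEnd ℂ) (ZMod.stdAddChar (j * (m : ZMod n))) := by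
      rw [← AddChar.map_neg_eq_conj]
      simp
    have : 1 - (starRingEnd ℂ) (ZMod.stdAddChar (j * (m : ZMod n))) =
        (starRingEnd ℂ) (1 - ZMod.stdAddChar (j * (m : ZMod n))) := by simp
    rw [hconj, this, RCLike.norm_conj]
    simpa using hnat m

lemma one_sub_re_torusChar_le (k x : Torus L) {r : ℝ} (d : Fin 3 → ℤ) (hd : ∀ i, |(d i : ℝ)| ≤ r)
    (hx : ∀ i, x i = d i) :
    1 - (torusChar k x).re ≤ 3 / 2 * r ^ 2 * torusEigenvalue k := by
  set u : Fin 3 → ℝ := fun i => ‖1 - ZMod.stdAddChar (k i)‖ with hu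
  have hlam : torusEigenvalue k = u 0 ^ 2 + u 1 ^ 2 + u 2 ^ 2 := by
    simp only [hu, norm_one_sub_stdAddChar_sq, torusEigenvalue, Fin.sum_univ_three]
  have hz : ∀ i, ‖ZMod.stdAddChar (k i * x i)‖ = 1 := fun i => AddChar.norm_apply _ _
  have hi : ∀ i, ‖1 - ZMod.stdAddChar (k i * x i)‖ ≤ r * u i := fun i => by
    rw [hx i]
    exact (norm_one_sub_stdAddChar_mul_le _ _).trans
      (mul_le_mul_of_nonneg_right (hd i) (norm_nonneg _))
  have hn : ‖torusChar k x‖ = 1 := by simp [torusChar, hz]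
  have hle : ‖1 - torusChar k x‖ ≤ r * (u 0 + u 1 + u 2) := by
    rw [torusChar, Fin.prod_univ_three]
    have h1 := norm_one_sub_mul_le (b := ZMod.stdAddChar (k 2 * x 2))
      (a := ZMod.stdAddChar (k 0 * x 0) * ZMod.stdAddChar (k 1 * x 1)) (by simp [hz])
    have h2 := norm_one_sub_mul_le (b := ZMod.stdAddChar (k 1 * x 1)) (hz 0)
    linarith [hi 0, hi 1, hi 2]
  have hsq : ‖1 - torusChar k x‖ ^ 2 = 2 - 2 * (torusChar k x).re := by
    have := Complex.sq_norm (torusChar k x)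
    rw [hn, Complex.normSq_apply] at this
    rw [Complex.sq_norm, Complex.normSq_apply]
    simp only [Complex.sub_re, Complex.sub_im, Complex.one_re, Complex.one_im]
    linarith
  have hle2 := pow_le_pow_left₀ (norm_nonneg _) hle 2
  rw [hlam]
  nlinarith [mul_nonneg (sq_nonneg r) (sq_nonneg (u 0 - u 1)),
    mul_nonneg (sq_nonneg r) (sq_nonneg (u 0 - u 2)),
    mul_nonneg (sq_nonneg r) (sq_nonneg (u 1 - u 2))]

end BandProfile

section BandProfileLowerBound

lemma stdAddChar_re_natCast {n : ℕ} [NeZero n] (m : ℕ) :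
    2 - 2 * (ZMod.stdAddChar (m : ZMod n)).re = 4 * Real.sin (Real.pi * m / n) ^ 2 := by
  have h := ZMod.stdAddChar_coe (N := n) m
  have h2 : 2 * (Real.pi : ℂ) * Complex.I * ((m : ℤ) : ℂ) / n =
      ((2 * (Real.pi * m / n) : ℝ) : ℂ) * Complex.I := by
    push_cast
    ring
  rw [h2] at h
  rw [Int.cast_natCast] at h
  rw [h, Complex.exp_ofReal_mul_I_re, Real.cos_two_mul, Real.cos_sq']
  ring

lemma sixteen_mul_sq_le_sin_sq {n m : ℕ} (hn : 0 < n) (h : 2 * m ≤ n) :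
    16 * ((m : ℝ) / n) ^ 2 ≤ 4 * Real.sin (Real.pi * m / n) ^ 2 := by
  have hn' : (0 : ℝ) < n := by exact_mod_cast hn
  have h' : 2 * (m : ℝ) ≤ n := by exact_mod_cast h
  have hx : Real.pi * m / n ≤ Real.pi / 2 := by
    rw [div_le_div_iff₀ hn' two_pos]
    nlinarith [Real.pi_pos]
  have hs := Real.mul_le_sin (by positivity) hx
  have he : 2 / Real.pi * (Real.pi * m / n) = 2 * (m / n) := by
    have := Real.pi_ne_zero
    field_simp
  rw [he] at hs
  have := pow_le_pow_left₀ (by positivity) hs 2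
  nlinarith

lemma inv_one_add_sin_sq_le {n m : ℕ} {w : ℝ} (hw : 0 < w) (hm : 0 < m) (hmn : m < n) :
    1 / (1 + w ^ 2 * (4 * Real.sin (Real.pi * m / n) ^ 2)) ≤
      (n / w) ^ 2 / 16 * (((m : ℝ) ^ 2)⁻¹ + (((n - m : ℕ) : ℝ) ^ 2)⁻¹) := by
  have hn : 0 < n := hm.trans hmn
  have hn' : (0 : ℝ) < n := by exact_mod_cast hn
  have key : ∀ l : ℕ, 0 < l → 2 * l ≤ n →
      Real.sin (Real.pi * l / n) ^ 2 = Real.sin (Real.pi * m / n) ^ 2 →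
      1 / (1 + w ^ 2 * (4 * Real.sin (Real.pi * m / n) ^ 2)) ≤
        (n / w) ^ 2 / 16 * ((l : ℝ) ^ 2)⁻¹ := by
    intro l hl hln hsin
    have hl' : (0 : ℝ) < l := by exact_mod_cast hl
    rw [← hsin]
    calc 1 / (1 + w ^ 2 * (4 * Real.sin (Real.pi * l / n) ^ 2))
        ≤ 1 / (w ^ 2 * (16 * ((l : ℝ) / n) ^ 2)) := by
          refine one_div_le_one_div_of_le (by positivity) ?_
          have := mul_le_mul_of_nonneg_left (sixteen_mul_sq_le_sin_sq hn hln) (sq_nonneg w)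
          linarith
      _ = _ := by field_simp
  have hmn' : 0 < n - m := Nat.sub_pos_of_lt hmn
  rw [mul_add]
  rcases le_total (2 * m) n with h | h
  · exact (key m hm h rfl).trans (le_add_of_nonneg_right (by positivity))
  · refine (key (n - m) hmn' (by omega) ?_).trans (le_add_of_nonneg_left (by positivity))
    have he : Real.pi * ((n - m : ℕ) : ℝ) / n = Real.pi - Real.pi * m / n := by
      rw [Nat.cast_sub hmn.le]
      field_simp
    rw [he, Real.sin_pi_sub]

lemma sum_inv_one_add_stdAddChar_le {n : ℕ} [NeZero n] {w : ℝ} (hw : 0 < w) (hwn : w ≤ n) :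
    ∑ j : ZMod n, 1 / (1 + w ^ 2 * (2 - 2 * (ZMod.stdAddChar j).re)) ≤ 2 * (n / w) ^ 2 := by
  have hn : 0 < n := Nat.pos_of_neZero n
  have hval : ∀ j : ZMod n, 1 / (1 + w ^ 2 * (2 - 2 * (ZMod.stdAddChar j).re)) =
      1 / (1 + w ^ 2 * (4 * Real.sin (Real.pi * j.val / n) ^ 2)) := fun j => by
    rw [← stdAddChar_re_natCast, ZMod.natCast_zmod_val]
  simp only [hval]
  have hsum : ∀ f : ℕ → ℝ, ∑ j : ZMod n, f j.val = ∑ m ∈ Finset.range n, f m := fun f => by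
    refine Finset.sum_bij (fun j _ => j.val) (fun j _ => Finset.mem_range.2 (ZMod.val_lt j))
      (fun i _ j _ h => ZMod.val_injective n h) (fun m hm => ?_) fun _ _ => rfl
    exact ⟨m, Finset.mem_univ _, ZMod.val_cast_of_lt (Finset.mem_range.1 hm)⟩
  rw [hsum fun m => 1 / (1 + w ^ 2 * (4 * Real.sin (Real.pi * m / n) ^ 2)),
    Finset.range_eq_Ico, ← Finset.add_sum_Ioo_eq_sum_Ico hn]
  have hle : ∑ m ∈ Finset.Ioo 0 n, 1 / (1 + w ^ 2 * (4 * Real.sin (Real.pi * m / n) ^ 2)) ≤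
      (n / w) ^ 2 / 16 * (2 + 2) := by
    calc _ ≤ ∑ m ∈ Finset.Ioo 0 n,
          (n / w) ^ 2 / 16 * (((m : ℝ) ^ 2)⁻¹ + (((n - m : ℕ) : ℝ) ^ 2)⁻¹) :=
          Finset.sum_le_sum fun m hm =>
            inv_one_add_sin_sq_le hw (Finset.mem_Ioo.1 hm).1 (Finset.mem_Ioo.1 hm).2
      _ ≤ _ := by
        rw [← Finset.mul_sum, Finset.sum_add_distrib]
        have h1 := sum_Ioo_inv_sq_le (α := ℝ) 0 n
        have h2 : ∑ m ∈ Finset.Ioo 0 n, (((n - m : ℕ) : ℝ) ^ 2)⁻¹ =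
            ∑ m ∈ Finset.Ioo 0 n, ((m : ℝ) ^ 2)⁻¹ := by
          refine Finset.sum_nbij' (fun m => n - m) (fun m => n - m) ?_ ?_ ?_ ?_ fun _ _ => rfl
          all_goals
            intro m hm
            simp only [Finset.mem_Ioo] at *
            omega
        rw [h2]
        norm_num at h1
        gcongr
  have h1 : 1 ≤ (n / w) ^ 2 := one_le_pow₀ ((one_le_div hw).2 hwn)
  simp only [Nat.cast_zero, mul_zero, zero_div, Real.sin_zero]
  norm_num
  norm_num at hle
  linarith

variable {L : Fin 3 → ℕ} [∀ i, NeZero (L i)]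

lemma sum_inv_two_add_torusEigenvalue_le {W : ℕ} (hW : 1 ≤ W) (hWL : ∀ i, W ≤ L i) :
    ∑ k : Torus L, 1 / (2 + (W : ℝ) ^ 2 * torusEigenvalue k) ^ 3 ≤
      8 * ((Fintype.card (Torus L) : ℝ) / (W : ℝ) ^ 3) ^ 2 := by
  have hW0 : (0 : ℝ) < W := by exact_mod_cast hW
  set v : ∀ i, ZMod (L i) → ℝ := fun i j => (W : ℝ) ^ 2 * (2 - 2 * (ZMod.stdAddChar j).re) with hv
  have hv0 : ∀ i j, 0 ≤ v i j := fun i j =>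
    mul_nonneg (sq_nonneg _) (by linarith [stdAddChar_re_le_one j])
  have hprod := Finset.prod_univ_sum (fun i => (Finset.univ : Finset (ZMod (L i))))
    (fun i (j : ZMod (L i)) => 1 / (1 + v i j))
  rw [Fintype.piFinset_univ] at hprod
  calc ∑ k : Torus L, 1 / (2 + (W : ℝ) ^ 2 * torusEigenvalue k) ^ 3
      ≤ ∑ k : Torus L, ∏ i, 1 / (1 + v i (k i)) := by
        refine Finset.sum_le_sum fun k _ => ?_
        have he : (W : ℝ) ^ 2 * torusEigenvalue k = v 0 (k 0) + v 1 (k 1) + v 2 (k 2) := by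
          rw [torusEigenvalue, Finset.mul_sum, Fin.sum_univ_three]
        have h0 := hv0 0 (k 0)
        have h1 := hv0 1 (k 1)
        have h2 := hv0 2 (k 2)
        rw [he, Fin.prod_univ_three, div_mul_div_comm, div_mul_div_comm, one_mul, one_mul]
        refine one_div_le_one_div_of_le (by positivity) ?_
        rw [pow_three']
        gcongr <;> linarith
    _ = ∏ i, ∑ j : ZMod (L i), 1 / (1 + v i j) := hprod.symm
    _ ≤ ∏ i, 2 * ((L i : ℝ) / W) ^ 2 := by
        refine Finset.prod_le_prod (fun i _ => Finset.sum_nonneg fun j _ => ?_) fun i _ => ?_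
        · have := hv0 i j
          positivity
        · exact sum_inv_one_add_stdAddChar_le hW0 (by exact_mod_cast hWL i)
    _ = _ := by
        rw [Fintype.card_pi]
        simp only [ZMod.card, Fin.prod_univ_three]
        push_cast
        ring

lemma le_resolventKernel_two_four {W : ℕ} (hW : 1 ≤ W) (hWL : ∀ i, W ≤ L i) (x : Torus L)
    {r : ℝ} (d : Fin 3 → ℤ) (hd : ∀ i, |(d i : ℝ)| ≤ r) (hx : ∀ i, x i = d i)
    (hr : r * 20 * ((Fintype.card (Torus L) : ℝ) / (W : ℝ) ^ 3) ≤ W) :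
    1 / (32 * (Fintype.card (Torus L) : ℝ)) ≤ resolventKernel W 2 4 x := by
  have hW0 : (0 : ℝ) < W := by exact_mod_cast hW
  have hc : (0 : ℝ) < Fintype.card (Torus L) := Nat.cast_pos.2 Fintype.card_pos
  set N : ℝ := (Fintype.card (Torus L) : ℝ) / (W : ℝ) ^ 3 with hN
  have hN0 : 0 < N := by positivity
  have hr0 : 0 ≤ r := (abs_nonneg _).trans (hd 0)
  set a : Torus L → ℝ := fun k => 2 + (W : ℝ) ^ 2 * torusEigenvalue k with ha
  have hlam : ∀ k : Torus L, 0 ≤ torusEigenvalue k := torusEigenvalue_nonneg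
  have ha0 : ∀ k, 0 < a k := fun k => by
    have := hlam k
    positivity
  have hterm : ∀ k, 1 / a k ^ 4 - 3 / 2 * (r / W) ^ 2 * (1 / a k ^ 3) ≤
      (torusChar k x).re / a k ^ 4 := fun k => by
    have h1 := one_sub_re_torusChar_le k x d hd hx
    have h2 : torusEigenvalue k ≤ a k / (W : ℝ) ^ 2 := by
      rw [le_div_iff₀ (by positivity)]
      simp only [ha]
      linarith
    have h3 : 1 - 3 / 2 * (r / W) ^ 2 * a k ≤ (torusChar k x).re := by
      have := mul_le_mul_of_nonneg_left h2 (show 0 ≤ 3 / 2 * r ^ 2 by positivity)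
      have he : 3 / 2 * r ^ 2 * (a k / (W : ℝ) ^ 2) = 3 / 2 * (r / W) ^ 2 * a k := by
        rw [div_pow]
        ring
      linarith
    have := ha0 k
    calc _ = (1 - 3 / 2 * (r / W) ^ 2 * a k) / a k ^ 4 := by field_simp
      _ ≤ _ := by gcongr
  have hzero : 1 / 16 ≤ ∑ k, 1 / a k ^ 4 := by
    refine le_trans ?_ (Finset.single_le_sum (f := fun k => 1 / a k ^ 4) (fun k _ => ?_)
      (Finset.mem_univ 0))
    · simp only [ha, torusEigenvalue_zero]
      norm_num
    · have := ha0 k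
      positivity
  have hthree := sum_inv_two_add_torusEigenvalue_le hW hWL
  have hrN : (r / W) ^ 2 * N ^ 2 ≤ 1 / 400 := by
    have h : r / W * N ≤ 1 / 20 := by
      rw [div_mul_eq_mul_div, div_le_div_iff₀ hW0 (by norm_num)]
      linarith
    have := pow_le_pow_left₀ (by positivity) h 2
    rw [mul_pow] at this
    norm_num at this ⊢
    exact this
  have hsum := Finset.sum_le_sum fun k (_ : k ∈ Finset.univ) => hterm k
  rw [Finset.sum_sub_distrib, ← Finset.mul_sum] at hsum
  have hmul := mul_le_mul_of_nonneg_left hthree (show 0 ≤ 3 / 2 * (r / W) ^ 2 by positivity)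
  rw [resolventKernel, le_div_iff₀ hc]
  have he : 1 / (32 * (Fintype.card (Torus L) : ℝ)) * Fintype.card (Torus L) = 1 / 32 := by
    field_simp
  rw [he]
  linarith

end BandProfileLowerBound

section BandMatrix

variable {L : Fin 3 → ℕ} [∀ i, NeZero (L i)]

lemma exists_finset_le_Jmat {W : ℕ} (hW : 1 ≤ W) (hWL : ∀ i, W ≤ L i) :
    ∃ (B : Finset (Torus L)) (s : ℝ), B.Nonempty ∧ 0 < s ∧ (∀ x ∈ B, ∀ y ∈ B, s ≤ Jmat L W x y) ∧
      1 / (256000 * ((Fintype.card (Torus L) : ℝ) / (W : ℝ) ^ 3) ^ 4) ≤ B.card * s := by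
  have hW0 : (0 : ℝ) < W := by exact_mod_cast hW
  have hc : (0 : ℝ) < Fintype.card (Torus L) := Nat.cast_pos.2 Fintype.card_pos
  set N : ℝ := (Fintype.card (Torus L) : ℝ) / (W : ℝ) ^ 3 with hN
  have hN1 : 1 ≤ N := by
    rw [hN, one_le_div (by positivity), Fintype.card_pi]
    have h := Finset.prod_le_prod' fun i (_ : i ∈ (Finset.univ : Finset (Fin 3))) => hWL i
    simp only [ZMod.card]
    rw [Finset.prod_const, Finset.card_univ, Fintype.card_fin] at h
    exact_mod_cast h
  set r : ℝ := W / (20 * N) with hr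
  have hr0 : 0 ≤ r := by positivity
  have hrW : r < W := by
    rw [hr, div_lt_iff₀ (by positivity)]
    nlinarith
  set q : ℕ := ⌊r⌋₊ with hq
  have hqr : (q : ℝ) ≤ r := Nat.floor_le hr0
  have hqW : q < W := by exact_mod_cast hqr.trans_lt hrW
  set B : Finset (Torus L) := Fintype.piFinset fun i =>
    (Finset.range (q + 1)).image (Nat.cast : ℕ → ZMod (L i)) with hB
  have hcard : B.card = (q + 1) ^ 3 := by
    have h : ∀ i, ((Finset.range (q + 1)).image (Nat.cast : ℕ → ZMod (L i))).card = q + 1 := by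
      intro i
      rw [Finset.card_image_of_injOn, Finset.card_range]
      intro a ha b hb hab
      have hlt : ∀ c ∈ (Finset.range (q + 1) : Set ℕ), c < L i := fun c hc => by
        have := hWL i
        have := Finset.mem_range.1 (Finset.mem_coe.1 hc)
        omega
      have := congrArg ZMod.val hab
      rwa [ZMod.val_cast_of_lt (hlt a ha), ZMod.val_cast_of_lt (hlt b hb)] at this
    rw [hB, Fintype.card_piFinset]
    simp only [h, Finset.prod_const, Finset.card_univ, Fintype.card_fin]
  refine ⟨B, 1 / (32 * (Fintype.card (Torus L) : ℝ)), Finset.card_pos.1 (by rw [hcard]; positivity),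
    by positivity, fun x hx y hy => ?_, ?_⟩
  · rw [Jmat_apply]
    refine le_trans ?_ (resolventKernel_two_le_one W _)
    simp only [hB, Fintype.mem_piFinset, Finset.mem_image, Finset.mem_range] at hx hy
    choose a ha hax using hx
    choose b hb hby using hy
    refine le_resolventKernel_two_four hW hWL _ (r := r) (fun i => (a i : ℤ) - b i)
      (fun i => ?_) (fun i => ?_) ?_
    · have h1 : (a i : ℝ) ≤ q := by exact_mod_cast Nat.lt_succ_iff.1 (ha i)
      have h2 : (b i : ℝ) ≤ q := by exact_mod_cast Nat.lt_succ_iff.1 (hb i)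
      have h3 : (0 : ℝ) ≤ a i := Nat.cast_nonneg _
      have h4 : (0 : ℝ) ≤ b i := Nat.cast_nonneg _
      push_cast
      rw [abs_le]
      constructor <;> linarith
    · simp [← hax i, ← hby i]
    · rw [← hN, hr]
      apply le_of_eq
      field_simp
  · have h1 : r ^ 3 ≤ (B.card : ℝ) := by
      rw [hcard]
      push_cast
      exact pow_le_pow_left₀ hr0 (Nat.lt_floor_add_one r).le 3
    have hcN : (Fintype.card (Torus L) : ℝ) = N * (W : ℝ) ^ 3 := by
      rw [hN]
      field_simp
    calc 1 / (256000 * N ^ 4) = r ^ 3 * (1 / (32 * (Fintype.card (Torus L) : ℝ))) := by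
          rw [hcN, hr]
          field_simp
          norm_num
      _ ≤ _ := by gcongr

lemma siteIdx_injective : Function.Injective (siteIdx L) := fun _ _ h =>
  (Fintype.equivFin (Torus L)).injective (Fin.ext h)

/-- The band matrix as a linear function of the Gaussian coordinates. -/
def bandMatrix (L : Fin 3 → ℕ) [∀ i, NeZero (L i)] (W : ℕ) :
    EuclideanSpace ℝ (Torus L × Torus L) →ₗ[ℝ] Matrix (Torus L) (Torus L) ℂ where
  toFun w := Hmat L W w.ofLp
  map_add' v w := by
    ext i j
    simp only [Hmat, Matrix.of_apply, Matrix.add_apply, WithLp.ofLp_add, Pi.add_apply]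
    split_ifs <;> push_cast <;> ring
  map_smul' c w := by
    ext i j
    simp only [Hmat, Matrix.of_apply, Matrix.smul_apply, WithLp.ofLp_smul, Pi.smul_apply,
      smul_eq_mul, RingHom.id_apply, Complex.real_smul]
    split_ifs <;> push_cast <;> ring

lemma bandMatrix_apply (W : ℕ) (w : EuclideanSpace ℝ (Torus L × Torus L)) :
    bandMatrix L W w = Hmat L W w.ofLp := rfl

lemma bandMatrix_isHermitian (W : ℕ) (w : EuclideanSpace ℝ (Torus L × Torus L)) :
    (bandMatrix L W w).IsHermitian := by
  ext i j
  simp only [bandMatrix_apply, Matrix.conjTranspose_apply, Hmat, Matrix.of_apply, Jmat_comm W j i]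
  rcases lt_trichotomy (siteIdx L i) (siteIdx L j) with h | h | h
  · have hij : i ≠ j := fun e => h.ne (congrArg _ e)
    simp [hij, hij.symm, h, h.not_gt, sub_eq_add_neg]
  · obtain rfl := siteIdx_injective h
    simp
  · have hij : i ≠ j := fun e => h.ne' (congrArg _ e)
    simp [hij, hij.symm, h, h.not_gt, sub_eq_add_neg]

lemma bandMatrix_surjective {W : ℕ} (hW : 1 ≤ W) (M : Matrix (Torus L) (Torus L) ℂ)
    (hM : M.IsHermitian) : ∃ w, bandMatrix L W w = M := by
  have hdiag : ∀ i, √(Jmat L W i i) ≠ 0 := fun i => (Real.sqrt_pos.2 (Jmat_pos hW i i)).ne'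
  have hoff : ∀ i j, ((√(Jmat L W i j / 2) : ℝ) : ℂ) ≠ 0 := fun i j =>
    Complex.ofReal_ne_zero.2 (Real.sqrt_pos.2 (half_pos (Jmat_pos hW i j))).ne'
  refine ⟨WithLp.toLp 2 fun p => if p.1 = p.2 then (M p.1 p.1).re / √(Jmat L W p.1 p.1)
    else if siteIdx L p.1 < siteIdx L p.2 then (M p.1 p.2).re / √(Jmat L W p.1 p.2 / 2)
    else (M p.2 p.1).im / √(Jmat L W p.2 p.1 / 2), ?_⟩
  have hre : ∀ i, ((M i i).re : ℂ) = M i i := fun i => by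
    rw [← Complex.conj_eq_iff_re]
    exact hM.apply i i
  ext i j
  simp only [bandMatrix_apply, Hmat, Matrix.of_apply]
  rcases lt_trichotomy (siteIdx L i) (siteIdx L j) with h | h | h
  · have hij : i ≠ j := fun e => h.ne (congrArg _ e)
    simp only [hij, hij.symm, h, h.not_gt, if_true, if_false]
    have := hoff i j
    push_cast
    field_simp
    rw [add_comm, mul_comm, add_comm]
    exact Complex.re_add_im _
  · obtain rfl := siteIdx_injective h
    simp [mul_div_cancel₀ _ (hdiag i), hre]
  · have hij : i ≠ j := fun e => h.ne' (congrArg _ e)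
    simp only [hij, hij.symm, h, h.not_gt, if_true, if_false]
    have := hoff i j
    have hsym := hM.apply i j
    rw [Jmat_comm W j i]
    push_cast
    field_simp
    rw [← hsym]
    apply Complex.ext <;> simp

lemma norm_sq_eq_bandMatrix {W : ℕ} (hW : 1 ≤ W) (w : EuclideanSpace ℝ (Torus L × Torus L)) :
    ‖w‖ ^ 2 = ∑ i, ∑ j, ‖bandMatrix L W w i j‖ ^ 2 / Jmat L W i j := by
  have hentry : ∀ i j, ‖bandMatrix L W w i j‖ ^ 2 / Jmat L W i j =
      (w (i, j) ^ 2 + w (j, i) ^ 2) / 2 := by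
    intro i j
    have hJ := Jmat_pos hW i j
    rw [Complex.sq_norm, Complex.normSq_apply]
    simp only [bandMatrix_apply, Hmat, Matrix.of_apply]
    split_ifs with h1 h2
    · subst h1
      have := Real.mul_self_sqrt hJ.le
      simp only [Complex.ofReal_re, Complex.ofReal_im]
      rw [div_eq_iff hJ.ne']
      linear_combination (w (i, i)) ^ 2 * this
    · have := Real.mul_self_sqrt (half_pos hJ).le
      simp only [Complex.mul_re, Complex.mul_im, Complex.add_re, Complex.add_im, Complex.ofReal_re,
        Complex.ofReal_im, Complex.I_re, Complex.I_im]
      rw [div_eq_iff hJ.ne']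
      linear_combination ((w (i, j)) ^ 2 + (w (j, i)) ^ 2) * this
    · have := Real.mul_self_sqrt (half_pos hJ).le
      simp only [Complex.mul_re, Complex.mul_im, Complex.sub_re, Complex.sub_im, Complex.ofReal_re,
        Complex.ofReal_im, Complex.I_re, Complex.I_im]
      rw [div_eq_iff hJ.ne']
      linear_combination ((w (i, j)) ^ 2 + (w (j, i)) ^ 2) * this
  simp only [hentry]
  rw [EuclideanSpace.norm_sq_eq, Fintype.sum_prod_type]
  simp only [← Finset.sum_div, Finset.sum_add_distrib, Real.norm_eq_abs, sq_abs]
  rw [Finset.sum_comm (f := fun i j => w (j, i) ^ 2)]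
  ring

end BandMatrix

section DensityOfStates

lemma Matrix.IsHermitian.norm_resolvent_diag_le {ι : Type*} [Fintype ι] [DecidableEq ι]
    {M : Matrix ι ι ℂ} (hM : M.IsHermitian) (E : ℝ) {ε : ℝ} (hε : 0 < ε) (i : ι) :
    ‖(((E : ℂ) + ε * Complex.I) • (1 : Matrix ι ι ℂ) - M)⁻¹ i i‖ ≤ ∑ _k : ι, ε⁻¹ := by
  have hz : ((E : ℂ) + ε * Complex.I).im ≠ 0 := by simpa using hε.ne'
  rw [hM.resolvent_eq hz, Matrix.mul_apply]
  refine (norm_sum_le _ _).trans (Finset.sum_le_sum fun k _ => ?_)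
  rw [Matrix.mul_diagonal, Matrix.conjTranspose_apply, norm_mul, norm_mul, norm_star]
  have hU : ‖(hM.eigenvectorUnitary : Matrix ι ι ℂ) i k‖ ≤ 1 :=
    entry_norm_bound_of_unitary hM.eigenvectorUnitary.2 i k
  have hinv : ‖((E : ℂ) + ε * Complex.I - hM.eigenvalues k)⁻¹‖ ≤ ε⁻¹ := by
    rw [norm_inv]
    refine inv_anti₀ hε ?_
    have := Complex.abs_im_le_norm ((E : ℂ) + ε * Complex.I - hM.eigenvalues k)
    simp only [Complex.sub_im, Complex.add_im, Complex.ofReal_im, Complex.mul_im,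
      Complex.ofReal_re, Complex.I_im, Complex.I_re] at this
    refine le_trans ?_ this
    simp [le_abs_self]
  calc _ ≤ 1 * ε⁻¹ * 1 := by gcongr
    _ = ε⁻¹ := by ring

lemma negImResolvent_diag_re_eq {ι : Type*} [Fintype ι] [DecidableEq ι] (z : ℂ)
    (M : Matrix ι ι ℂ) (i : ι) :
    (negImResolvent z M i i).re = -((z • (1 : Matrix ι ι ℂ) - M)⁻¹ i i).im := by
  simp only [negImResolvent, Matrix.smul_apply, Matrix.sub_apply, Matrix.conjTranspose_apply,
    smul_eq_mul]
  generalize (z • (1 : Matrix ι ι ℂ) - M)⁻¹ i i = g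
  simp [Complex.mul_re]
  ring

variable {L : Fin 3 → ℕ} [∀ i, NeZero (L i)]

lemma dos_eq (W : ℕ) (E : ℝ) {ε : ℝ} (hε : 0 < ε) :
    dos L W E ε = 1 / Real.pi *
      ∫ w, (negImResolvent ((E : ℂ) + ε * Complex.I) (bandMatrix L W w) 0 0).re
        ∂(stdGaussian (EuclideanSpace ℝ (Torus L × Torus L))) := by
  have hz : ((E : ℂ) + ε * Complex.I).im ≠ 0 := by simpa using hε.ne'
  have hcont : Continuous fun w => (((E : ℂ) + ε * Complex.I) •
      (1 : Matrix (Torus L) (Torus L) ℂ) - bandMatrix L W w)⁻¹ 0 0 :=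
    (continuous_resolvent (bandMatrix L W).continuous_of_finiteDimensional
      (bandMatrix_isHermitian W) continuous_const fun _ => hz).matrix_elem 0 0
  have h_int : Integrable (fun w => (((E : ℂ) + ε * Complex.I) •
      (1 : Matrix (Torus L) (Torus L) ℂ) - bandMatrix L W w)⁻¹ 0 0)
      (stdGaussian (EuclideanSpace ℝ (Torus L × Torus L))) :=
    Integrable.of_bound hcont.aestronglyMeasurable _
      (ae_of_all _ fun w => (bandMatrix_isHermitian W w).norm_resolvent_diag_le E hε 0)
  have havg : avgGreen L W E ε 0 0 = ∫ w, (((E : ℂ) + ε * Complex.I) •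
      (1 : Matrix (Torus L) (Torus L) ℂ) - bandMatrix L W w)⁻¹ 0 0
      ∂(stdGaussian (EuclideanSpace ℝ (Torus L × Torus L))) := by
    rw [← map_pi_eq_stdGaussian, integral_map (by fun_prop) hcont.aestronglyMeasurable]
    rfl
  have him := integral_im h_int
  simp only [negImResolvent_diag_re_eq]
  rw [dos, havg, integral_neg]
  simp only [RCLike.im_to_complex] at him
  rw [him]
  ring

/-- Density of states bound for the random band matrix, polynomial in the number of cubes. -/
lemma exists_tendsto_dos_le {W : ℕ} (hW : 1 ≤ W) (hWL : ∀ i, W ≤ L i) (E : ℝ) :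
    ∃ ρ : ℝ, Tendsto (fun ε : ℝ => dos L W E ε) (𝓝[>] (0 : ℝ)) (𝓝 ρ) ∧
      |ρ| ≤ 8 / gaussAbs ^ 2 * 506 * ((Fintype.card (Torus L) : ℝ) / (W : ℝ) ^ 3) ^ 2 := by
  have hg := gaussAbs_pos
  have hW0 : (0 : ℝ) < W := by exact_mod_cast hW
  have hN0 : 0 < (Fintype.card (Torus L) : ℝ) / (W : ℝ) ^ 3 :=
    div_pos (Nat.cast_pos.2 Fintype.card_pos) (by positivity)
  obtain ⟨B, s, hB, hs0, hs, hBs⟩ := exists_finset_le_Jmat (L := L) hW hWL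
  obtain ⟨ρ, hρ0, hρ, hlim⟩ := exists_densityOfStates_le (L := bandMatrix L W)
    (J := Jmat L W) (bandMatrix_isHermitian W) (bandMatrix_surjective hW) (Jmat_pos hW)
    (Jmat_add_right W) (norm_sq_eq_bandMatrix hW) hB hs0 hs E
  refine ⟨1 / Real.pi * ρ, (hlim.const_mul _).congr' ?_, ?_⟩
  · filter_upwards [self_mem_nhdsWithin] with ε hε
    exact (dos_eq W E hε).symm
  rw [abs_of_nonneg (by positivity)]
  generalize (Fintype.card (Torus L) : ℝ) / (W : ℝ) ^ 3 = N at hN0 hBs ⊢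
  have hsqrt : 1 / (506 * N ^ 2) ≤ √(B.card * s) := by
    refine Real.le_sqrt_of_sq_le (le_trans ?_ hBs)
    rw [div_pow, one_pow]
    refine one_div_le_one_div_of_le (by positivity) ?_
    nlinarith [pow_pos hN0 4]
  have hπ := Real.pi_pos
  calc 1 / Real.pi * ρ ≤ 1 / Real.pi * (8 * Real.pi / gaussAbs ^ 2 / (1 / (506 * N ^ 2))) := by
        gcongr
        exact hρ.trans (by gcongr)
    _ = 8 / gaussAbs ^ 2 * 506 * N ^ 2 := by field_simp

end DensityOfStates

/-- On any finite union of cubes of side `W`, the averaged density of states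
satisfies `|ρ̄_Λ(E)| ≤ K e^{K|Λ|/W³}` for `E ∈ 𝓘`. -/
theorem dos_bounded_union (η : ℝ) (hη : 0 < η) :
    ∃ (W₀ : ℕ) (K : ℝ), 0 < K ∧
      ∀ (W : ℕ), W₀ ≤ W →
      ∀ (L : Fin 3 → ℕ) [∀ i, NeZero (L i)], (∀ i, W ∣ L i) →
      ∀ E ∈ specI η,
        ∃ ρΛ : ℝ,
          Tendsto (fun ε : ℝ => dos L W E ε) (𝓝[>] (0 : ℝ)) (𝓝 ρΛ) ∧
          |ρΛ| ≤ K * Real.exp (K * (Fintype.card (Torus L) : ℝ) / (W : ℝ) ^ 3) := by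
  have hg := gaussAbs_pos
  obtain ⟨A, hA⟩ : ∃ A : ℝ, A = 8 / gaussAbs ^ 2 * 506 := ⟨_, rfl⟩
  have hA0 : 0 ≤ A := by
    rw [hA]
    positivity
  refine ⟨1, 2 * A + 1, by positivity, fun W hW L _ hWL E _ => ?_⟩
  obtain ⟨ρ, hlim, hρ⟩ := exists_tendsto_dos_le (L := L) hW
    (fun i => Nat.le_of_dvd (Nat.pos_of_neZero _) (hWL i)) E
  refine ⟨ρ, hlim, hρ.trans ?_⟩
  rw [← hA, mul_div_assoc]
  have hN0 : 0 ≤ (Fintype.card (Torus L) : ℝ) / (W : ℝ) ^ 3 := by positivity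
  generalize (Fintype.card (Torus L) : ℝ) / (W : ℝ) ^ 3 = N at hN0 ⊢
  have hexp : N ^ 2 ≤ 2 * Real.exp N := by
    have := Real.quadratic_le_exp_of_nonneg hN0
    linarith
  have hN : N ≤ (2 * A + 1) * N := le_mul_of_one_le_left hN0 (by linarith)
  calc A * N ^ 2 ≤ A * (2 * Real.exp N) := by gcongr
    _ = 2 * A * Real.exp N := by ring
    _ ≤ (2 * A + 1) * Real.exp ((2 * A + 1) * N) := by
        gcongr
        linarith
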